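/- For every positive integer d and every real c > 0 there is a constant C depending only on c and d such that: for every n, every degree-d polynomial threshold function f : ℝⁿ → {−1,1}, and every 0 < δ < 1, the noise sensitivity satisfies ns_δ(f) ≤ C·δ^{1/6−c}. -/

import Mathlib

open MeasureTheory ProbabilityTheory
open scoped ENNReal

/-- The uniform (Bernoulli) measure on `{-1, 1}`. -/
noncomputable def bernoulliPM : Measure ℝ :=
  ((1 : ℝ≥0∞) / 2) • Measure.dirac (1 : ℝ) + ((1 : ℝ≥0∞) / 2) • Measure.dirac (-1 : ℝ)

/-- The uniform measure on `{-1, 1}ⁿ`. -/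
noncomputable def bernoulliCube (n : ℕ) : Measure (Fin n → ℝ) :=
  Measure.pi fun _ => bernoulliPM

/-- The measure on `ℝ` that puts mass `1 - δ` at `1` and mass `δ` at `-1`
(a random sign flip with flip probability `δ`). -/
noncomputable def flipPM (δ : ℝ) : Measure ℝ :=
  ENNReal.ofReal (1 - δ) • Measure.dirac (1 : ℝ) + ENNReal.ofReal δ • Measure.dirac (-1 : ℝ)

/-- The sign function, with value `1` at `0`. -/
noncomputable def psign (r : ℝ) : ℝ := if 0 ≤ r then 1 else -1

/-- The noise sensitivity `ns_δ(f) = Pr(f(A) ≠ f(B))` where `A` is uniform on `{-1,1}ⁿ` and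
`B` is obtained from `A` by independently flipping each coordinate with probability `δ`. -/
noncomputable def noiseSensitivity (n : ℕ) (δ : ℝ) (f : (Fin n → ℝ) → ℝ) : ℝ :=
  (((bernoulliCube n).prod (Measure.pi fun _ : Fin n => flipPM δ))
    {ae | f ae.1 ≠ f fun i => ae.1 i * ae.2 i}).toReal


set_option linter.unusedSectionVars false
set_option linter.unusedVariables false

namespace NS

/-! ### Finite expectations -/

/-- Average over a finite type. -/
noncomputable def Ex {Ω : Type*} [Fintype Ω] (f : Ω → ℝ) : ℝ := (∑ w, f w) / (Fintype.card Ω : ℝ)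

section Ex
variable {Ω Ω' : Type*} [Fintype Ω] [Fintype Ω']

lemma Ex_add (f g : Ω → ℝ) : Ex (fun w => f w + g w) = Ex f + Ex g := by
  simp only [Ex, Finset.sum_add_distrib, add_div]

lemma Ex_sub (f g : Ω → ℝ) : Ex (fun w => f w - g w) = Ex f - Ex g := by
  simp only [Ex, Finset.sum_sub_distrib, sub_div]

lemma Ex_mul_left (a : ℝ) (f : Ω → ℝ) : Ex (fun w => a * f w) = a * Ex f := by
  simp only [Ex, ← Finset.mul_sum, mul_div_assoc]

lemma Ex_mul_right (a : ℝ) (f : Ω → ℝ) : Ex (fun w => f w * a) = Ex f * a := by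
  simp only [mul_comm _ a, Ex_mul_left]

lemma Ex_const [Nonempty Ω] (a : ℝ) : Ex (fun _ : Ω => a) = a := by
  simp [Ex]

lemma Ex_zero : Ex (fun _ : Ω => (0 : ℝ)) = 0 := by simp [Ex]

lemma Ex_sum {κ : Type*} (s : Finset κ) (f : κ → Ω → ℝ) :
    Ex (fun w => ∑ k ∈ s, f k w) = ∑ k ∈ s, Ex (f k) := by
  simp only [Ex]
  rw [Finset.sum_comm, Finset.sum_div]

lemma Ex_mono {f g : Ω → ℝ} (h : ∀ w, f w ≤ g w) : Ex f ≤ Ex g := by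
  simp only [Ex]
  gcongr
  exact h _

lemma Ex_nonneg {f : Ω → ℝ} (h : ∀ w, 0 ≤ f w) : 0 ≤ Ex f := by
  rw [← Ex_zero (Ω := Ω)]; exact Ex_mono h

lemma Ex_le [Nonempty Ω] {f : Ω → ℝ} {a : ℝ} (h : ∀ w, f w ≤ a) : Ex f ≤ a := by
  rw [← Ex_const (Ω := Ω) a]; exact Ex_mono h

lemma Ex_abs_le (f : Ω → ℝ) : |Ex f| ≤ Ex (fun w => |f w|) := by
  simp only [Ex]
  rw [abs_div, Nat.abs_cast]
  gcongr
  exact Finset.abs_sum_le_sum_abs _ _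

lemma Ex_comm (f : Ω → Ω' → ℝ) :
    Ex (fun w => Ex (fun v => f w v)) = Ex (fun v => Ex (fun w => f w v)) := by
  simp only [Ex]
  rw [← Finset.sum_div, ← Finset.sum_div, Finset.sum_comm]
  rw [div_div, div_div, mul_comm]

lemma Ex_prod (f : Ω → Ω' → ℝ) :
    Ex (fun w : Ω × Ω' => f w.1 w.2) = Ex (fun w => Ex (fun v => f w v)) := by
  simp only [Ex]
  rw [← Finset.sum_div, Fintype.sum_prod_type, div_div, Fintype.card_prod]
  push_cast
  rw [mul_comm]

lemma Ex_equiv (e : Ω ≃ Ω') (f : Ω' → ℝ) : Ex (fun w => f (e w)) = Ex f := by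
  simp only [Ex]
  rw [Equiv.sum_comp e f, Fintype.card_congr e]

lemma Ex_invol {e : Ω → Ω} (he : Function.Involutive e) (f : Ω → ℝ) :
    Ex (fun w => f (e w)) = Ex f := Ex_equiv (he.toPerm e) f

lemma Ex_cs (f g : Ω → ℝ) :
    (Ex (fun w => f w * g w)) ^ 2 ≤ Ex (fun w => f w ^ 2) * Ex (fun w => g w ^ 2) := by
  simp only [Ex]
  rw [div_pow, div_mul_div_comm, ← sq]
  gcongr
  exact Finset.sum_mul_sq_le_sq_mul_sq _ _ _

/-- indicator of a proposition -/
noncomputable def ind (p : Prop) : ℝ := by classical exact if p then 1 else 0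

lemma ind_true {p : Prop} (h : p) : ind p = 1 := by simp [ind, h]
lemma ind_false {p : Prop} (h : ¬ p) : ind p = 0 := by simp [ind, h]
lemma ind_nonneg (p : Prop) : 0 ≤ ind p := by
  by_cases h : p <;> simp [ind, h]
lemma ind_le_one (p : Prop) : ind p ≤ 1 := by
  by_cases h : p <;> simp [ind, h]
lemma ind_mono {p q : Prop} (h : p → q) : ind p ≤ ind q := by
  by_cases hp : p
  · rw [ind_true hp, ind_true (h hp)]
  · rw [ind_false hp]; exact ind_nonneg q
lemma ind_sq (p : Prop) : ind p ^ 2 = ind p := by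
  by_cases h : p <;> simp [ind, h]

/-- Markov inequality. -/
lemma markov {f : Ω → ℝ} (hf : ∀ w, 0 ≤ f w) {t : ℝ} (ht : 0 < t) :
    Ex (fun w => ind (t ≤ f w)) ≤ Ex f / t := by
  rw [le_div_iff₀ ht, ← Ex_mul_right]
  apply Ex_mono
  intro w
  by_cases h : t ≤ f w
  · rw [ind_true h]; linarith
  · rw [ind_false h]; linarith [hf w]

/-- Paley-Zygmund inequality. -/
lemma paley_zygmund [Nonempty Ω] {f : Ω → ℝ} (hf : ∀ w, 0 ≤ f w) {K : ℝ} (hK : 0 < K)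
    {m : ℝ} (hm : 0 < m) (hm1 : m ≤ Ex f)
    (h2 : Ex (fun w => f w ^ 2) ≤ K * (Ex f) ^ 2) :
    1 / (4 * K) ≤ Ex (fun w => ind (m / 2 ≤ f w)) := by
  set E := Ex f with hE
  have hE0 : 0 < E := lt_of_lt_of_le hm hm1
  have h1 : E / 2 ≤ Ex (fun w => f w * ind (m / 2 ≤ f w)) := by
    have : Ex (fun w => f w - m / 2) ≤ Ex (fun w => f w * ind (m / 2 ≤ f w)) := by
      apply Ex_mono
      intro w
      by_cases h : m / 2 ≤ f w
      · rw [ind_true h]; linarith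
      · rw [ind_false h]; linarith
    rw [Ex_sub, Ex_const] at this
    linarith
  have h3 := Ex_cs f (fun w => ind (m / 2 ≤ f w))
  simp only [ind_sq] at h3
  set P := Ex (fun w => ind (m / 2 ≤ f w)) with hP
  have hP0 : 0 ≤ P := Ex_nonneg fun w => ind_nonneg _
  have h4 : (E / 2) ^ 2 ≤ K * E ^ 2 * P := by
    calc (E / 2) ^ 2 ≤ _ := by gcongr
      _ ≤ _ := h3
      _ ≤ _ := by gcongr
  rw [div_le_iff₀ (by positivity)]
  have h5 : E ^ 2 * 1 ≤ E ^ 2 * (P * (4 * K)) := by nlinarith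
  exact le_of_mul_le_mul_left h5 (by positivity)

end Ex

/-! ### The cube -/

/-- the sign attached to a boolean -/
noncomputable def sg (b : Bool) : ℝ := if b then 1 else -1

lemma sg_sq (b : Bool) : sg b ^ 2 = 1 := by cases b <;> simp [sg]
lemma sg_mul_self (b : Bool) : sg b * sg b = 1 := by cases b <;> simp [sg]
lemma sg_not (b : Bool) : sg (!b) = - sg b := by cases b <;> simp [sg]
lemma sg_abs (b : Bool) : |sg b| = 1 := by cases b <;> simp [sg]

section cube
variable {ι : Type*} [Fintype ι] [DecidableEq ι]

/-- the real point of the cube -/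
noncomputable def pt (w : ι → Bool) : ι → ℝ := fun i => sg (w i)

/-- multilinear polynomial with coefficients `c` -/
noncomputable def ev (c : Finset ι → ℝ) (x : ι → ℝ) : ℝ := ∑ S, c S * ∏ i ∈ S, x i

/-- flip a coordinate -/
def flip (i : ι) (w : ι → Bool) : ι → Bool := Function.update w i (!(w i))

lemma flip_invol (i : ι) : Function.Involutive (flip i : (ι → Bool) → ι → Bool) := by
  intro w
  simp [flip]

lemma flip_same (i : ι) (w : ι → Bool) : flip i w i = !(w i) := by simp [flip]
lemma flip_ne {i j : ι} (h : j ≠ i) (w : ι → Bool) : flip i w j = w j := by simp [flip, h]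

lemma Ex_odd (i : ι) {f : (ι → Bool) → ℝ} (h : ∀ w, f (flip i w) = - f w) : Ex f = 0 := by
  have h1 := Ex_invol (flip_invol i) f
  simp only [h] at h1
  have h2 : Ex (fun w => - f w) = - Ex f := by
    have := Ex_mul_left (-1) f
    simpa using this
  linarith

/-- characters -/
noncomputable def chi (S : Finset ι) (w : ι → Bool) : ℝ := ∏ i ∈ S, sg (w i)

lemma chi_flip_mem {S : Finset ι} {i : ι} (h : i ∈ S) (w : ι → Bool) :
    chi S (flip i w) = - chi S w := by
  unfold chi
  rw [← Finset.mul_prod_erase S _ h, ← Finset.mul_prod_erase S (fun j => sg (w j)) h, flip_same,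
    sg_not, neg_mul]
  congr 2
  apply Finset.prod_congr rfl
  intro j hj
  rw [flip_ne (Finset.ne_of_mem_erase hj)]

lemma chi_flip_notMem {S : Finset ι} {i : ι} (h : i ∉ S) (w : ι → Bool) :
    chi S (flip i w) = chi S w := by
  unfold chi
  apply Finset.prod_congr rfl
  intro j hj
  rw [flip_ne (by rintro rfl; exact h hj)]

lemma chi_sq (S : Finset ι) (w : ι → Bool) : chi S w * chi S w = 1 := by
  unfold chi
  rw [← Finset.prod_mul_distrib]
  simp [sg_mul_self]

lemma Ex_chi_mul (S T : Finset ι) :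
    Ex (fun w => chi S w * chi T w) = if S = T then 1 else 0 := by
  split_ifs with h
  · subst h
    simp only [chi_sq]
    exact Ex_const 1
  · have : ∃ i, (i ∈ S ∧ i ∉ T) ∨ (i ∉ S ∧ i ∈ T) := by
      by_contra hcon
      push Not at hcon
      apply h
      ext i
      have := hcon i
      tauto
    obtain ⟨i, hi⟩ := this
    apply Ex_odd i
    intro w
    rcases hi with ⟨h1, h2⟩ | ⟨h1, h2⟩
    · rw [chi_flip_mem h1, chi_flip_notMem h2]; ring
    · rw [chi_flip_mem h2, chi_flip_notMem h1]; ring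

lemma ev_pt (c : Finset ι → ℝ) (w : ι → Bool) : ev c (pt w) = ∑ S, c S * chi S w := rfl

/-- squared norm -/
noncomputable def nrm (c : Finset ι → ℝ) : ℝ := ∑ S, c S ^ 2

/-- variance -/
noncomputable def vr (c : Finset ι → ℝ) : ℝ := ∑ S ∈ Finset.univ.erase ∅, c S ^ 2

lemma nrm_nonneg (c : Finset ι → ℝ) : 0 ≤ nrm c := Finset.sum_nonneg fun _ _ => sq_nonneg _
lemma vr_nonneg (c : Finset ι → ℝ) : 0 ≤ vr c := Finset.sum_nonneg fun _ _ => sq_nonneg _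

lemma nrm_eq (c : Finset ι → ℝ) : nrm c = c ∅ ^ 2 + vr c := by
  unfold nrm vr
  rw [Finset.add_sum_erase _ (fun S => c S ^ 2) (Finset.mem_univ _)]

lemma parseval (c : Finset ι → ℝ) : Ex (fun w => ev c (pt w) ^ 2) = nrm c := by
  have : ∀ w : ι → Bool, ev c (pt w) ^ 2 = ∑ S, ∑ T, c S * c T * (chi S w * chi T w) := by
    intro w
    rw [ev_pt, sq, Finset.sum_mul_sum]
    refine Finset.sum_congr rfl fun S _ => Finset.sum_congr rfl fun T _ => by ring
  simp only [this]
  rw [Ex_sum]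
  unfold nrm
  refine Finset.sum_congr rfl fun S _ => ?_
  rw [Ex_sum]
  simp only [Ex_mul_left, Ex_chi_mul]
  simp [sq]

/-- `c` has degree at most `d` -/
def Deg (d : ℕ) (c : Finset ι → ℝ) : Prop := ∀ S : Finset ι, d < S.card → c S = 0

/-- truncated evaluation used in the induction for hypercontractivity -/
noncomputable def evU (U : Finset ι) (c : Finset ι → ℝ) (w : ι → Bool) : ℝ :=
  ∑ S ∈ U.powerset, c S * chi S w

lemma evU_flip {U : Finset ι} {i : ι} (h : i ∉ U) (c : Finset ι → ℝ) (w : ι → Bool) :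
    evU U c (flip i w) = evU U c w := by
  unfold evU
  refine Finset.sum_congr rfl fun S hS => ?_
  rw [chi_flip_notMem (fun hi => h (Finset.mem_powerset.1 hS hi))]

lemma evU_insert {U : Finset ι} {i : ι} (h : i ∉ U) (c : Finset ι → ℝ) (w : ι → Bool) :
    evU (insert i U) c w = evU U c w + sg (w i) * evU U (fun S => c (insert i S)) w := by
  unfold evU
  rw [Finset.sum_powerset_insert h, Finset.mul_sum]
  congr 1
  refine Finset.sum_congr rfl fun S hS => ?_
  have hi : i ∉ S := fun hi => h (Finset.mem_powerset.1 hS hi)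
  rw [chi, Finset.prod_insert hi]
  unfold chi
  ring

lemma hc_aux (U : Finset ι) : ∀ (d : ℕ) (c : Finset ι → ℝ),
    (∀ S ⊆ U, d < S.card → c S = 0) →
    Ex (fun w => evU U c w ^ 4) ≤ 9 ^ d * (Ex (fun w => evU U c w ^ 2)) ^ 2 := by
  induction U using Finset.induction_on with
  | empty =>
    intro d c _
    have : ∀ w, evU ∅ c w = c ∅ := by intro w; simp [evU, chi]
    simp only [this, Ex_const]
    have h9 : (1 : ℝ) ≤ 9 ^ d := one_le_pow₀ (by norm_num)
    nlinarith [pow_nonneg (sq_nonneg (c ∅)) 2]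
  | insert i U hi ih =>
    intro d c hdeg
    set g := evU U c with hg
    set h := evU U (fun S => c (insert i S)) with hh
    have e0 : ∀ w, evU (insert i U) c w = g w + sg (w i) * h w := fun w => evU_insert hi c w
    have gf : ∀ w, g (flip i w) = g w := fun w => evU_flip hi _ w
    have hf : ∀ w, h (flip i w) = h w := fun w => evU_flip hi _ w
    have odd1 : Ex (fun w => sg (w i) * (g w * h w)) = 0 := by
      apply Ex_odd i; intro w; rw [gf, hf, flip_same, sg_not]; ring
    have odd2 : Ex (fun w => sg (w i) * (g w ^ 3 * h w + g w * h w ^ 3)) = 0 := by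
      apply Ex_odd i; intro w; rw [gf, hf, flip_same, sg_not]; ring
    have e2 : Ex (fun w => evU (insert i U) c w ^ 2)
        = Ex (fun w => g w ^ 2) + Ex (fun w => h w ^ 2) := by
      have : ∀ w, evU (insert i U) c w ^ 2
          = (g w ^ 2 + h w ^ 2) + 2 * (sg (w i) * (g w * h w)) := by
        intro w; rw [e0]; linear_combination (h w ^ 2) * sg_sq (w i)
      simp only [this]
      rw [Ex_add, Ex_add, Ex_mul_left, odd1]; ring
    have e4 : Ex (fun w => evU (insert i U) c w ^ 4)
        = Ex (fun w => g w ^ 4) + 6 * Ex (fun w => g w ^ 2 * h w ^ 2) + Ex (fun w => h w ^ 4) := by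
      have : ∀ w, evU (insert i U) c w ^ 4
          = (g w ^ 4 + 6 * (g w ^ 2 * h w ^ 2) + h w ^ 4)
            + 4 * (sg (w i) * (g w ^ 3 * h w + g w * h w ^ 3)) := by
        intro w; rw [e0]
        linear_combination (6 * g w ^ 2 * h w ^ 2 + 4 * g w * h w ^ 3 * sg (w i)
          + h w ^ 4 * (sg (w i) ^ 2 + 1)) * sg_sq (w i)
      simp only [this]
      rw [Ex_add, Ex_add, Ex_add, Ex_mul_left, Ex_mul_left, odd2]; ring
    have hG : Ex (fun w => g w ^ 4) ≤ 9 ^ d * (Ex (fun w => g w ^ 2)) ^ 2 :=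
      ih d c (fun S hS hc => hdeg S (hS.trans (Finset.subset_insert _ _)) hc)
    have cs := Ex_cs (fun w => g w ^ 2) (fun w => h w ^ 2)
    simp only [← pow_mul] at cs
    norm_num at cs
    rw [e2, e4]
    set G := Ex (fun w => g w ^ 2)
    set H := Ex (fun w => h w ^ 2)
    have hG0 : 0 ≤ G := Ex_nonneg fun w => sq_nonneg _
    have hH0 : 0 ≤ H := Ex_nonneg fun w => sq_nonneg _
    cases d with
    | zero =>
      have hz : ∀ w, h w = 0 := by
        intro w
        rw [hh]
        unfold evU
        apply Finset.sum_eq_zero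
        intro S hS
        have h0 : c (insert i S) = 0 := hdeg _ (Finset.insert_subset_insert _
          (Finset.mem_powerset.1 hS)) (by
            rw [Finset.card_insert_of_notMem (fun h' => hi (Finset.mem_powerset.1 hS h'))]; omega)
        simp [h0]
      have hH : H = 0 := by
        have : H = Ex (fun w => h w ^ 2) := rfl
        rw [this]; simp only [hz]; norm_num [Ex_zero]
      simp only [hz] at *
      norm_num [Ex_zero] at *
      rw [hH]; simpa using hG
    | succ e =>
      have hHH : Ex (fun w => h w ^ 4) ≤ 9 ^ e * H ^ 2 := by
        apply ih e
        intro S hS hc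
        apply hdeg _ (Finset.insert_subset_insert _ hS)
        rw [Finset.card_insert_of_notMem (fun h' => hi (hS h'))]; omega
      have hm : Ex (fun w => g w ^ 2 * h w ^ 2) ≤ 9 ^ e * 3 * (G * H) := by
        refine (abs_le_of_sq_le_sq' ?_ (by positivity)).2
        calc _ ≤ _ := cs
          _ ≤ (9 ^ (e + 1) * G ^ 2) * (9 ^ e * H ^ 2) := by
              gcongr
              exact Ex_nonneg fun w => by positivity
          _ = _ := by ring
      have : (9 : ℝ) ^ (e + 1) = 9 * 9 ^ e := by ring
      rw [this] at hG ⊢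
      have h9 : (0 : ℝ) < 9 ^ e := by positivity
      nlinarith [mul_nonneg h9.le (sq_nonneg H)]

/-- Bonami's inequality -/
lemma hc {d : ℕ} {c : Finset ι → ℝ} (hd : Deg d c) :
    Ex (fun w => ev c (pt w) ^ 4) ≤ 9 ^ d * (Ex (fun w => ev c (pt w) ^ 2)) ^ 2 := by
  have := hc_aux (Finset.univ : Finset ι) d c (fun S _ h => hd S h)
  have e : ∀ w, evU (Finset.univ : Finset ι) c w = ev c (pt w) := by
    intro w; rw [ev_pt]; unfold evU; rw [Finset.powerset_univ]
  simpa only [e] using this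

lemma hc' {d : ℕ} {c : Finset ι → ℝ} (hd : Deg d c) :
    Ex (fun w => ev c (pt w) ^ 4) ≤ 9 ^ d * nrm c ^ 2 := by
  rw [← parseval]; exact hc hd

/-! ### functions of degree at most `d` -/

/-- functions on the cube of degree at most `d` -/
noncomputable def DegLE (ι : Type*) [Fintype ι] [DecidableEq ι] (d : ℕ) :
    Submodule ℝ ((ι → Bool) → ℝ) :=
  Submodule.span ℝ {f | ∃ S : Finset ι, S.card ≤ d ∧ f = chi S}

lemma DegLE_coef {d : ℕ} {f : (ι → Bool) → ℝ} (hf : f ∈ DegLE ι d) :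
    ∃ c : Finset ι → ℝ, Deg d c ∧ ∀ w, f w = ev c (pt w) := by
  unfold DegLE at hf
  induction hf using Submodule.span_induction with
  | mem f hf =>
    obtain ⟨S, hS, rfl⟩ := hf
    refine ⟨fun T => if T = S then 1 else 0, ?_, ?_⟩
    · intro T hT
      have : T ≠ S := by rintro rfl; omega
      simp [this]
    · intro w; rw [ev_pt]; simp
  | zero => exact ⟨fun _ => 0, fun _ _ => rfl, fun w => by simp [ev]⟩
  | add f g _ _ hf hg =>
    obtain ⟨c, h1, h2⟩ := hf
    obtain ⟨c', h1', h2'⟩ := hg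
    refine ⟨fun S => c S + c' S, fun S hS => by simp [h1 S hS, h1' S hS], fun w => ?_⟩
    simp only [Pi.add_apply, h2, h2', ev, add_mul, Finset.sum_add_distrib]
  | smul a f _ hf =>
    obtain ⟨c, h1, h2⟩ := hf
    refine ⟨fun S => a * c S, fun S hS => by simp [h1 S hS], fun w => ?_⟩
    simp only [Pi.smul_apply, smul_eq_mul, h2, ev, Finset.mul_sum, mul_assoc]

lemma chi_mul (S T : Finset ι) : chi S * chi T = chi (symmDiff S T) := by
  funext w
  simp only [Pi.mul_apply]
  unfold chi
  have hS : S = (S \ T) ∪ (S ∩ T) := (Finset.sdiff_union_inter S T).symm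
  have hT : T = (T \ S) ∪ (S ∩ T) := by rw [Finset.inter_comm, Finset.sdiff_union_inter]
  have e1 : ∏ i ∈ S, sg (w i) = (∏ i ∈ S \ T, sg (w i)) * ∏ i ∈ S ∩ T, sg (w i) := by
    conv_lhs => rw [hS]
    rw [Finset.prod_union (Finset.disjoint_sdiff_inter S T)]
  have e2 : ∏ i ∈ T, sg (w i) = (∏ i ∈ T \ S, sg (w i)) * ∏ i ∈ S ∩ T, sg (w i) := by
    conv_lhs => rw [hT]
    rw [Finset.prod_union (by rw [Finset.inter_comm]; exact Finset.disjoint_sdiff_inter T S)]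
  have e3 : ∏ i ∈ symmDiff S T, sg (w i)
      = (∏ i ∈ S \ T, sg (w i)) * ∏ i ∈ T \ S, sg (w i) := by
    rw [symmDiff_def, Finset.sup_eq_union, Finset.prod_union]
    exact disjoint_sdiff_sdiff
  have e4 := chi_sq (S ∩ T) w
  unfold chi at e4
  rw [e1, e2, e3]
  linear_combination ((∏ i ∈ S \ T, sg (w i)) * ∏ i ∈ T \ S, sg (w i)) * e4

lemma DegLE_mul {d e : ℕ} {f g : (ι → Bool) → ℝ} (hf : f ∈ DegLE ι d) (hg : g ∈ DegLE ι e) :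
    f * g ∈ DegLE ι (d + e) := by
  have h := Submodule.mul_mem_mul hf hg
  unfold DegLE at h ⊢
  rw [Submodule.span_mul_span] at h
  refine Submodule.span_mono ?_ h
  rintro _ ⟨_, ⟨S, hS, rfl⟩, _, ⟨T, hT, rfl⟩, rfl⟩
  refine ⟨symmDiff S T, ?_, chi_mul S T⟩
  calc _ ≤ (S ∪ T).card := Finset.card_le_card symmDiff_le_sup
    _ ≤ S.card + T.card := Finset.card_union_le _ _
    _ ≤ _ := by omega

lemma DegLE_mono {d e : ℕ} (h : d ≤ e) : DegLE ι d ≤ DegLE ι e := by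
  apply Submodule.span_mono
  rintro _ ⟨S, hS, rfl⟩
  exact ⟨S, hS.trans h, rfl⟩

lemma DegLE_const (a : ℝ) (d : ℕ) : (fun _ => a) ∈ DegLE ι d := by
  have : (fun _ : ι → Bool => a) = a • chi (∅ : Finset ι) := by
    funext w; simp [chi]
  rw [this]
  exact Submodule.smul_mem _ _ (Submodule.subset_span ⟨∅, by simp, rfl⟩)

lemma DegLE_coord (i : ι) : (fun w => sg (w i)) ∈ DegLE ι 1 := by
  apply Submodule.subset_span
  refine ⟨{i}, by simp, ?_⟩
  funext w; simp [chi]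

lemma DegLE_prod {κ : Type*} (s : Finset κ) (f : κ → (ι → Bool) → ℝ)
    (h : ∀ k ∈ s, f k ∈ DegLE ι 1) : (fun w => ∏ k ∈ s, f k w) ∈ DegLE ι s.card := by
  classical
  induction s using Finset.induction_on with
  | empty => simpa using DegLE_const 1 0
  | insert a s ha ih =>
    rw [Finset.card_insert_of_notMem ha, add_comm]
    have : (fun w => ∏ k ∈ insert a s, f k w) = f a * (fun w => ∏ k ∈ s, f k w) := by
      funext w; simp [Finset.prod_insert ha]
    rw [this]
    exact DegLE_mul (h a (by simp)) (ih fun k hk => h k (by simp [hk]))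

lemma DegLE_sum {κ : Type*} (s : Finset κ) (f : κ → (ι → Bool) → ℝ) {d : ℕ}
    (h : ∀ k ∈ s, f k ∈ DegLE ι d) : (fun w => ∑ k ∈ s, f k w) ∈ DegLE ι d := by
  have : (fun w => ∑ k ∈ s, f k w) = ∑ k ∈ s, f k := by funext w; simp
  rw [this]
  exact Submodule.sum_mem _ h

lemma DegLE_ev_pt {d : ℕ} {c : Finset ι → ℝ} (hd : Deg d c) :
    (fun w => ev c (pt w)) ∈ DegLE ι d := by
  simp only [ev_pt]
  apply DegLE_sum
  intro S _
  by_cases h : d < S.card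
  · simp only [hd S h, zero_mul]; exact DegLE_const 0 d
  · have : (fun w => c S * chi S w) = c S • chi S := by funext w; simp
    rw [this]
    exact Submodule.smul_mem _ _ (Submodule.subset_span ⟨S, by omega, rfl⟩)

lemma hcF {d : ℕ} {f : (ι → Bool) → ℝ} (hf : f ∈ DegLE ι d) :
    Ex (fun w => f w ^ 4) ≤ 9 ^ d * (Ex (fun w => f w ^ 2)) ^ 2 := by
  obtain ⟨c, h1, h2⟩ := DegLE_coef hf
  simp only [h2]
  exact hc h1

/-- all even moments -/
lemma moments (d k : ℕ) : ∃ C : ℝ, 0 < C ∧ ∀ (n : ℕ) (f : (Fin n → Bool) → ℝ),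
    f ∈ DegLE (Fin n) d →
    Ex (fun w => f w ^ (2 ^ (k + 1))) ≤ C * (Ex (fun w => f w ^ 2)) ^ (2 ^ k) := by
  induction k generalizing d with
  | zero => exact ⟨1, one_pos, fun n f _ => by simp⟩
  | succ k ih =>
    obtain ⟨C, hC, h⟩ := ih (d + d)
    refine ⟨C * (9 ^ d) ^ (2 ^ k), by positivity, fun n f hf => ?_⟩
    have h1 := h n (f * f) (DegLE_mul hf hf)
    have e1 : ∀ w, (f * f) w ^ (2 ^ (k + 1)) = f w ^ (2 ^ (k + 1 + 1)) := by
      intro w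
      simp only [Pi.mul_apply, ← sq]
      rw [← pow_mul]; congr 1; ring
    have e2 : ∀ w, (f * f) w ^ 2 = f w ^ 4 := by
      intro w; simp only [Pi.mul_apply]; ring
    simp only [e1, e2] at h1
    calc _ ≤ _ := h1
      _ ≤ C * (9 ^ d * (Ex (fun w => f w ^ 2)) ^ 2) ^ (2 ^ k) := by
          gcongr
          · exact Ex_nonneg fun w => by positivity
          · exact hcF hf
      _ = _ := by rw [mul_pow, ← pow_mul]; ring

end cube
end NS

set_option linter.unusedSectionVars false
set_option linter.unusedVariables false

namespace NS
section B
variable {ι : Type*} [Fintype ι] [DecidableEq ι]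

/-- take coordinates in `U` from `x` and the others from `y` -/
def mix {α : Type*} (U : Finset ι) (x y : ι → α) : ι → α := fun i => if i ∈ U then x i else y i

lemma Ex_mix (U : Finset ι) (f : (ι → Bool) → ℝ) :
    Ex (fun y => Ex (fun x => f (mix U x y))) = Ex f := by
  have h1 : Ex (fun z : (ι → Bool) × (ι → Bool) => f (mix U z.2 z.1)) = Ex f := by
    have inv : Function.Involutive
        (fun z : (ι → Bool) × (ι → Bool) => (mix U z.2 z.1, mix U z.1 z.2)) := by
      rintro ⟨x, y⟩
      ext i <;> simp only [mix] <;> split_ifs <;> rfl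
    have := Ex_invol inv (fun z => f z.1)
    simp only at this
    rw [this, Ex_prod (fun x _ => f x)]
    simp only [Ex_const]
  rw [← h1, Ex_prod (fun y x => f (mix U x y))]

/-- discrete derivative -/
def der (i : ι) (c : Finset ι → ℝ) : Finset ι → ℝ := fun S => if i ∈ S then 0 else c (insert i S)
/-- part without `i` -/
def rm (i : ι) (c : Finset ι → ℝ) : Finset ι → ℝ := fun S => if i ∈ S then 0 else c S

/-- `c` does not involve `i` -/
def NoVar (i : ι) (c : Finset ι → ℝ) : Prop := ∀ S, i ∈ S → c S = 0

lemma noVar_der (i : ι) (c : Finset ι → ℝ) : NoVar i (der i c) := by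
  intro S h; simp [der, h]
lemma noVar_rm (i : ι) (c : Finset ι → ℝ) : NoVar i (rm i c) := by
  intro S h; simp [rm, h]
lemma noVar_der_of {i : ι} (j : ι) {c : Finset ι → ℝ} (h : NoVar i c) : NoVar i (der j c) := by
  intro S hS
  simp only [der]
  split_ifs
  · rfl
  · exact h _ (Finset.mem_insert_of_mem hS)
lemma der_noVar {i : ι} {c : Finset ι → ℝ} (h : NoVar i c) : der i c = 0 := by
  funext S
  simp only [der, Pi.zero_apply]
  split_ifs
  · rfl
  · exact h _ (Finset.mem_insert_self _ _)

lemma ev_congr {i : ι} {c : Finset ι → ℝ} (h : NoVar i c) {x x' : ι → ℝ}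
    (hx : ∀ j, j ≠ i → x j = x' j) : ev c x = ev c x' := by
  unfold ev
  refine Finset.sum_congr rfl fun S _ => ?_
  by_cases hi : i ∈ S
  · simp [h S hi]
  · congr 1
    apply Finset.prod_congr rfl
    intro j hj
    exact hx j (by rintro rfl; exact hi hj)

lemma ev_zero (x : ι → ℝ) : ev (0 : Finset ι → ℝ) x = 0 := by simp [ev]

lemma ev_noVar_sum {i : ι} {c : Finset ι → ℝ} (h : NoVar i c) (x : ι → ℝ) :
    ev c x = ∑ S ∈ (Finset.univ.erase i).powerset, c S * ∏ j ∈ S, x j := by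
  unfold ev
  symm
  apply Finset.sum_subset (Finset.subset_univ _)
  intro S _ hS
  have : i ∈ S := by
    by_contra hi
    apply hS
    rw [Finset.mem_powerset]
    intro j hj
    simp only [Finset.mem_erase, Finset.mem_univ, and_true]
    rintro rfl; exact hi hj
  simp [h S this]

lemma ev_split (i : ι) (c : Finset ι → ℝ) (x : ι → ℝ) :
    ev c x = ev (rm i c) x + x i * ev (der i c) x := by
  rw [ev_noVar_sum (noVar_rm i c), ev_noVar_sum (noVar_der i c)]
  have : ev c x = ∑ S ∈ (insert i (Finset.univ.erase i)).powerset, c S * ∏ j ∈ S, x j := by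
    rw [Finset.insert_erase (Finset.mem_univ i), Finset.powerset_univ]; rfl
  rw [this, Finset.sum_powerset_insert (Finset.notMem_erase i _), Finset.mul_sum]
  have key : ∀ S ∈ (Finset.univ.erase i).powerset, i ∉ S := by
    intro S hS hi
    exact Finset.notMem_erase i _ (Finset.mem_powerset.1 hS hi)
  congr 1
  · refine Finset.sum_congr rfl fun S hS => ?_
    simp [rm, key S hS]
  · refine Finset.sum_congr rfl fun S hS => ?_
    rw [Finset.prod_insert (key S hS)]
    simp only [der, key S hS, if_false]
    ring

/-- directional derivative -/
noncomputable def Dq (c : Finset ι → ℝ) (x y : ι → ℝ) : ℝ := ∑ j, y j * ev (der j c) x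

lemma rm_der {i j : ι} (h : j ≠ i) (c : Finset ι → ℝ) : rm i (der j c) = der j (rm i c) := by
  funext S
  simp only [rm, der, Finset.mem_insert, h.symm, false_or]
  split_ifs <;> rfl

lemma der_der {i j : ι} (h : j ≠ i) (c : Finset ι → ℝ) : der i (der j c) = der j (der i c) := by
  funext S
  simp only [der, Finset.mem_insert, h.symm, h, false_or, Finset.insert_comm i j]
  split_ifs <;> rfl

lemma Dq_split (i : ι) (c : Finset ι → ℝ) (x y : ι → ℝ) :
    Dq c x y = Dq (rm i c) x y + x i * Dq (der i c) x y + y i * ev (der i c) x := by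
  unfold Dq
  rw [← Finset.add_sum_erase _ _ (Finset.mem_univ i),
    ← Finset.add_sum_erase _ (fun j => y j * ev (der j (rm i c)) x) (Finset.mem_univ i),
    ← Finset.add_sum_erase _ (fun j => y j * ev (der j (der i c)) x) (Finset.mem_univ i)]
  rw [der_noVar (noVar_rm i c), der_noVar (noVar_der i c), ev_zero]
  have : ∑ j ∈ Finset.univ.erase i, y j * ev (der j c) x
      = ∑ j ∈ Finset.univ.erase i, y j * ev (der j (rm i c)) x
        + x i * ∑ j ∈ Finset.univ.erase i, y j * ev (der j (der i c)) x := by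
    rw [Finset.mul_sum, ← Finset.sum_add_distrib]
    refine Finset.sum_congr rfl fun j hj => ?_
    have hj' : j ≠ i := Finset.ne_of_mem_erase hj
    rw [ev_split i (der j c), rm_der hj', der_der hj']
    ring
  rw [this]; ring

lemma Dq_congr {i : ι} {c : Finset ι → ℝ} (h : NoVar i c) {x x' y y' : ι → ℝ}
    (hx : ∀ j, j ≠ i → x j = x' j) (hy : ∀ j, j ≠ i → y j = y' j) : Dq c x y = Dq c x' y' := by
  unfold Dq
  refine Finset.sum_congr rfl fun j _ => ?_
  by_cases hj : j = i
  · subst hj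
    rw [der_noVar h, ev_zero, ev_zero, mul_zero, mul_zero]
  · rw [hy j hj, ev_congr (noVar_der_of j h) hx]

/-- `a` is affine in the pair of coordinates `i` -/
structure PAff (i : ι) (a a0 a1 a2 : (ι → ℝ) → (ι → ℝ) → ℝ) : Prop where
  eq : ∀ x y, a x y = a0 x y + x i * a1 x y + y i * a2 x y
  ind0 : ∀ x y x' y', (∀ j, j ≠ i → x j = x' j) → (∀ j, j ≠ i → y j = y' j) → a0 x y = a0 x' y'
  ind1 : ∀ x y x' y', (∀ j, j ≠ i → x j = x' j) → (∀ j, j ≠ i → y j = y' j) → a1 x y = a1 x' y'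
  ind2 : ∀ x y x' y', (∀ j, j ≠ i → x j = x' j) → (∀ j, j ≠ i → y j = y' j) → a2 x y = a2 x' y'

lemma PAff_evx (i : ι) (c : Finset ι → ℝ) (r : ℝ) :
    PAff i (fun x _ => r * ev c x) (fun x _ => r * ev (rm i c) x) (fun x _ => r * ev (der i c) x)
      (fun _ _ => 0) where
  eq x y := by rw [ev_split i c x]; ring
  ind0 x y x' y' hx hy := by rw [ev_congr (noVar_rm i c) hx]
  ind1 x y x' y' hx hy := by rw [ev_congr (noVar_der i c) hx]
  ind2 x y x' y' hx hy := rfl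

lemma PAff_evy (i : ι) (c : Finset ι → ℝ) (r : ℝ) :
    PAff i (fun _ y => r * ev c y) (fun _ y => r * ev (rm i c) y) (fun _ _ => 0)
      (fun _ y => r * ev (der i c) y) where
  eq x y := by rw [ev_split i c y]; ring
  ind0 x y x' y' hx hy := by rw [ev_congr (noVar_rm i c) hy]
  ind1 x y x' y' hx hy := rfl
  ind2 x y x' y' hx hy := by rw [ev_congr (noVar_der i c) hy]

lemma PAff_Dq (i : ι) (c : Finset ι → ℝ) (r : ℝ) :
    PAff i (fun x y => r * Dq c x y) (fun x y => r * Dq (rm i c) x y)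
      (fun x y => r * Dq (der i c) x y) (fun x _ => r * ev (der i c) x) where
  eq x y := by rw [Dq_split i c x y]; ring
  ind0 x y x' y' hx hy := by rw [Dq_congr (noVar_rm i c) hx hy]
  ind1 x y x' y' hx hy := by rw [Dq_congr (noVar_der i c) hx hy]
  ind2 x y x' y' hx hy := by rw [ev_congr (noVar_der i c) hx]

lemma PAff_zero (i : ι) :
    PAff i (fun _ _ => 0) (fun _ _ => 0) (fun _ _ => 0) (fun _ _ => 0) where
  eq x y := by simp
  ind0 x y x' y' hx hy := rfl
  ind1 x y x' y' hx hy := rfl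
  ind2 x y x' y' hx hy := rfl

/-- hybrids -/
noncomputable def zx (C S : ℝ) (T : Finset ι) (w : ι × Bool → Bool) : ι → ℝ := fun j =>
  if j ∈ T then C * sg (w (j, false)) + S * sg (w (j, true)) else sg (w (j, false))
noncomputable def zy (C S : ℝ) (T : Finset ι) (w : ι × Bool → Bool) : ι → ℝ := fun j =>
  if j ∈ T then -S * sg (w (j, false)) + C * sg (w (j, true)) else sg (w (j, true))

/-- second order Taylor expansion with cubic remainder -/
def Tay (Φ : ℝ → ℝ → ℝ) (K : ℝ) : Prop :=
  ∀ a b, ∃ c1 c2 c11 c12 c22 : ℝ, ∀ α β,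
    |Φ (a + α) (b + β) - (Φ a b + c1 * α + c2 * β + c11 * α ^ 2 + c12 * (α * β) + c22 * β ^ 2)|
      ≤ K * (|α| + |β|) ^ 3

lemma lind_base {κ : Type*} [Fintype κ] [DecidableEq κ] {k l : κ} (hkl : k ≠ l)
    {Φ : ℝ → ℝ → ℝ} {K a b c1 c2 c11 c12 c22 : ℝ} (hK : 0 ≤ K)
    (h : ∀ α β,
    |Φ (a + α) (b + β) - (Φ a b + c1 * α + c2 * β + c11 * α ^ 2 + c12 * (α * β) + c22 * β ^ 2)|
      ≤ K * (|α| + |β|) ^ 3) (A1 A2 B1 B2 : ℝ) :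
    |Ex (fun w : κ → Bool => Φ (a + (sg (w k) * A1 + sg (w l) * A2))
        (b + (sg (w k) * B1 + sg (w l) * B2)))
      - (Φ a b + c11 * (A1 ^ 2 + A2 ^ 2) + c12 * (A1 * B1 + A2 * B2) + c22 * (B1 ^ 2 + B2 ^ 2))|
      ≤ K * (|A1| + |A2| + |B1| + |B2|) ^ 3 := by
  have o1 : Ex (fun w : κ → Bool => sg (w k)) = 0 :=
    Ex_odd k fun w => by rw [flip_same, sg_not]
  have o2 : Ex (fun w : κ → Bool => sg (w l)) = 0 :=
    Ex_odd l fun w => by rw [flip_same, sg_not]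
  have o3 : Ex (fun w : κ → Bool => sg (w k) * sg (w l)) = 0 :=
    Ex_odd k fun w => by rw [flip_same, sg_not, flip_ne hkl.symm]; ring
  have e : Ex (fun w : κ → Bool => Φ a b + c1 * (sg (w k) * A1 + sg (w l) * A2)
      + c2 * (sg (w k) * B1 + sg (w l) * B2) + c11 * (sg (w k) * A1 + sg (w l) * A2) ^ 2
      + c12 * ((sg (w k) * A1 + sg (w l) * A2) * (sg (w k) * B1 + sg (w l) * B2))
      + c22 * (sg (w k) * B1 + sg (w l) * B2) ^ 2)
      = Φ a b + c11 * (A1 ^ 2 + A2 ^ 2) + c12 * (A1 * B1 + A2 * B2) + c22 * (B1 ^ 2 + B2 ^ 2) := by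
    have : ∀ w : κ → Bool, Φ a b + c1 * (sg (w k) * A1 + sg (w l) * A2)
      + c2 * (sg (w k) * B1 + sg (w l) * B2) + c11 * (sg (w k) * A1 + sg (w l) * A2) ^ 2
      + c12 * ((sg (w k) * A1 + sg (w l) * A2) * (sg (w k) * B1 + sg (w l) * B2))
      + c22 * (sg (w k) * B1 + sg (w l) * B2) ^ 2
      = (Φ a b + c11 * (A1 ^ 2 + A2 ^ 2) + c12 * (A1 * B1 + A2 * B2) + c22 * (B1 ^ 2 + B2 ^ 2))
        + (c1 * A1 + c2 * B1) * sg (w k) + (c1 * A2 + c2 * B2) * sg (w l)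
        + (2 * c11 * A1 * A2 + c12 * (A1 * B2 + A2 * B1) + 2 * c22 * B1 * B2)
          * (sg (w k) * sg (w l)) := by
      intro w
      linear_combination (c11 * A1 ^ 2 + c12 * A1 * B1 + c22 * B1 ^ 2) * sg_sq (w k)
        + (c11 * A2 ^ 2 + c12 * A2 * B2 + c22 * B2 ^ 2) * sg_sq (w l)
    simp only [this]
    rw [Ex_add, Ex_add, Ex_add, Ex_const, Ex_mul_left, Ex_mul_left, Ex_mul_left, o1, o2, o3]
    ring
  rw [← e, ← Ex_sub]
  refine (Ex_abs_le _).trans (Ex_le fun w => (h _ _).trans ?_)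
  have b1 : ∀ p q : ℝ, |sg (w k) * p + sg (w l) * q| ≤ |p| + |q| := by
    intro p q
    refine (abs_add_le _ _).trans ?_
    rw [abs_mul, abs_mul, sg_abs, sg_abs, one_mul, one_mul]
  exact mul_le_mul_of_nonneg_left (pow_le_pow_left₀ (by positivity)
    (by linarith [b1 A1 A2, b1 B1 B2]) 3) hK

lemma rot_bound {C S : ℝ} (h : C ^ 2 + S ^ 2 = 1) (p q : ℝ) :
    |C * p - S * q| + |S * p + C * q| ≤ 2 * (|p| + |q|) := by
  have hC : |C| ≤ 1 := by rw [abs_le]; constructor <;> nlinarith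
  have hS : |S| ≤ 1 := by rw [abs_le]; constructor <;> nlinarith
  have h1 : |C * p - S * q| ≤ |p| + |q| := by
    refine (abs_sub _ _).trans ?_
    rw [abs_mul, abs_mul]
    nlinarith [abs_nonneg p, abs_nonneg q]
  have h2 : |S * p + C * q| ≤ |p| + |q| := by
    refine (abs_add_le _ _).trans ?_
    rw [abs_mul, abs_mul]
    nlinarith [abs_nonneg p, abs_nonneg q]
  linarith

set_option maxHeartbeats 1000000 in
lemma lind_step {C S : ℝ} (hCS : C ^ 2 + S ^ 2 = 1) {Φ : ℝ → ℝ → ℝ} {K : ℝ} (hK : 0 ≤ K)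
    (hΦ : Tay Φ K) {i : ι} {a a0 a1 a2 b b0 b1 b2 : (ι → ℝ) → (ι → ℝ) → ℝ}
    (ha : PAff i a a0 a1 a2) (hb : PAff i b b0 b1 b2) {T : Finset ι} (hi : i ∉ T) :
    |Ex (fun w => Φ (a (zx C S (insert i T) w) (zy C S (insert i T) w))
        (b (zx C S (insert i T) w) (zy C S (insert i T) w)))
      - Ex (fun w => Φ (a (zx C S T w) (zy C S T w)) (b (zx C S T w) (zy C S T w)))|
    ≤ 16 * K * Ex (fun w => (|a1 (zx C S T w) (zy C S T w)| + |a2 (zx C S T w) (zy C S T w)|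
        + |b1 (zx C S T w) (zy C S T w)| + |b2 (zx C S T w) (zy C S T w)|) ^ 3) := by
  set U : Finset (ι × Bool) := {(i, false), (i, true)} with hU
  rw [← Ex_mix U, ← Ex_mix U (fun w => Φ (a (zx C S T w) (zy C S T w)) _), ← Ex_sub,
    ← Ex_mul_left]
  refine (Ex_abs_le _).trans (Ex_mono fun y => ?_)
  have offU : ∀ j, j ≠ i → ∀ s x, mix U x y (j, s) = y (j, s) := by
    intro j hj s x
    simp [mix, hU, hj]
  have onU : ∀ s x, mix U x y (i, s) = x (i, s) := by
    intro s x
    cases s <;> simp [mix, hU]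
  have zxo : ∀ (T' : Finset ι), (T' = T ∨ T' = insert i T) → ∀ x j, j ≠ i →
      zx C S T' (mix U x y) j = zx C S T y j := by
    rintro T' (rfl | rfl) x j hj <;> simp [zx, offU j hj, hj]
  have zyo : ∀ (T' : Finset ι), (T' = T ∨ T' = insert i T) → ∀ x j, j ≠ i →
      zy C S T' (mix U x y) j = zy C S T y j := by
    rintro T' (rfl | rfl) x j hj <;> simp [zy, offU j hj, hj]
  set A0 := a0 (zx C S T y) (zy C S T y)
  set A1 := a1 (zx C S T y) (zy C S T y)
  set A2 := a2 (zx C S T y) (zy C S T y)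
  set B0 := b0 (zx C S T y) (zy C S T y)
  set B1 := b1 (zx C S T y) (zy C S T y)
  set B2 := b2 (zx C S T y) (zy C S T y)
  have ea : ∀ (T' : Finset ι), (T' = T ∨ T' = insert i T) → ∀ x,
      a (zx C S T' (mix U x y)) (zy C S T' (mix U x y))
        = A0 + zx C S T' (mix U x y) i * A1 + zy C S T' (mix U x y) i * A2 := by
    intro T' hT' x
    rw [ha.eq, ha.ind0 _ _ _ _ (zxo T' hT' x) (zyo T' hT' x),
      ha.ind1 _ _ _ _ (zxo T' hT' x) (zyo T' hT' x),
      ha.ind2 _ _ _ _ (zxo T' hT' x) (zyo T' hT' x)]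
  have eb : ∀ (T' : Finset ι), (T' = T ∨ T' = insert i T) → ∀ x,
      b (zx C S T' (mix U x y)) (zy C S T' (mix U x y))
        = B0 + zx C S T' (mix U x y) i * B1 + zy C S T' (mix U x y) i * B2 := by
    intro T' hT' x
    rw [hb.eq, hb.ind0 _ _ _ _ (zxo T' hT' x) (zyo T' hT' x),
      hb.ind1 _ _ _ _ (zxo T' hT' x) (zyo T' hT' x),
      hb.ind2 _ _ _ _ (zxo T' hT' x) (zyo T' hT' x)]
  obtain ⟨c1, c2, c11, c12, c22, hc⟩ := hΦ A0 B0
  have hkl : ((i, false) : ι × Bool) ≠ (i, true) := by simp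
  have t1 := lind_base hkl hK hc (C * A1 - S * A2) (S * A1 + C * A2)
    (C * B1 - S * B2) (S * B1 + C * B2)
  have t0 := lind_base hkl hK hc A1 A2 B1 B2
  have f1 : (fun x => Φ (a (zx C S (insert i T) (mix U x y)) (zy C S (insert i T) (mix U x y)))
        (b (zx C S (insert i T) (mix U x y)) (zy C S (insert i T) (mix U x y))))
      = fun w => Φ (A0 + (sg (w (i, false)) * (C * A1 - S * A2)
          + sg (w (i, true)) * (S * A1 + C * A2)))
        (B0 + (sg (w (i, false)) * (C * B1 - S * B2) + sg (w (i, true)) * (S * B1 + C * B2))) := by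
    funext x
    rw [ea _ (Or.inr rfl), eb _ (Or.inr rfl)]
    simp only [zx, zy, Finset.mem_insert_self, if_true, onU]
    congr 1 <;> ring
  have f0 : (fun x => Φ (a (zx C S T (mix U x y)) (zy C S T (mix U x y)))
        (b (zx C S T (mix U x y)) (zy C S T (mix U x y))))
      = fun w => Φ (A0 + (sg (w (i, false)) * A1 + sg (w (i, true)) * A2))
        (B0 + (sg (w (i, false)) * B1 + sg (w (i, true)) * B2)) := by
    funext x
    rw [ea _ (Or.inl rfl), eb _ (Or.inl rfl)]
    simp only [zx, zy, hi, if_false, onU]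
    congr 1 <;> ring
  rw [f1, f0]
  have q : ∀ p q r s : ℝ, (C * p - S * q) * (C * r - S * s) + (S * p + C * q) * (S * r + C * s)
      = p * r + q * s := by
    intro p q r s
    linear_combination (p * r + q * s) * hCS
  have q1 := q A1 A2 A1 A2
  have q2 := q A1 A2 B1 B2
  have q3 := q B1 B2 B1 B2
  simp only [← sq] at q1 q3
  rw [q1, q2, q3] at t1
  have r1 := rot_bound hCS A1 A2
  have r2 := rot_bound hCS B1 B2
  have t1' := t1.trans (mul_le_mul_of_nonneg_left (pow_le_pow_left₀ (by positivity)
    (show _ ≤ 2 * (|A1| + |A2| + |B1| + |B2|) by linarith) 3) hK)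
  have t0' := t0.trans (show _ ≤ 8 * (K * (|A1| + |A2| + |B1| + |B2|) ^ 3) by
    have : 0 ≤ K * (|A1| + |A2| + |B1| + |B2|) ^ 3 := by positivity
    linarith)
  have e8 : K * (2 * (|A1| + |A2| + |B1| + |B2|)) ^ 3
      = 8 * (K * (|A1| + |A2| + |B1| + |B2|) ^ 3) := by ring
  rw [e8] at t1'
  have e16 : 16 * K * (|A1| + |A2| + |B1| + |B2|) ^ 3
      = 8 * (K * (|A1| + |A2| + |B1| + |B2|) ^ 3)
        + 8 * (K * (|A1| + |A2| + |B1| + |B2|) ^ 3) := by ring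
  rw [e16]
  rw [abs_sub_comm] at t0'
  exact (abs_sub_le _ _ _).trans (add_le_add t1' t0')

/-- Lindeberg replacement. -/
lemma lindeberg {C S : ℝ} (hCS : C ^ 2 + S ^ 2 = 1) {Φ : ℝ → ℝ → ℝ} {K : ℝ} (hK : 0 ≤ K)
    (hΦ : Tay Φ K) {a b : (ι → ℝ) → (ι → ℝ) → ℝ} {a0 a1 a2 b0 b1 b2 : ι → (ι → ℝ) → (ι → ℝ) → ℝ}
    (ha : ∀ i, PAff i a (a0 i) (a1 i) (a2 i)) (hb : ∀ i, PAff i b (b0 i) (b1 i) (b2 i))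
    (e : ι → ℝ)
    (he : ∀ i T, Ex (fun w => (|a1 i (zx C S T w) (zy C S T w)| + |a2 i (zx C S T w) (zy C S T w)|
        + |b1 i (zx C S T w) (zy C S T w)| + |b2 i (zx C S T w) (zy C S T w)|) ^ 3) ≤ e i)
    (T : Finset ι) :
    |Ex (fun w => Φ (a (zx C S T w) (zy C S T w)) (b (zx C S T w) (zy C S T w)))
      - Ex (fun w => Φ (a (zx C S ∅ w) (zy C S ∅ w)) (b (zx C S ∅ w) (zy C S ∅ w)))|
    ≤ 16 * K * ∑ i ∈ T, e i := by
  induction T using Finset.induction_on with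
  | empty => simp
  | insert i T hi ih =>
    have h1 := lind_step hCS hK hΦ (ha i) (hb i) hi
    have h2 := mul_le_mul_of_nonneg_left (he i T) (by positivity : 0 ≤ 16 * K)
    rw [Finset.sum_insert hi, mul_add]
    have h3 := h1.trans h2
    calc _ ≤ _ := abs_sub_le _ _ _
      _ ≤ _ := add_le_add h3 ih

lemma tay_sq : Tay (fun a _ => a ^ 2) 0 := by
  intro a b
  refine ⟨2 * a, 0, 1, 0, 0, fun α β => ?_⟩
  have : (a + α) ^ 2 - (a ^ 2 + 2 * a * α + 0 * β + 1 * α ^ 2 + 0 * (α * β) + 0 * β ^ 2) = 0 := by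
    ring
  show |(a + α) ^ 2 - (a ^ 2 + 2 * a * α + 0 * β + 1 * α ^ 2 + 0 * (α * β) + 0 * β ^ 2)| ≤ _
  rw [this]; simp

/-- second moments are the same for all hybrids -/
lemma inv2 {C S : ℝ} (hCS : C ^ 2 + S ^ 2 = 1) {a : (ι → ℝ) → (ι → ℝ) → ℝ}
    {a0 a1 a2 : ι → (ι → ℝ) → (ι → ℝ) → ℝ}
    (ha : ∀ i, PAff i a (a0 i) (a1 i) (a2 i)) (T : Finset ι) :
    Ex (fun w => a (zx C S T w) (zy C S T w) ^ 2)
      = Ex (fun w => a (zx C S ∅ w) (zy C S ∅ w) ^ 2) := by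
  have h := lindeberg hCS le_rfl tay_sq ha (fun i => PAff_zero i)
    (fun i => ∑ T, Ex (fun w => (|a1 i (zx C S T w) (zy C S T w)|
      + |a2 i (zx C S T w) (zy C S T w)| + |(0:ℝ)| + |(0:ℝ)|) ^ 3)) (by
      intro i T
      exact Finset.single_le_sum (f := fun T => Ex (fun w => (|a1 i (zx C S T w) (zy C S T w)|
      + |a2 i (zx C S T w) (zy C S T w)| + |(0:ℝ)| + |(0:ℝ)|) ^ 3))
        (fun T _ => Ex_nonneg fun w => by positivity) (Finset.mem_univ T)) T
  rw [mul_zero, zero_mul] at h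
  have := abs_nonpos_iff.1 h
  linarith

end B

/-! ### The test function -/

noncomputable def hh (a b : ℝ) : ℝ := a ^ 2 / (1 + a ^ 2 + b ^ 2)

lemma hh_nonneg (a b : ℝ) : 0 ≤ hh a b := by unfold hh; positivity
lemma hh_le_one (a b : ℝ) : hh a b ≤ 1 := by
  unfold hh; rw [div_le_one (by positivity)]; nlinarith [sq_nonneg b]

end NS

set_option linter.unusedSectionVars false
set_option linter.unusedVariables false

namespace NS

set_option maxHeartbeats 2000000 in
lemma tay_hh : Tay hh 64 := by
  intro a b
  set D : ℝ := 1 + a ^ 2 + b ^ 2 with hD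
  have hD1 : 1 ≤ D := by nlinarith [sq_nonneg a, sq_nonneg b]
  have hD0 : 0 < D := by linarith
  set Q : ℝ := a ^ 2 / D with hQ
  have hQ0 : 0 ≤ Q := by positivity
  have hQ1 : Q ≤ 1 := by rw [hQ, div_le_one hD0]; nlinarith [sq_nonneg b]
  have hQD : Q * D = a ^ 2 := by rw [hQ]; field_simp
  refine ⟨(2 * a - Q * (2 * a)) / D, - (Q * (2 * b)) / D,
    (1 - Q - 2 * a * ((2 * a - Q * (2 * a)) / D)) / D,
    - (2 * b * ((2 * a - Q * (2 * a)) / D) + 2 * a * (- (Q * (2 * b)) / D)) / D,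
    (- Q - 2 * b * (- (Q * (2 * b)) / D)) / D, fun α β => ?_⟩
  set s := |α| + |β| with hs
  have hs0 : 0 ≤ s := by positivity
  set l := 2 * a * α + 2 * b * β with hl
  set r := α ^ 2 + β ^ 2 with hr
  set Q1 := (2 * a * α - Q * l) / D with hQ1d
  set Q2 := (α ^ 2 - Q * r - Q1 * l) / D with hQ2d
  set D' : ℝ := 1 + (a + α) ^ 2 + (b + β) ^ 2 with hD'
  have hD'1 : 1 ≤ D' := by nlinarith [sq_nonneg (a + α), sq_nonneg (b + β)]
  have hD'0 : 0 < D' := by linarith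
  have e1 : Q1 * D = 2 * a * α - Q * l := by rw [hQ1d]; field_simp
  have e2 : Q2 * D = α ^ 2 - Q * r - Q1 * l := by rw [hQ2d]; field_simp
  have key : hh (a + α) (b + β) - (Q + Q1 + Q2) = - (Q1 * r + Q2 * (l + r)) / D' := by
    unfold hh
    rw [← hD', eq_div_iff hD'0.ne', sub_mul, div_mul_cancel₀ _ hD'0.ne']
    have : D' = D + l + r := by rw [hD', hD, hl, hr]; ring
    rw [this]
    linear_combination - hQD - e1 - e2
  have e3 : hh (a + α) (b + β) - (hh a b + (2 * a - Q * (2 * a)) / D * α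
      + - (Q * (2 * b)) / D * β + (1 - Q - 2 * a * ((2 * a - Q * (2 * a)) / D)) / D * α ^ 2
      + - (2 * b * ((2 * a - Q * (2 * a)) / D) + 2 * a * (- (Q * (2 * b)) / D)) / D * (α * β)
      + (- Q - 2 * b * (- (Q * (2 * b)) / D)) / D * β ^ 2)
      = hh (a + α) (b + β) - (Q + Q1 + Q2) := by
    have : hh a b = Q := rfl
    rw [this, hQ2d, hQ1d, hl, hr]
    clear_value Q D
    ring
  rw [e3, key]
  clear e3 key
  clear_value Q2 Q1 l r s D' Q D
  set w := Real.sqrt D with hw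
  have hw2 : w ^ 2 = D := Real.sq_sqrt hD0.le
  have hw1 : 1 ≤ w := by rw [hw]; exact Real.one_le_sqrt.2 hD1
  set v := Real.sqrt D' with hv
  have hv2 : v ^ 2 = D' := Real.sq_sqrt hD'0.le
  have hv1 : 1 ≤ v := by rw [hv]; exact Real.one_le_sqrt.2 hD'1
  have haw : |a| ≤ w := Real.abs_le_sqrt (by nlinarith [sq_nonneg b])
  have hbw : |b| ≤ w := Real.abs_le_sqrt (by nlinarith [sq_nonneg a])
  have hav : |a + α| ≤ v := Real.abs_le_sqrt (by nlinarith [sq_nonneg (b + β)])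
  have hbv : |b + β| ≤ v := Real.abs_le_sqrt (by nlinarith [sq_nonneg (a + α)])
  have hsv : s ≤ 2 * w + 2 * v := by
    have h1 : |α| ≤ |a + α| + |a| := by
      have := abs_sub (a + α) a; rwa [add_sub_cancel_left] at this
    have h2 : |β| ≤ |b + β| + |b| := by
      have := abs_sub (b + β) b; rwa [add_sub_cancel_left] at this
    linarith
  have hα : |α| ≤ s := by rw [hs]; linarith [abs_nonneg β]
  have hβ : |β| ≤ s := by rw [hs]; linarith [abs_nonneg α]
  have hn1 : |2 * a * α| ≤ 2 * w * |α| := by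
    rw [abs_mul, abs_mul, abs_two]; gcongr
  have hn1b : |2 * b * β| ≤ 2 * w * |β| := by
    rw [abs_mul, abs_mul, abs_two]; gcongr
  have hlb : |l| ≤ 2 * w * s := by
    rw [hl]
    refine (abs_add_le _ _).trans ?_
    rw [hs]; linarith
  have hr0 : 0 ≤ r := by rw [hr]; positivity
  have hrs : r ≤ s ^ 2 := by
    rw [hr, hs, ← sq_abs α, ← sq_abs β]; nlinarith [abs_nonneg α, abs_nonneg β]
  have hα2 : α ^ 2 ≤ s ^ 2 := by rw [← sq_abs α]; gcongr
  have hw0 : 0 < w := by linarith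
  have hv0 : 0 < v := by linarith
  have b1 : |Q1| ≤ 4 * s / w := by
    rw [hQ1d, abs_div, abs_of_pos hD0, div_le_div_iff₀ hD0 hw0]
    have : |2 * a * α - Q * l| ≤ 4 * w * s := by
      refine (abs_sub _ _).trans ?_
      rw [abs_mul Q l, abs_of_nonneg hQ0]
      have : Q * |l| ≤ 1 * (2 * w * s) := by gcongr
      have : 2 * w * |α| ≤ 2 * w * s := by gcongr
      linarith
    rw [← hw2]
    nlinarith
  have b2 : |Q2| ≤ 10 * s ^ 2 / w ^ 2 := by
    rw [hQ2d, abs_div, abs_of_pos hD0, hw2]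
    gcongr
    have t1 : |Q1 * l| ≤ 8 * s ^ 2 := by
      rw [abs_mul]
      calc |Q1| * |l| ≤ (4 * s / w) * (2 * w * s) := by gcongr
        _ = 8 * s ^ 2 := by field_simp; ring
    have t2 : Q * r ≤ 1 * s ^ 2 := by gcongr
    have t3 : 0 ≤ Q * r := by positivity
    rw [abs_le] at t1 ⊢
    constructor <;> nlinarith [sq_nonneg α]
  rw [abs_div, abs_of_pos hD'0, abs_neg, div_le_iff₀ hD'0, ← hv2]
  have c1 : |Q1 * r| ≤ 4 * s ^ 3 := by
    rw [abs_mul, abs_of_nonneg hr0]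
    calc |Q1| * r ≤ (4 * s / w) * s ^ 2 := by gcongr
      _ ≤ (4 * s / 1) * s ^ 2 := by gcongr
      _ = _ := by ring
  have c2 : |Q2 * l| ≤ 20 * s ^ 3 := by
    rw [abs_mul]
    calc |Q2| * |l| ≤ (10 * s ^ 2 / w ^ 2) * (2 * w * s) := by gcongr
      _ = 20 * s ^ 3 / w := by field_simp; ring
      _ ≤ 20 * s ^ 3 / 1 := by gcongr
      _ = _ := by ring
  have c3 : |Q2 * r| ≤ 40 * s ^ 3 * v ^ 2 := by
    rw [abs_mul, abs_of_nonneg hr0]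
    calc |Q2| * r ≤ (10 * s ^ 2 / w ^ 2) * s ^ 2 := by gcongr
      _ = (10 * s ^ 3 / w ^ 2) * s := by ring
      _ ≤ (10 * s ^ 3 / w ^ 2) * (2 * w + 2 * v) := by gcongr
      _ ≤ (10 * s ^ 3 / w ^ 2) * (4 * w ^ 2 * v ^ 2) := by
          gcongr
          have a1 : w ≤ w * v := le_mul_of_one_le_right hw0.le hv1
          have a2 : v ≤ w * v := le_mul_of_one_le_left hv0.le hw1
          have a3 : w * v ≤ (w * v) * (w * v) :=
            le_mul_of_one_le_right (by positivity) (by linarith)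
          have a4 : 4 * w ^ 2 * v ^ 2 = 4 * ((w * v) * (w * v)) := by ring
          linarith
      _ = _ := by field_simp; ring
  have hs3 : 0 ≤ s ^ 3 := by positivity
  have hv3 : s ^ 3 ≤ s ^ 3 * v ^ 2 := by nlinarith [one_le_pow₀ hv1 (n := 2)]
  have : |Q1 * r + Q2 * (l + r)| ≤ |Q1 * r| + (|Q2 * l| + |Q2 * r|) := by
    rw [mul_add Q2]
    have h1 := abs_add_le (Q1 * r) (Q2 * l + Q2 * r)
    have h2 := abs_add_le (Q2 * l) (Q2 * r)
    linarith
  linarith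

lemma tay_swap {Φ : ℝ → ℝ → ℝ} {K : ℝ} (h : Tay Φ K) : Tay (fun a b => Φ b a) K := by
  intro a b
  obtain ⟨c1, c2, c11, c12, c22, hc⟩ := h b a
  refine ⟨c2, c1, c22, c12, c11, fun α β => ?_⟩
  have := hc β α
  rw [add_comm |α|]
  refine le_trans (le_of_eq ?_) this
  congr 1; ring

lemma tay_fst {Φ : ℝ → ℝ → ℝ} {K : ℝ} (hK : 0 ≤ K) (h : Tay Φ K) : Tay (fun a _ => Φ a 0) K := by
  intro a b
  obtain ⟨c1, c2, c11, c12, c22, hc⟩ := h a 0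
  refine ⟨c1, 0, c11, 0, 0, fun α β => ?_⟩
  have := hc α 0
  rw [abs_zero, add_zero, add_zero] at this
  refine le_trans (le_of_eq ?_) (this.trans ?_)
  · congr 1; ring
  · exact mul_le_mul_of_nonneg_left (pow_le_pow_left₀ (abs_nonneg _)
      (by linarith [abs_nonneg β]) 3) hK

lemma tay_add {Φ Ψ : ℝ → ℝ → ℝ} {K L : ℝ} (h : Tay Φ K) (h' : Tay Ψ L) :
    Tay (fun a b => Φ a b + Ψ a b) (K + L) := by
  intro a b
  obtain ⟨c1, c2, c11, c12, c22, hc⟩ := h a b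
  obtain ⟨c1', c2', c11', c12', c22', hc'⟩ := h' a b
  refine ⟨c1 + c1', c2 + c2', c11 + c11', c12 + c12', c22 + c22', fun α β => ?_⟩
  have := (abs_add_le _ _).trans (add_le_add (hc α β) (hc' α β))
  rw [← add_mul] at this
  refine le_trans (le_of_eq ?_) this
  congr 1; ring

lemma tay_neg {Φ : ℝ → ℝ → ℝ} {K : ℝ} (h : Tay Φ K) :
    Tay (fun a b => - Φ a b) K := by
  intro a b
  obtain ⟨c1, c2, c11, c12, c22, hc⟩ := h a b
  refine ⟨-c1, -c2, -c11, -c12, -c22, fun α β => ?_⟩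
  have := hc α β
  rw [← abs_neg] at this
  refine le_trans (le_of_eq ?_) this
  congr 1; ring

lemma tay_const (k : ℝ) : Tay (fun _ _ => k) 0 := by
  intro a b
  refine ⟨0, 0, 0, 0, 0, fun α β => ?_⟩
  simp

/-- first test function -/
noncomputable def F1 (a b : ℝ) : ℝ := b ^ 2 / ((1 + a ^ 2) * (1 + a ^ 2 + b ^ 2))
/-- second test function -/
noncomputable def F2 (a b : ℝ) : ℝ := (1 + b ^ 2) / (1 + a ^ 2 + b ^ 2)
/-- third test function -/
noncomputable def F3 (a _b : ℝ) : ℝ := 1 / (1 + a ^ 2)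

lemma tay_F1 : Tay F1 192 := by
  have h := tay_add (tay_add tay_hh (tay_swap tay_hh)) (tay_neg (tay_fst (by norm_num) tay_hh))
  have e : F1 = fun a b => hh a b + hh b a + - hh a 0 := by
    funext a b
    unfold F1 hh
    have : (1 + a ^ 2 + b ^ 2) ≠ 0 := by positivity
    have : (1 + b ^ 2 + a ^ 2) ≠ 0 := by positivity
    have : (1 + a ^ 2) ≠ 0 := by positivity
    have : (1 + a ^ 2 + 0 ^ 2) ≠ 0 := by positivity
    have e0 : 1 + b ^ 2 + a ^ 2 = 1 + a ^ 2 + b ^ 2 := by ring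
    have e1 : 1 + a ^ 2 + 0 ^ 2 = 1 + a ^ 2 := by ring
    rw [e0, e1]
    field_simp
    ring
  rw [e]; norm_num at h ⊢; exact h

lemma tay_F2 : Tay F2 64 := by
  have h := tay_add (tay_const 1) (tay_neg tay_hh)
  have e : F2 = fun a b => 1 + - hh a b := by
    funext a b
    unfold F2 hh
    have : (1 + a ^ 2 + b ^ 2) ≠ 0 := by positivity
    field_simp
    ring
  rw [e]; norm_num at h ⊢; exact h

lemma tay_F3 : Tay F3 64 := by
  have h := tay_fst (by norm_num) tay_F2
  have e : F3 = fun a _ => F2 a 0 := by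
    funext a b
    unfold F2 F3
    norm_num
  rw [e]; exact h

section C
variable {ι : Type*} [Fintype ι] [DecidableEq ι]

lemma nrm_der (j : ι) (c : Finset ι → ℝ) :
    nrm (der j c) = ∑ S, if j ∈ S then c S ^ 2 else 0 := by
  unfold nrm
  have : ∀ S, der j c S ^ 2 = if j ∉ S then c (insert j S) ^ 2 else 0 := by
    intro S; unfold der; by_cases h : j ∈ S <;> simp [h]
  simp only [this]
  rw [← Finset.sum_filter, ← Finset.sum_filter]
  refine Finset.sum_nbij' (fun S => insert j S) (fun S => S.erase j) ?_ ?_ ?_ ?_ ?_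
  · intro S hS; simp
  · intro S hS; simp
  · intro S hS
    simp only [Finset.mem_filter, Finset.mem_univ, true_and] at hS
    exact Finset.erase_insert hS
  · intro S hS
    simp only [Finset.mem_filter, Finset.mem_univ, true_and] at hS
    exact Finset.insert_erase hS
  · intro S hS; rfl

lemma sum_nrm_der (c : Finset ι → ℝ) : ∑ j, nrm (der j c) = ∑ S, (S.card : ℝ) * c S ^ 2 := by
  simp only [nrm_der]
  rw [Finset.sum_comm]
  refine Finset.sum_congr rfl fun S _ => ?_
  rw [← Finset.sum_filter]
  simp

lemma sum_nrm_der_le {d : ℕ} {c : Finset ι → ℝ} (h : Deg d c) :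
    ∑ j, nrm (der j c) ≤ d * vr c := by
  rw [sum_nrm_der]
  unfold vr
  rw [← Finset.add_sum_erase _ _ (Finset.mem_univ ∅), Finset.mul_sum]
  simp only [Finset.card_empty, Nat.cast_zero, zero_mul, zero_add]
  refine Finset.sum_le_sum fun S _ => ?_
  by_cases hS : d < S.card
  · simp [h S hS]
  · have : (S.card : ℝ) ≤ d := by exact_mod_cast not_lt.1 hS
    gcongr

lemma vr_le_sum_nrm_der (c : Finset ι → ℝ) : vr c ≤ ∑ j, nrm (der j c) := by
  rw [sum_nrm_der]
  unfold vr
  rw [← Finset.add_sum_erase _ _ (Finset.mem_univ ∅)]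
  simp only [Finset.card_empty, Nat.cast_zero, zero_mul, zero_add]
  refine Finset.sum_le_sum fun S hS => ?_
  have : (1 : ℝ) ≤ S.card := by
    exact_mod_cast Finset.card_pos.2 (Finset.nonempty_iff_ne_empty.2 (Finset.ne_of_mem_erase hS))
  nlinarith [sq_nonneg (c S)]

lemma vr_le_nrm (c : Finset ι → ℝ) : vr c ≤ nrm c := by
  rw [nrm_eq]; nlinarith [sq_nonneg (c ∅)]

lemma Deg_der {d : ℕ} {c : Finset ι → ℝ} (h : Deg (d + 1) c) (j : ι) : Deg d (der j c) := by
  intro S hS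
  unfold der
  split_ifs with hj
  · rfl
  · apply h; rw [Finset.card_insert_of_notMem hj]; omega

lemma Deg_der' {d : ℕ} {c : Finset ι → ℝ} (h : Deg d c) (j : ι) : Deg d (der j c) := by
  intro S hS
  unfold der
  split_ifs with hj
  · rfl
  · apply h; rw [Finset.card_insert_of_notMem hj]; omega

lemma Deg_rm {d : ℕ} {c : Finset ι → ℝ} (h : Deg d c) (j : ι) : Deg d (rm j c) := by
  intro S hS
  unfold rm
  split_ifs with hj
  · rfl
  · exact h _ hS

lemma Deg_zero_der {c : Finset ι → ℝ} (h : Deg 0 c) (j : ι) : der j c = 0 := by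
  funext S
  unfold der
  split_ifs with hj
  · rfl
  · apply h; rw [Finset.card_insert_of_notMem hj]; omega

lemma DegLE_ev {κ : Type*} [Fintype κ] [DecidableEq κ] {d : ℕ} {c : Finset ι → ℝ} (h : Deg d c)
    {z : (κ → Bool) → ι → ℝ} (hz : ∀ i, (fun w => z w i) ∈ DegLE κ 1) :
    (fun w => ev c (z w)) ∈ DegLE κ d := by
  unfold ev
  apply DegLE_sum
  intro S _
  by_cases hS : d < S.card
  · simp only [h S hS, zero_mul]; exact DegLE_const 0 d
  · have : (fun w => c S * ∏ i ∈ S, z w i) = c S • (fun w => ∏ i ∈ S, z w i) := by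
      funext w; simp
    rw [this]
    refine Submodule.smul_mem _ _ (DegLE_mono (by omega : S.card ≤ d) ?_)
    exact DegLE_prod S (fun i w => z w i) fun i _ => hz i

lemma DegLE_Dq {κ : Type*} [Fintype κ] [DecidableEq κ] {d : ℕ} {c : Finset ι → ℝ} (h : Deg d c)
    {z z' : (κ → Bool) → ι → ℝ} (hz : ∀ i, (fun w => z w i) ∈ DegLE κ 1)
    (hz' : ∀ i, (fun w => z' w i) ∈ DegLE κ 1) :
    (fun w => Dq c (z w) (z' w)) ∈ DegLE κ d := by
  unfold Dq
  apply DegLE_sum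
  intro j _
  cases d with
  | zero =>
    simp only [Deg_zero_der h, ev_zero, mul_zero]; exact DegLE_const 0 0
  | succ e =>
    rw [add_comm e]
    exact DegLE_mul (hz' j) (DegLE_ev (Deg_der h j) hz)

lemma DegLE_lin {κ : Type*} [Fintype κ] [DecidableEq κ] (a b : ℝ) (k l : κ) :
    (fun w : κ → Bool => a * sg (w k) + b * sg (w l)) ∈ DegLE κ 1 := by
  have : (fun w : κ → Bool => a * sg (w k) + b * sg (w l))
      = a • (fun w : κ → Bool => sg (w k)) + b • (fun w : κ → Bool => sg (w l)) := by
    funext w; simp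
  rw [this]
  exact Submodule.add_mem _ (Submodule.smul_mem _ _ (DegLE_coord k))
    (Submodule.smul_mem _ _ (DegLE_coord l))

lemma DegLE_zx (C S : ℝ) (T : Finset ι) (i : ι) :
    (fun w => zx C S T w i) ∈ DegLE (ι × Bool) 1 := by
  unfold zx
  by_cases h : i ∈ T
  · simp only [h, if_true]; exact DegLE_lin _ _ _ _
  · simp only [h, if_false]; exact DegLE_coord _

lemma DegLE_zy (C S : ℝ) (T : Finset ι) (i : ι) :
    (fun w => zy C S T w i) ∈ DegLE (ι × Bool) 1 := by
  unfold zy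
  by_cases h : i ∈ T
  · simp only [h, if_true]; exact DegLE_lin _ _ _ _
  · simp only [h, if_false]; exact DegLE_coord _

/-- splitting the doubled cube -/
def dbl (ι : Type*) : (ι × Bool → Bool) ≃ (ι → Bool) × (ι → Bool) where
  toFun w := (fun j => w (j, false), fun j => w (j, true))
  invFun p := fun k => if k.2 then p.2 k.1 else p.1 k.1
  left_inv w := by
    funext k; obtain ⟨j, s⟩ := k; cases s <;> simp
  right_inv p := by
    ext <;> simp

lemma Ex_dbl (f : (ι → Bool) → (ι → Bool) → ℝ) :
    Ex (fun w : ι × Bool → Bool => f (fun j => w (j, false)) (fun j => w (j, true)))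
      = Ex (fun u => Ex (fun v => f u v)) := by
  rw [← Ex_prod]
  exact Ex_equiv (dbl ι) (fun p => f p.1 p.2)

lemma zx_empty (C S : ℝ) (w : ι × Bool → Bool) : zx C S ∅ w = pt (fun j => w (j, false)) := by
  funext j; simp [zx, pt]
lemma zy_empty (C S : ℝ) (w : ι × Bool → Bool) : zy C S ∅ w = pt (fun j => w (j, true)) := by
  funext j; simp [zy, pt]

lemma Ex_empty (C S : ℝ) (f : (ι → ℝ) → (ι → ℝ) → ℝ) :
    Ex (fun w => f (zx C S ∅ w) (zy C S ∅ w)) = Ex (fun u => Ex (fun v => f (pt u) (pt v))) := by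
  simp only [zx_empty, zy_empty]
  exact Ex_dbl (fun u v => f (pt u) (pt v))

lemma Ex_lin_sq (t : ι → ℝ) : Ex (fun v : ι → Bool => (∑ j, sg (v j) * t j) ^ 2)
    = ∑ j, t j ^ 2 := by
  have : ∀ v : ι → Bool, (∑ j, sg (v j) * t j) ^ 2
      = ∑ j, ∑ k, t j * t k * (sg (v j) * sg (v k)) := by
    intro v
    rw [sq, Finset.sum_mul_sum]
    refine Finset.sum_congr rfl fun S _ => Finset.sum_congr rfl fun T _ => by ring
  simp only [this]
  rw [Ex_sum]
  refine Finset.sum_congr rfl fun j _ => ?_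
  rw [Ex_sum]
  simp only [Ex_mul_left]
  rw [Finset.sum_eq_single j]
  · simp only [sg_mul_self]; rw [Ex_const]; ring
  · intro k _ hk
    have : Ex (fun w : ι → Bool => sg (w j) * sg (w k)) = 0 :=
      Ex_odd k fun w => by rw [flip_same, sg_not, flip_ne hk.symm]; ring
    rw [this, mul_zero]
  · simp

lemma m2_evx {C S : ℝ} (hCS : C ^ 2 + S ^ 2 = 1) (c : Finset ι → ℝ) (T : Finset ι) :
    Ex (fun w => ev c (zx C S T w) ^ 2) = nrm c := by
  have := inv2 hCS (fun i => PAff_evx i c 1) T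
  simp only [one_mul] at this
  rw [this, Ex_empty C S (fun x _ => ev c x ^ 2)]
  simp only [Ex_const]
  exact parseval c

lemma m2_evy {C S : ℝ} (hCS : C ^ 2 + S ^ 2 = 1) (c : Finset ι → ℝ) (T : Finset ι) :
    Ex (fun w => ev c (zy C S T w) ^ 2) = nrm c := by
  have := inv2 hCS (fun i => PAff_evy i c 1) T
  simp only [one_mul] at this
  rw [this, Ex_empty C S (fun _ y => ev c y ^ 2)]
  simp only [Ex_const]
  exact parseval c

lemma m2_Dq {C S : ℝ} (hCS : C ^ 2 + S ^ 2 = 1) (c : Finset ι → ℝ) (T : Finset ι) :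
    Ex (fun w => Dq c (zx C S T w) (zy C S T w) ^ 2) = ∑ j, nrm (der j c) := by
  have := inv2 hCS (fun i => PAff_Dq i c 1) T
  simp only [one_mul] at this
  rw [this, Ex_empty C S (fun x y => Dq c x y ^ 2)]
  have : ∀ u : ι → Bool, Ex (fun v => Dq c (pt u) (pt v) ^ 2) = ∑ j, ev (der j c) (pt u) ^ 2 := by
    intro u
    exact Ex_lin_sq (fun j => ev (der j c) (pt u))
  simp only [this]
  rw [Ex_sum]
  exact Finset.sum_congr rfl fun j _ => parseval _

lemma third {κ : Type*} [Fintype κ] [DecidableEq κ] {d : ℕ} {G : (κ → Bool) → ℝ}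
    (hG : G ∈ DegLE κ d) {θ I : ℝ} (hθ : 0 < θ) (hI : I ≤ θ ^ 2)
    (h2 : Ex (fun w => G w ^ 2) ≤ (d + 1) * I) :
    Ex (fun w => |G w| ^ 3) ≤ 9 ^ d * (d + 1) ^ 2 * θ * I := by
  have h4 := hcF hG
  set m := Ex (fun w => G w ^ 2)
  have hm : 0 ≤ m := Ex_nonneg fun w => sq_nonneg _
  have hd : (0:ℝ) < d + 1 := by positivity
  have hI0 : 0 ≤ I := by
    by_contra h
    have := mul_neg_of_pos_of_neg hd (not_le.1 h)
    linarith
  have h1 : ∀ w, |G w| ^ 3 ≤ (1 / 2) * (θ * G w ^ 2 + G w ^ 4 / θ) := by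
    intro w
    have e2 : G w ^ 2 = |G w| ^ 2 := (sq_abs _).symm
    have e4 : G w ^ 4 = |G w| ^ 4 := by
      rw [show (4:ℕ) = 2 * 2 by norm_num, pow_mul, pow_mul, sq_abs]
    rw [e2, e4]
    set g := |G w|
    have : θ * g ^ 2 + g ^ 4 / θ - 2 * g ^ 3 = (g * (θ - g)) ^ 2 / θ := by field_simp; ring
    have : 0 ≤ (g * (θ - g)) ^ 2 / θ := by positivity
    linarith
  have h9 : (1:ℝ) ≤ 9 ^ d := one_le_pow₀ (by norm_num)
  have hm2 : m ^ 2 / θ ≤ (d + 1) ^ 2 * θ * I := by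
    rw [div_le_iff₀ hθ]
    calc m ^ 2 ≤ ((d + 1) * I) ^ 2 := by gcongr
      _ = (d + 1) ^ 2 * I * I := by ring
      _ ≤ (d + 1) ^ 2 * I * θ ^ 2 := by gcongr
      _ = _ := by ring
  calc _ ≤ Ex (fun w => (1 / 2) * (θ * G w ^ 2 + G w ^ 4 / θ)) := Ex_mono h1
    _ = (1 / 2) * (θ * m + Ex (fun w => G w ^ 4) / θ) := by
        rw [Ex_mul_left, Ex_add, Ex_mul_left]
        simp only [div_eq_mul_inv]
        rw [Ex_mul_right]
    _ ≤ (1 / 2) * (θ * ((d + 1) * I) + 9 ^ d * m ^ 2 / θ) := by gcongr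
    _ = (1 / 2) * ((d + 1) * 1 * 1 * (θ * I) + 9 ^ d * (m ^ 2 / θ)) := by ring
    _ ≤ (1 / 2) * ((d + 1) * (d + 1) * 9 ^ d * (θ * I) + 9 ^ d * ((d + 1) ^ 2 * θ * I)) := by
        gcongr
        · linarith
    _ = _ := by ring

lemma cube4 (a b c e : ℝ) (ha : 0 ≤ a) (hb : 0 ≤ b) (hc : 0 ≤ c) (he : 0 ≤ e) :
    (a + b + c + e) ^ 3 ≤ 16 * (a ^ 3 + b ^ 3 + c ^ 3 + e ^ 3) := by
  have h2 : ∀ x y : ℝ, 0 ≤ x → 0 ≤ y → (x + y) ^ 3 ≤ 4 * (x ^ 3 + y ^ 3) := by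
    intro x y hx hy
    nlinarith [mul_nonneg (add_nonneg hx hy) (sq_nonneg (x - y))]
  have h := h2 (a + b) (c + e) (by positivity) (by positivity)
  have h' := h2 a b ha hb
  have h'' := h2 c e hc he
  have e0 : a + b + c + e = (a + b) + (c + e) := by ring
  rw [e0]
  linarith

/-- Third moment bound for a sum of four scaled functions. -/
lemma third4 {κ : Type*} [Fintype κ] [DecidableEq κ] {d : ℕ} {G1 G2 G3 G4 : (κ → Bool) → ℝ}
    {r1 r2 r3 r4 R θ I : ℝ} (hθ : 0 < θ) (hI : I ≤ θ ^ 2)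
    (h1 : G1 ∈ DegLE κ d) (h2 : G2 ∈ DegLE κ d) (h3 : G3 ∈ DegLE κ d) (h4 : G4 ∈ DegLE κ d)
    (k1 : Ex (fun w => G1 w ^ 2) ≤ (d + 1) * I) (k2 : Ex (fun w => G2 w ^ 2) ≤ (d + 1) * I)
    (k3 : Ex (fun w => G3 w ^ 2) ≤ (d + 1) * I) (k4 : Ex (fun w => G4 w ^ 2) ≤ (d + 1) * I)
    (s1 : |r1| ≤ R) (s2 : |r2| ≤ R) (s3 : |r3| ≤ R) (s4 : |r4| ≤ R) :
    Ex (fun w => (|r1 * G1 w| + |r2 * G2 w| + |r3 * G3 w| + |r4 * G4 w|) ^ 3)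
      ≤ 64 * R ^ 3 * (9 ^ d * (d + 1) ^ 2 * θ * I) := by
  have q1 := third h1 hθ hI k1
  have q2 := third h2 hθ hI k2
  have q3 := third h3 hθ hI k3
  have q4 := third h4 hθ hI k4
  have hR : 0 ≤ R := (abs_nonneg _).trans s1
  have : ∀ w, (|r1 * G1 w| + |r2 * G2 w| + |r3 * G3 w| + |r4 * G4 w|) ^ 3
      ≤ 16 * R ^ 3 * (|G1 w| ^ 3 + |G2 w| ^ 3 + |G3 w| ^ 3 + |G4 w| ^ 3) := by
    intro w
    refine (cube4 _ _ _ _ (abs_nonneg _) (abs_nonneg _) (abs_nonneg _) (abs_nonneg _)).trans ?_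
    have s : ∀ r g : ℝ, |r| ≤ R → |r * g| ^ 3 ≤ R ^ 3 * |g| ^ 3 := by
      intro r g h
      rw [abs_mul, mul_pow]; gcongr
    linarith [s r1 (G1 w) s1, s r2 (G2 w) s2, s r3 (G3 w) s3, s r4 (G4 w) s4]
  refine (Ex_mono this).trans ?_
  rw [Ex_mul_left, Ex_add, Ex_add, Ex_add]
  have hR3 : 0 ≤ R ^ 3 := by positivity
  set X := 9 ^ d * ((d:ℝ) + 1) ^ 2 * θ * I
  calc _ ≤ 16 * R ^ 3 * (X + X + X + X) := by gcongr
    _ = _ := by ring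

/-- constant in the invariance principle -/
noncomputable def LC (d : ℕ) : ℝ := 192 * 16 * 64 * (9 ^ d * (d + 1) ^ 2) * d

/-- invariance for the pair `(p(x), p(y))`. -/
lemma inv_xy {C S : ℝ} (hCS : C ^ 2 + S ^ 2 = 1) {Φ : ℝ → ℝ → ℝ} {K : ℝ} (hK : 0 ≤ K)
    (hK' : K ≤ 192)
    (hΦ : Tay Φ K) {d : ℕ} {c : Finset ι → ℝ} (hc : Deg d c) {θ : ℝ} (hθ : 0 < θ)
    (hI : ∀ i, nrm (der i c) ≤ θ ^ 2) (hv : vr c ≤ 1) {r1 r2 R : ℝ} (h1 : |r1| ≤ R) (h2 : |r2| ≤ R) :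
    |Ex (fun w => Φ (r1 * ev c (zx C S Finset.univ w)) (r2 * ev c (zy C S Finset.univ w)))
      - Ex (fun u => Ex (fun v => Φ (r1 * ev c (pt u)) (r2 * ev c (pt v))))|
      ≤ LC d * R ^ 3 * θ := by
  have hR : 0 ≤ R := (abs_nonneg _).trans h1
  have h := lindeberg hCS hK hΦ (fun i => PAff_evx i c r1) (fun i => PAff_evy i c r2)
    (fun i => 64 * R ^ 3 * (9 ^ d * (d + 1) ^ 2 * θ * nrm (der i c))) (by
      intro i T
      have hz := DegLE_const (ι := ι × Bool) 0 d
      have hn := nrm_nonneg (der i c)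
      have hn' : nrm (der i c) ≤ (d + 1) * nrm (der i c) := by
        have : (0:ℝ) ≤ d := by positivity
        nlinarith
      have := third4 (r1 := r1) (r2 := 0) (r3 := 0) (r4 := r2) (R := R) hθ (hI i)
        (DegLE_ev (Deg_der' hc i) (DegLE_zx C S T)) hz hz
        (DegLE_ev (Deg_der' hc i) (DegLE_zy C S T))
        (by rw [m2_evx hCS]; exact hn')
        (by norm_num [Ex_zero]; positivity) (by norm_num [Ex_zero]; positivity)
        (by rw [m2_evy hCS]; exact hn') h1 (by simpa using hR) (by simpa using hR) h2
      simpa using this) Finset.univ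
  rw [Ex_empty C S (fun x y => Φ (r1 * ev c x) (r2 * ev c y))] at h
  refine h.trans ?_
  rw [← Finset.mul_sum, ← Finset.mul_sum]
  have hs := sum_nrm_der_le hc
  have hs' : ∑ j, nrm (der j c) ≤ d * 1 := hs.trans (by gcongr)
  calc _ ≤ 16 * 192 * (64 * R ^ 3 * (9 ^ d * (d + 1) ^ 2 * θ * (d * 1))) := by
        have hsn : 0 ≤ ∑ j, nrm (der j c) := Finset.sum_nonneg fun i _ => nrm_nonneg (der i c)
        gcongr
    _ = _ := by unfold LC; ring

/-- invariance for the pair `(p(x), Dp(x,y))`. -/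
lemma inv_Dq {C S : ℝ} (hCS : C ^ 2 + S ^ 2 = 1) {Φ : ℝ → ℝ → ℝ} {K : ℝ} (hK : 0 ≤ K)
    (hK' : K ≤ 192)
    (hΦ : Tay Φ K) {d : ℕ} {c : Finset ι → ℝ} (hc : Deg d c) {θ : ℝ} (hθ : 0 < θ)
    (hI : ∀ i, nrm (der i c) ≤ θ ^ 2) (hv : vr c ≤ 1) {r1 r2 R : ℝ} (h1 : |r1| ≤ R) (h2 : |r2| ≤ R) :
    |Ex (fun w => Φ (r1 * ev c (zx C S Finset.univ w))
        (r2 * Dq c (zx C S Finset.univ w) (zy C S Finset.univ w)))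
      - Ex (fun u => Ex (fun v => Φ (r1 * ev c (pt u)) (r2 * Dq c (pt u) (pt v))))|
      ≤ LC d * R ^ 3 * θ := by
  have hR : 0 ≤ R := (abs_nonneg _).trans h1
  have h := lindeberg hCS hK hΦ (fun i => PAff_evx i c r1) (fun i => PAff_Dq i c r2)
    (fun i => 64 * R ^ 3 * (9 ^ d * (d + 1) ^ 2 * θ * nrm (der i c))) (by
      intro i T
      have hz := DegLE_const (ι := ι × Bool) 0 d
      have hn := nrm_nonneg (der i c)
      have hn' : nrm (der i c) ≤ (d + 1) * nrm (der i c) := by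
        have : (0:ℝ) ≤ d := by positivity
        nlinarith
      have hn2 : ∑ j, nrm (der j (der i c)) ≤ (d + 1) * nrm (der i c) := by
        refine (sum_nrm_der_le (Deg_der' hc i)).trans ?_
        have := vr_le_nrm (der i c)
        have : (0:ℝ) ≤ d := by positivity
        nlinarith
      have := third4 (r1 := r1) (r2 := 0) (r3 := r2) (r4 := r2) (R := R) hθ (hI i)
        (DegLE_ev (Deg_der' hc i) (DegLE_zx C S T)) hz
        (DegLE_Dq (Deg_der' hc i) (DegLE_zx C S T) (DegLE_zy C S T))
        (DegLE_ev (Deg_der' hc i) (DegLE_zx C S T))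
        (by rw [m2_evx hCS]; exact hn')
        (by norm_num [Ex_zero]; positivity)
        (by rw [m2_Dq hCS]; exact hn2)
        (by rw [m2_evx hCS]; exact hn') h1 (by simpa using hR) h2 h2
      simpa using this) Finset.univ
  rw [Ex_empty C S (fun x y => Φ (r1 * ev c x) (r2 * Dq c x y))] at h
  refine h.trans ?_
  rw [← Finset.mul_sum, ← Finset.mul_sum]
  have hs := sum_nrm_der_le hc
  have hs' : ∑ j, nrm (der j c) ≤ d * 1 := hs.trans (by gcongr)
  calc _ ≤ 16 * 192 * (64 * R ^ 3 * (9 ^ d * (d + 1) ^ 2 * θ * (d * 1))) := by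
        have hsn : 0 ≤ ∑ j, nrm (der j c) := Finset.sum_nonneg fun i _ => nrm_nonneg (der i c)
        gcongr
    _ = _ := by unfold LC; ring

end C
end NS

set_option linter.unusedSectionVars false
set_option linter.unusedVariables false

namespace NS

lemma mprod_le (s : Multiset ℂ) {q x y : ℂ → ℝ} {a : ℝ} (h0 : ∀ z ∈ s, 0 ≤ x z)
    (h : ∀ z ∈ s, x z ≤ a * y z) :
    (s.map x).prod ≤ a ^ (s.card) * (s.map y).prod := by
  induction s using Multiset.induction_on with
  | empty => simp
  | cons z s ih =>
    simp only [Multiset.map_cons, Multiset.prod_cons, Multiset.card_cons]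
    have h1 := h z (by simp)
    have h2 := ih (fun w hw => h0 w (by simp [hw])) (fun w hw => h w (by simp [hw]))
    have h3 := h0 z (by simp)
    have h4 : 0 ≤ (s.map x).prod := Multiset.prod_nonneg (by
      intro b hb
      obtain ⟨w, hw, rfl⟩ := Multiset.mem_map.1 hb
      exact h0 w (by simp [hw]))
    calc _ ≤ (a * y z) * (a ^ s.card * (s.map y).prod) := by
          apply mul_le_mul h1 h2 h4 (h3.trans h1)
      _ = _ := by ring

lemma msum_le (s : Multiset ℂ) {x : ℂ → ℂ} {a : ℝ} (h : ∀ z ∈ s, ‖x z‖ ≤ a) :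
    ‖(s.map x).sum‖ ≤ s.card * a := by
  induction s using Multiset.induction_on with
  | empty => simp
  | cons z s ih =>
    simp only [Multiset.map_cons, Multiset.sum_cons, Multiset.card_cons]
    have h2 := ih (fun w hw => h w (by simp [hw]))
    refine (norm_add_le _ _).trans ?_
    push_cast
    linarith [h z (by simp)]

/-- the complex roots of a real polynomial -/
noncomputable def croots (R : Polynomial ℝ) : Multiset ℂ := (R.map (algebraMap ℝ ℂ)).roots

lemma eval_map_norm (R : Polynomial ℝ) (t : ℝ) :
    ‖(R.map (algebraMap ℝ ℂ)).eval (t : ℂ)‖ = |R.eval t| := by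
  have : (R.map (algebraMap ℝ ℂ)).eval (t : ℂ) = ((R.eval t : ℝ) : ℂ) := by
    have := Polynomial.eval_map_algebraMap (B := ℂ) R (t : ℂ)
    rw [this]
    have h := Polynomial.aeval_algebraMap_apply ℂ t R
    simpa using h
  rw [this, Complex.norm_real, Real.norm_eq_abs]

lemma poly_growth {R : Polynomial ℝ} (hR : R ≠ 0) {D : ℕ} (hD : R.natDegree ≤ D) {t r : ℝ}
    (hr : 0 < r) (h : ∀ z ∈ croots R, r ≤ ‖(t : ℂ) - z‖) (t' : ℝ) :
    |R.eval t'| ≤ (1 + |t' - t| / r) ^ D * |R.eval t| := by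
  have hs : (R.map (algebraMap ℝ ℂ)).Splits := IsAlgClosed.splits _
  rw [← eval_map_norm, ← eval_map_norm, hs.eval_eq_prod_roots, hs.eval_eq_prod_roots]
  have hcard : (croots R).card ≤ D := by
    refine (Polynomial.card_roots' _).trans ?_
    rwa [Polynomial.natDegree_map]
  have e : ∀ x : ℂ, ‖((croots R).map (fun z => x - z)).prod‖
      = ((croots R).map (fun z => ‖x - z‖)).prod := by
    intro x
    generalize croots R = s
    induction s using Multiset.induction_on with
    | empty => simp
    | cons z s ih => simp [ih]
  rw [norm_mul, norm_mul]
  have e1 := e t'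
  have e2 := e t
  unfold croots at e1 e2
  rw [e1, e2]
  have k : ((croots R).map (fun z => ‖(t':ℂ) - z‖)).prod
      ≤ (1 + |t' - t| / r) ^ (croots R).card * ((croots R).map (fun z => ‖(t:ℂ) - z‖)).prod := by
    apply mprod_le (q := fun _ => 0)
    · intro z _; exact norm_nonneg _
    · intro z hz
      have h1 := h z hz
      have h2 : ‖(t':ℂ) - z‖ ≤ |t' - t| + ‖(t:ℂ) - z‖ := by
        have : (t':ℂ) - z = ((t' - t : ℝ) : ℂ) + ((t:ℂ) - z) := by push_cast; ring
        rw [this]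
        refine (norm_add_le _ _).trans ?_
        rw [Complex.norm_real, Real.norm_eq_abs]
      have h3 : |t' - t| ≤ |t' - t| / r * ‖(t:ℂ) - z‖ := by
        rw [div_mul_eq_mul_div, le_div_iff₀ hr]
        gcongr
      linarith
  have hp : 0 ≤ ((croots R).map (fun z => ‖(t:ℂ) - z‖)).prod := Multiset.prod_nonneg (by
      intro b hb
      obtain ⟨w, hw, rfl⟩ := Multiset.mem_map.1 hb
      exact norm_nonneg _)
  have hone : 1 ≤ 1 + |t' - t| / r := by
    have : 0 ≤ |t' - t| / r := by positivity
    linarith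
  have k2 : (1 + |t' - t| / r) ^ (croots R).card ≤ (1 + |t' - t| / r) ^ D :=
    pow_le_pow_right₀ hone hcard
  calc _ ≤ ‖(R.map (algebraMap ℝ ℂ)).leadingCoeff‖ *
        ((1 + |t' - t| / r) ^ D * ((croots R).map (fun z => ‖(t:ℂ) - z‖)).prod) := by
        refine mul_le_mul_of_nonneg_left (k.trans ?_) (norm_nonneg _)
        gcongr
    _ = _ := by unfold croots; ring

lemma poly_deriv {R : Polynomial ℝ} (hR : R ≠ 0) {D : ℕ} (hD : R.natDegree ≤ D) {t r : ℝ}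
    (hr : 0 < r) (h : ∀ z ∈ croots R, r ≤ ‖(t : ℂ) - z‖) :
    |R.derivative.eval t| ≤ D / r * |R.eval t| := by
  have hs : (R.map (algebraMap ℝ ℂ)).Splits := IsAlgClosed.splits _
  have hR' : R.map (algebraMap ℝ ℂ) ≠ 0 := by
    rwa [Polynomial.map_ne_zero_iff (algebraMap ℝ ℂ).injective]
  have hx : (R.map (algebraMap ℝ ℂ)).eval (t : ℂ) ≠ 0 := by
    intro h0
    have : (t : ℂ) ∈ croots R := by
      unfold croots
      rw [Polynomial.mem_roots hR']; exact h0
    have := h _ this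
    simp at this
    linarith
  have hcard : (croots R).card ≤ D := by
    refine (Polynomial.card_roots' _).trans ?_
    rwa [Polynomial.natDegree_map]
  rw [← eval_map_norm, ← eval_map_norm, ← Polynomial.derivative_map,
    hs.eval_derivative_eq_eval_mul_sum hx, norm_mul, mul_comm]
  gcongr
  have hcR : (0:ℝ) ≤ 1 / r := by positivity
  refine (msum_le (croots R) (a := 1 / r) ?_).trans ?_
  · intro z hz
    rw [norm_div, norm_one]
    have := h z hz
    gcongr
  · rw [mul_one_div]
    gcongr

lemma count_near (N : ℕ) (A B : ℝ) (hB : 0 ≤ B) :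
    ∑ k : Fin N, ind (|(k : ℝ) - A| < B) ≤ 2 * B + 1 := by
  classical
  set s := Finset.univ.filter (fun k : Fin N => |(k : ℝ) - A| < B) with hs
  have e : ∑ k : Fin N, ind (|(k : ℝ) - A| < B) = (s.card : ℝ) := by
    unfold ind
    simp only [hs]
    rw [Finset.sum_boole]
  rw [e]
  by_cases hne : s.Nonempty
  · set m := s.min' hne
    have hm : m ∈ s := s.min'_mem hne
    have hm' : |((m : Fin N) : ℝ) - A| < B := (Finset.mem_filter.1 hm).2
    have hsub : s.image (fun k : Fin N => (k : ℕ)) ⊆ Finset.Icc (m : ℕ) (m + ⌊2 * B⌋₊) := by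
      intro x hx
      obtain ⟨k, hk, rfl⟩ := Finset.mem_image.1 hx
      have hk' : |((k : Fin N) : ℝ) - A| < B := (Finset.mem_filter.1 hk).2
      have hle : m ≤ k := s.min'_le k hk
      have hle' : (m : ℕ) ≤ k := hle
      rw [Finset.mem_Icc]
      refine ⟨hle', ?_⟩
      have : (((k : ℕ) - (m : ℕ) : ℕ) : ℝ) ≤ 2 * B := by
        rw [Nat.cast_sub hle']
        rw [abs_lt] at hk' hm'
        linarith [hk'.2, hm'.1]
      have := Nat.le_floor this
      omega
    have hc := Finset.card_le_card hsub
    rw [Finset.card_image_of_injective _ Fin.val_injective, Nat.card_Icc] at hc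
    have hfl := Nat.floor_le (by positivity : 0 ≤ 2 * B)
    have : (s.card : ℝ) ≤ (⌊2 * B⌋₊ : ℝ) + 1 := by
      have : s.card ≤ ⌊2 * B⌋₊ + 1 := by omega
      exact_mod_cast this
    linarith
  · rw [Finset.not_nonempty_iff_eq_empty.1 hne]; simp; positivity

lemma ind_exists_le (s : Multiset ℂ) (P : ℂ → Prop) :
    ind (∃ z ∈ s, P z) ≤ (s.map (fun z => ind (P z))).sum := by
  induction s using Multiset.induction_on with
  | empty => simp [ind]
  | cons z s ih =>
    simp only [Multiset.map_cons, Multiset.sum_cons]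
    have hn : 0 ≤ (s.map (fun z => ind (P z))).sum := (ind_nonneg _).trans ih
    by_cases hz : P z
    · rw [ind_true hz]; linarith [ind_le_one (∃ w ∈ z ::ₘ s, P w)]
    · refine le_trans (ind_mono ?_) (ih.trans (by linarith [ind_nonneg (P z)]))
      rintro ⟨w, hw, hP⟩
      rcases Multiset.mem_cons.1 hw with rfl | hw
      · exact absurd hP hz
      · exact ⟨w, hw, hP⟩

/-- grid -/
noncomputable def tg (N : ℕ) (k : Fin N) : ℝ := (k : ℝ) / (2 * N)

lemma tg_nonneg (N : ℕ) (k : Fin N) : 0 ≤ tg N k := by unfold tg; positivity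
lemma tg_le (N : ℕ) (k : Fin N) : tg N k ≤ 1 / 2 := by
  unfold tg
  have h : (k : ℝ) ≤ N := by exact_mod_cast k.2.le
  have : (0:ℝ) < N := by
    have := k.pos
    exact_mod_cast this
  rw [div_le_iff₀ (by positivity)]; linarith

lemma bad_frac (s : Multiset ℂ) {D N : ℕ} (hs : s.card ≤ D) {r : ℝ} (hr : 0 < r)
    (hN : 1 ≤ N * r) :
    Ex (fun k : Fin N => ind (∃ z ∈ s, ‖((tg N k : ℝ) : ℂ) - z‖ < r)) ≤ 5 * D * r := by
  have hN0 : (0:ℝ) < N := by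
    by_contra h
    have := mul_nonpos_of_nonpos_of_nonneg (not_lt.1 h) hr.le
    linarith
  have hz : ∀ z : ℂ, ∑ k : Fin N, ind (‖((tg N k : ℝ) : ℂ) - z‖ < r) ≤ 5 * N * r := by
    intro z
    refine le_trans (Finset.sum_le_sum fun k _ => ind_mono (q := |(k : ℝ) - 2 * N * z.re|
      < 2 * N * r) ?_) ((count_near N _ _ (by positivity)).trans (by linarith))
    intro h
    have h1 := (Complex.abs_re_le_norm (((tg N k : ℝ) : ℂ) - z)).trans_lt h
    rw [Complex.sub_re, Complex.ofReal_re] at h1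
    have : (k : ℝ) - 2 * N * z.re = 2 * N * (tg N k - z.re) := by unfold tg; field_simp
    rw [this, abs_mul, abs_of_pos (by positivity : (0:ℝ) < 2 * N)]
    gcongr
  have h2 : ∑ k : Fin N, (s.map (fun z => ind (‖((tg N k : ℝ) : ℂ) - z‖ < r))).sum
      ≤ s.card * (5 * N * r) := by
    clear hs
    induction s using Multiset.induction_on with
    | empty => simp
    | cons z s ih =>
      simp only [Multiset.map_cons, Multiset.sum_cons, Finset.sum_add_distrib, Multiset.card_cons]
      push_cast
      linarith [hz z]
  unfold Ex
  rw [Fintype.card_fin, div_le_iff₀ hN0]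
  refine (Finset.sum_le_sum fun k _ => ind_exists_le s _).trans (h2.trans ?_)
  have : (s.card : ℝ) ≤ D := by exact_mod_cast hs
  calc _ ≤ (D : ℝ) * (5 * N * r) := by gcongr
    _ = _ := by ring

section D
variable {ι : Type*} [Fintype ι] [DecidableEq ι]

noncomputable def Cf (t : ℝ) : ℝ := (1 - t ^ 2) / (1 + t ^ 2)
noncomputable def Sf (t : ℝ) : ℝ := 2 * t / (1 + t ^ 2)

lemma Cf_Sf (t : ℝ) : Cf t ^ 2 + Sf t ^ 2 = 1 := by
  unfold Cf Sf
  have : 1 + t ^ 2 ≠ 0 := by positivity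
  field_simp; ring

noncomputable def xr (u v : ι → ℝ) (t : ℝ) : ι → ℝ := fun i => Cf t * u i + Sf t * v i
noncomputable def yr (u v : ι → ℝ) (t : ℝ) : ι → ℝ := fun i => - Sf t * u i + Cf t * v i

lemma ev_der_eq (j : ι) (c : Finset ι → ℝ) (x : ι → ℝ) :
    ev (der j c) x = ∑ S, if j ∈ S then c S * ∏ i ∈ S.erase j, x i else 0 := by
  unfold ev
  have : ∀ S : Finset ι, der j c S * ∏ i ∈ S, x i
      = if j ∉ S then c (insert j S) * ∏ i ∈ S, x i else 0 := by
    intro S; unfold der; by_cases h : j ∈ S <;> simp [h]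
  simp only [this]
  rw [← Finset.sum_filter, ← Finset.sum_filter]
  refine Finset.sum_nbij' (fun S => insert j S) (fun S => S.erase j) ?_ ?_ ?_ ?_ ?_
  · intro S hS; simp
  · intro S hS; simp
  · intro S hS
    simp only [Finset.mem_filter, Finset.mem_univ, true_and] at hS
    exact Finset.erase_insert hS
  · intro S hS
    simp only [Finset.mem_filter, Finset.mem_univ, true_and] at hS
    exact Finset.insert_erase hS
  · intro S hS
    simp only [Finset.mem_filter, Finset.mem_univ, true_and] at hS
    rw [Finset.erase_insert hS]

lemma hasDeriv_ev (c : Finset ι → ℝ) {x : ℝ → ι → ℝ} {x' : ι → ℝ} {t : ℝ}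
    (hx : ∀ i, HasDerivAt (fun s => x s i) (x' i) t) :
    HasDerivAt (fun s => ev c (x s)) (Dq c (x t) x') t := by
  unfold ev
  have h : ∀ S ∈ (Finset.univ : Finset (Finset ι)), HasDerivAt (fun s => c S * ∏ i ∈ S, x s i)
      (c S * ∑ i ∈ S, (∏ j ∈ S.erase i, x t j) • x' i) t := by
    intro S _
    exact (HasDerivAt.fun_finsetProd (fun i _ => hx i)).const_mul _
  have h2 := HasDerivAt.fun_sum h
  refine h2.congr_deriv ?_
  symm
  unfold Dq
  simp only [ev_der_eq, Finset.mul_sum]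
  rw [Finset.sum_comm]
  refine Finset.sum_congr rfl fun S _ => ?_
  simp only [mul_ite, mul_zero]
  rw [← Finset.sum_filter]
  simp only [Finset.filter_univ_mem]
  refine Finset.sum_congr rfl fun j _ => ?_
  simp only [smul_eq_mul]; ring

lemma hasDeriv_xr (u v : ι → ℝ) (t : ℝ) (i : ι) :
    HasDerivAt (fun s => xr u v s i) (2 / (1 + t ^ 2) * yr u v t i) t := by
  have hp : 1 + t ^ 2 ≠ 0 := by positivity
  have hq : HasDerivAt (fun s : ℝ => 1 + s ^ 2) (2 * t) t := by
    simpa using (hasDerivAt_pow 2 t).const_add 1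
  have hC : HasDerivAt Cf (- (2 / (1 + t ^ 2) * Sf t)) t := by
    have h1 : HasDerivAt (fun s : ℝ => 1 - s ^ 2) (-(2 * t)) t := by
      simpa using (hasDerivAt_pow 2 t).const_sub 1
    show HasDerivAt (fun s : ℝ => (1 - s ^ 2) / (1 + s ^ 2)) _ t
    refine (h1.fun_div hq hp).congr_deriv ?_
    unfold Sf; field_simp; ring
  have hS : HasDerivAt Sf (2 / (1 + t ^ 2) * Cf t) t := by
    have h1 : HasDerivAt (fun s : ℝ => 2 * s) 2 t := by
      simpa using (hasDerivAt_id t).const_mul 2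
    show HasDerivAt (fun s : ℝ => (2 * s) / (1 + s ^ 2)) _ t
    refine (h1.fun_div hq hp).congr_deriv ?_
    unfold Cf; field_simp; ring
  refine ((hC.mul_const (u i)).fun_add (hS.mul_const (v i))).congr_deriv ?_
  unfold yr; ring

lemma Dq_smul (c : Finset ι → ℝ) (x y : ι → ℝ) (a : ℝ) :
    Dq c x (fun i => a * y i) = a * Dq c x y := by
  unfold Dq
  rw [Finset.mul_sum]
  exact Finset.sum_congr rfl fun j _ => by ring

lemma hasDeriv_ev_xr (c : Finset ι → ℝ) (u v : ι → ℝ) (t : ℝ) :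
    HasDerivAt (fun s => ev c (xr u v s)) (2 / (1 + t ^ 2) * Dq c (xr u v t) (yr u v t)) t := by
  rw [← Dq_smul]
  exact hasDeriv_ev c (hasDeriv_xr u v t)

/-- the polynomial `(1+t²)^d p(x_t)` -/
lemma exists_poly {d : ℕ} {c : Finset ι → ℝ} (hc : Deg d c) (u v : ι → ℝ) :
    ∃ R : Polynomial ℝ, R.natDegree ≤ 2 * d ∧
      ∀ t, R.eval t = (1 + t ^ 2) ^ d * ev c (xr u v t) := by
  classical
  open Polynomial in
  refine ⟨∑ S ∈ Finset.univ.filter (fun S : Finset ι => S.card ≤ d), C (c S) *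
    ((∏ i ∈ S, ((1 - X ^ 2) * C (u i) + 2 * X * C (v i))) * (1 + X ^ 2) ^ (d - S.card)), ?_, ?_⟩
  · apply natDegree_sum_le_of_forall_le
    intro S hS
    have hS' := (Finset.mem_filter.1 hS).2
    refine (natDegree_C_mul_le _ _).trans ?_
    refine natDegree_mul_le.trans ?_
    have h1 : (∏ i ∈ S, ((1 - X ^ 2) * C (u i) + 2 * X * C (v i))).natDegree ≤ S.card * 2 := by
      refine (natDegree_prod_le _ _).trans ?_
      refine Finset.sum_le_card_nsmul _ _ 2 fun i _ => ?_
      compute_degree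
    have h2 : ((1 + X ^ 2 : Polynomial ℝ) ^ (d - S.card)).natDegree ≤ (d - S.card) * 2 := by
      refine natDegree_pow_le.trans ?_
      gcongr
      compute_degree
    omega
  · intro t
    rw [eval_finsetSum]
    unfold ev
    rw [Finset.mul_sum, Finset.sum_filter]
    refine Finset.sum_congr rfl fun S _ => ?_
    split_ifs with hS
    · rw [eval_mul, eval_C, eval_mul, eval_prod]
      have hp : 1 + t ^ 2 ≠ 0 := by positivity
      have e : ∀ i, ((1 - X ^ 2) * C (u i) + 2 * X * C (v i)).eval t
          = (1 + t ^ 2) * xr u v t i := by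
        intro i
        simp only [eval_add, eval_mul, eval_sub, eval_one, eval_pow, eval_X, eval_C, eval_ofNat]
        unfold xr Cf Sf
        field_simp
      simp only [e]
      rw [Finset.prod_mul_distrib, Finset.prod_const]
      simp only [eval_pow, eval_add, eval_one, eval_X]
      have : (1 + t ^ 2) ^ d = (1 + t ^ 2) ^ S.card * (1 + t ^ 2) ^ (d - S.card) := by
        rw [← pow_add]; congr 1; omega
      rw [this]; ring
    · rw [hc S (by omega)]; ring

lemma yr_eq {u v : ι → ℝ} {t : ℝ} (ht : t ≠ 1) :
    yr u v t = xr u v ((1 + t) / (1 - t)) := by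
  have h1 : 1 - t ≠ 0 := by intro h; apply ht; linarith
  have hp : 1 + t ^ 2 ≠ 0 := by positivity
  have hq : (1 - t) ^ 2 + (1 + t) ^ 2 ≠ 0 := by positivity
  have eC : Cf ((1 + t) / (1 - t)) = - Sf t := by
    unfold Cf Sf
    rw [div_pow]
    field_simp
    ring
  have eS : Sf ((1 + t) / (1 - t)) = Cf t := by
    unfold Cf Sf
    rw [div_pow]
    field_simp
    ring
  funext i
  unfold xr yr
  rw [eC, eS]

/-- goodness of an angle -/
def Good (d : ℕ) (c : Finset ι → ℝ) (u v : ι → ℝ) (r t : ℝ) : Prop :=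
  |ev c (yr u v t)| ≤ (32 / r ^ 2) ^ d * |ev c (xr u v t)| ∧
    |Dq c (xr u v t) (yr u v t)| ≤ 3 * d / r * |ev c (xr u v t)|

lemma good_frac {d : ℕ} {c : Finset ι → ℝ} (hc : Deg d c) (u v : ι → ℝ) {r : ℝ} (hr : 0 < r)
    (hr1 : r ≤ 1) {N : ℕ} (hN : 1 ≤ N * r) :
    Ex (fun k : Fin N => ind (¬ Good d c u v r (tg N k))) ≤ 10 * d * r := by
  obtain ⟨R, hdeg, hR⟩ := exists_poly hc u v
  by_cases hR0 : R = 0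
  · have hz : ∀ t, ev c (xr u v t) = 0 := by
      intro t
      have := hR t
      rw [hR0, Polynomial.eval_zero] at this
      have hp : (1 + t ^ 2) ^ d ≠ 0 := by positivity
      exact (mul_eq_zero.1 this.symm).resolve_left hp
    have hg : ∀ k : Fin N, Good d c u v r (tg N k) := by
      intro k
      have ht := tg_le N k
      constructor
      · rw [yr_eq (by linarith), hz, hz]; simp
      · have h1 := hasDeriv_ev_xr c u v (tg N k)
        simp only [hz] at h1
        have h2 := h1.unique (hasDerivAt_const (tg N k) (0:ℝ))
        have hp : 2 / (1 + tg N k ^ 2) ≠ 0 := by positivity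
        rw [(mul_eq_zero.1 h2).resolve_left hp, hz]; simp
    have : ∀ k : Fin N, ind (¬ Good d c u v r (tg N k)) = 0 := fun k => ind_false (by
      simpa using hg k)
    simp only [this, Ex_zero]
    positivity
  have hcard : (croots R).card ≤ 2 * d := by
    refine (Polynomial.card_roots' _).trans ?_
    rwa [Polynomial.natDegree_map]
  refine (Ex_mono fun k => ind_mono ?_).trans ((bad_frac (croots R) hcard hr hN).trans
    (by push_cast; linarith))
  intro hbad
  by_contra hcon
  push Not at hcon
  apply hbad
  set t := tg N k
  have ht0 : 0 ≤ t := tg_nonneg N k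
  have ht1 : t ≤ 1 / 2 := tg_le N k
  have hg := poly_growth hR0 hdeg hr hcon ((1 + t) / (1 - t))
  have hd := poly_deriv hR0 hdeg hr hcon
  have hp1 : 1 ≤ 1 + t ^ 2 := by nlinarith
  have hp2 : 1 + t ^ 2 ≤ 5 / 4 := by nlinarith
  have hp0 : 0 < 1 + t ^ 2 := by linarith
  constructor
  · rw [yr_eq (by linarith)]
    set t' := (1 + t) / (1 - t)
    have e1 : |ev c (xr u v t')| ≤ |R.eval t'| := by
      rw [hR, abs_mul]
      have : 1 ≤ |(1 + t' ^ 2) ^ d| := by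
        rw [abs_of_nonneg (by positivity)]
        exact one_le_pow₀ (by nlinarith [sq_nonneg t'])
      nlinarith [abs_nonneg (ev c (xr u v t'))]
    have e2 : |t' - t| ≤ 3 := by
      have : t' - t = (1 + t ^ 2) / (1 - t) := by
        have : 1 - t ≠ 0 := by linarith
        simp only [t']; field_simp; ring
      rw [this, abs_of_nonneg (div_nonneg hp0.le (by linarith)), div_le_iff₀ (by linarith)]
      linarith
    have e3 : 1 + |t' - t| / r ≤ 4 / r := by
      rw [le_div_iff₀ hr, add_mul, div_mul_cancel₀ _ hr.ne']; linarith
    have e4 : |R.eval t| ≤ 2 ^ d * |ev c (xr u v t)| := by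
      rw [hR, abs_mul, abs_of_nonneg (by positivity : 0 ≤ (1 + t ^ 2) ^ d)]
      gcongr
      linarith
    calc _ ≤ _ := e1
      _ ≤ _ := hg
      _ ≤ (4 / r) ^ (2 * d) * (2 ^ d * |ev c (xr u v t)|) := by gcongr
      _ = _ := by
        rw [pow_mul, ← mul_assoc, ← mul_pow]
        congr 2
        field_simp; norm_num
  · have h1 := hasDeriv_ev_xr c u v t
    have hq : HasDerivAt (fun s : ℝ => 1 + s ^ 2) (2 * t) t := by
      simpa using (hasDerivAt_pow 2 t).const_add 1
    have h2 := (hq.fun_pow d).mul h1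
    have h3 := R.hasDerivAt t
    have e : (fun s => R.eval s) = (fun s : ℝ => (1 + s ^ 2) ^ d) * fun s => ev c (xr u v s) := by
      funext s; exact hR s
    rw [e] at h3
    have h4 := h3.unique h2
    rw [h4, hR, abs_mul ((1 + t ^ 2) ^ d), abs_of_nonneg (by positivity : 0 ≤ (1 + t ^ 2) ^ d)] at hd
    set E := ev c (xr u v t)
    set Q := Dq c (xr u v t) (yr u v t)
    set q := 1 + t ^ 2 with hqd
    have hqd0 : 0 < q ^ d := by positivity
    -- multiply by q / q^d
    have e5 : q * ((d : ℝ) * q ^ (d - 1) * (2 * t) * E + q ^ d * (2 / q * Q))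
        = q ^ d * (2 * d * t * E + 2 * Q) := by
      have : (d : ℝ) * q ^ (d - 1) * q = d * q ^ d := by
        cases d with
        | zero => simp
        | succ e => rw [Nat.add_sub_cancel, pow_succ]; ring
      have hq' : q * (2 / q) = 2 := by field_simp
      linear_combination (2 * t * E) * this + (q ^ d * Q) * hq'
    have e6 : q ^ d * |2 * d * t * E + 2 * Q| ≤ q ^ d * (q * (2 * d / r * |E|)) := by
      have := mul_le_mul_of_nonneg_left hd hp0.le
      rw [← abs_of_pos hp0, ← abs_mul, abs_of_pos hp0, e5, abs_mul, abs_of_pos hqd0] at this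
      push_cast at this
      calc _ ≤ _ := this
        _ = _ := by ring
    have e7 := le_of_mul_le_mul_left e6 hqd0
    have e8 : 2 * |Q| ≤ |2 * d * t * E + 2 * Q| + 2 * d * t * |E| := by
      have h := abs_sub (2 * d * t * E + 2 * Q) (2 * d * t * E)
      rw [add_sub_cancel_left, abs_mul, abs_two, abs_mul (2 * d * t) E,
        abs_of_nonneg (by positivity : 0 ≤ 2 * d * t)] at h
      exact h
    have e9 : 2 * (d:ℝ) * t * |E| ≤ 1 * (d / r * |E|) := by
      have : 2 * (d:ℝ) * t ≤ d / r := by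
        rw [le_div_iff₀ hr]
        have : (0:ℝ) ≤ d := by positivity
        have htr : t * r ≤ 1 / 2 * 1 := by gcongr
        nlinarith
      rw [one_mul]
      gcongr
    have e10 : q * (2 * d / r * |E|) ≤ 5 / 4 * (2 * d / r * |E|) := by gcongr
    have e11 : 2 * (d:ℝ) / r * |E| = 2 * (d / r * |E|) := by ring
    have e12 : 3 * (d:ℝ) / r * |E| = 3 * (d / r * |E|) := by ring
    rw [e11] at e10 e7
    rw [e12]
    have : 0 ≤ (d:ℝ) / r * |E| := by positivity
    linarith

end D
end NS

set_option linter.unusedSectionVars false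
set_option linter.unusedVariables false

namespace NS
section E
variable {ι : Type*} [Fintype ι] [DecidableEq ι]

lemma zx_univ (t : ℝ) (w : ι × Bool → Bool) :
    zx (Cf t) (Sf t) Finset.univ w
      = xr (pt (fun j => w (j, false))) (pt (fun j => w (j, true))) t := by
  funext j; simp [zx, xr, pt]

lemma zy_univ (t : ℝ) (w : ι × Bool → Bool) :
    zy (Cf t) (Sf t) Finset.univ w
      = yr (pt (fun j => w (j, false))) (pt (fun j => w (j, true))) t := by
  funext j; simp [zy, yr, pt]

lemma F1_nonneg (a b : ℝ) : 0 ≤ F1 a b := by unfold F1; positivity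
lemma F1_le (a b : ℝ) : F1 a b ≤ b ^ 2 / (1 + a ^ 2 + b ^ 2) := by
  unfold F1
  apply div_le_div_of_nonneg_left (by positivity) (by positivity)
  nlinarith [sq_nonneg a, sq_nonneg b, mul_nonneg (sq_nonneg a) (sq_nonneg b), sq_nonneg (a^2)]
lemma frac_le_one (a b : ℝ) : b ^ 2 / (1 + a ^ 2 + b ^ 2) ≤ 1 := by
  rw [div_le_one (by positivity)]; nlinarith [sq_nonneg a]

lemma pz_p {d : ℕ} {c : Finset ι → ℝ} (hc : Deg d c) (hv : 1 ≤ vr c) :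
    1 / (4 * 9 ^ d) ≤ Ex (fun v : ι → Bool => ind (1 / 2 ≤ ev c (pt v) ^ 2)) := by
  have h4 := NS.hc hc
  refine paley_zygmund (f := fun v : ι → Bool => ev c (pt v) ^ 2) (fun v => sq_nonneg _)
    (by positivity) one_pos ?_ ?_
  · rw [parseval]; exact hv.trans (vr_le_nrm c)
  · refine le_trans (le_of_eq ?_) h4
    congr 1; funext v; ring

lemma pz_q (c : Finset ι → ℝ) (x : ι → ℝ) :
    1 / 36 ≤ Ex (fun v : ι → Bool => ind ((∑ j, ev (der j c) x ^ 2) / 2 ≤ Dq c x (pt v) ^ 2)) := by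
  set G := ∑ j, ev (der j c) x ^ 2 with hG
  have hG0 : 0 ≤ G := Finset.sum_nonneg fun j _ => sq_nonneg _
  have e2 : Ex (fun v : ι → Bool => Dq c x (pt v) ^ 2) = G :=
    Ex_lin_sq (fun j => ev (der j c) x)
  rcases hG0.lt_or_eq with h | h
  · have hdeg : (fun v : ι → Bool => Dq c x (pt v)) ∈ DegLE ι 1 := by
      unfold Dq
      apply DegLE_sum
      intro j _
      have : (fun v : ι → Bool => pt v j * ev (der j c) x)
          = ev (der j c) x • fun v : ι → Bool => sg (v j) := by
        funext v; simp [pt, mul_comm]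
      rw [this]
      exact Submodule.smul_mem _ _ (DegLE_coord j)
    have h4 := hcF hdeg
    have := paley_zygmund (f := fun v : ι → Bool => Dq c x (pt v) ^ 2) (fun v => sq_nonneg _)
      (K := 9) (by positivity) h e2.ge ?_
    · norm_num at this ⊢; exact this
    · refine le_trans (le_of_eq ?_) (h4.trans (by norm_num))
      congr 1; funext v; ring
  · rw [← h]
    have : ∀ v : ι → Bool, ind ((0:ℝ) / 2 ≤ Dq c x (pt v) ^ 2) = 1 := fun v =>
      ind_true (by rw [zero_div]; positivity)
    simp only [this]
    rw [Ex_const]; norm_num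

/-- constant for small balls -/
noncomputable def SBC (d : ℕ) : ℝ := 40 * 9 ^ d * (10 * d + 1024 ^ d + LC d)

lemma LC_nonneg (d : ℕ) : 0 ≤ LC d := by unfold LC; positivity

lemma exists_N {r : ℝ} (hr : 0 < r) : ∃ N : ℕ, 0 < N ∧ 1 ≤ N * r := by
  refine ⟨⌈1 / r⌉₊ + 1, by omega, ?_⟩
  have := Nat.le_ceil (1 / r)
  rw [div_le_iff₀ hr] at this
  push_cast; nlinarith

lemma small_ball {d : ℕ} {c : Finset ι → ℝ} (hc : Deg d c) (hv : vr c = 1) {r θ : ℝ} (hr : 0 < r)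
    (hr1 : r ≤ 1) (hθ : 0 < θ) (hθr : θ ≤ r ^ (6 * d + 7)) (hI : ∀ i, nrm (der i c) ≤ θ ^ 2) :
    Ex (fun u : ι → Bool => ind (ev c (pt u) ^ 2 ≤ (r ^ (2 * d + 1)) ^ 2)) ≤ SBC d * r := by
  obtain ⟨N, hN0, hN⟩ := exists_N hr
  have : Nonempty (Fin N) := ⟨⟨0, hN0⟩⟩
  set ρ := r ^ (2 * d + 1) with hρ
  have hρ0 : 0 < ρ := by positivity
  have hρ1 : ρ ≤ 1 := pow_le_one₀ hr.le hr1
  have hR1 : 1 ≤ 1 / ρ := by rw [le_div_iff₀ hρ0]; linarith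
  have hinv : ∀ k : Fin N, Ex (fun u : ι → Bool => Ex (fun v : ι → Bool =>
      F1 (1 / ρ * ev c (pt u)) (1 * ev c (pt v))))
      ≤ Ex (fun w : ι × Bool → Bool => F1 (1 / ρ * ev c (xr (pt (fun j => w (j, false))) (pt (fun j => w (j, true))) (tg N k)))
        (1 * ev c (yr (pt (fun j => w (j, false))) (pt (fun j => w (j, true))) (tg N k))))
        + LC d * r := by
    intro k
    have h := inv_xy (Cf_Sf (tg N k)) (by norm_num) le_rfl tay_F1 hc hθ hI hv.le
      (r1 := 1 / ρ) (r2 := 1) (R := 1 / ρ) (by rw [abs_of_nonneg (by positivity)])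
      (by rw [abs_one]; exact hR1)
    simp only [zx_univ, zy_univ] at h
    have h1 := (abs_le.1 h).1
    have h2 : LC d * (1 / ρ) ^ 3 * θ ≤ LC d * r := by
      have : (1 / ρ) ^ 3 * θ ≤ r := by
        rw [one_div, inv_pow, inv_mul_le_iff₀ (by positivity)]
        refine hθr.trans ?_
        have : ρ ^ 3 * r = r ^ (6 * d + 4) := by rw [hρ, ← pow_mul, ← pow_succ]; congr 1; ring
        rw [this]
        exact pow_le_pow_of_le_one hr.le hr1 (by omega)
      have := mul_le_mul_of_nonneg_left this (LC_nonneg d)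
      rw [← mul_assoc] at this
      exact this
    linarith
  have h1 : Ex (fun u : ι → Bool => Ex (fun v : ι → Bool =>
      F1 (1 / ρ * ev c (pt u)) (1 * ev c (pt v)))) ≤ (10 * d + 1024 ^ d + LC d) * r := by
    have := Ex_mono hinv
    rw [Ex_const, Ex_add, Ex_const, Ex_comm (Ω := Fin N) (Ω' := ι × Bool → Bool)] at this
    refine this.trans ?_
    have hw : ∀ w : ι × Bool → Bool, Ex (fun k : Fin N =>
        F1 (1 / ρ * ev c (xr (pt (fun j => w (j, false))) (pt (fun j => w (j, true))) (tg N k)))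
        (1 * ev c (yr (pt (fun j => w (j, false))) (pt (fun j => w (j, true))) (tg N k))))
        ≤ 10 * d * r + 1024 ^ d * r := by
      intro w
      have hg := good_frac hc (pt (fun j => w (j, false))) (pt (fun j => w (j, true))) hr hr1 hN
      have : ∀ k : Fin N, F1 (1 / ρ * ev c (xr (pt (fun j => w (j, false))) (pt (fun j => w (j, true))) (tg N k)))
        (1 * ev c (yr (pt (fun j => w (j, false))) (pt (fun j => w (j, true))) (tg N k)))
        ≤ ind (¬ Good d c (pt (fun j => w (j, false))) (pt (fun j => w (j, true))) r (tg N k)) + 1024 ^ d * r := by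
        intro k
        by_cases hk : Good d c (pt (fun j => w (j, false))) (pt (fun j => w (j, true))) r (tg N k)
        · rw [ind_false (by simpa using hk), zero_add]
          have h1 := hk.1
          set X := ev c (xr (pt (fun j => w (j, false))) (pt (fun j => w (j, true))) (tg N k))
          set Y := ev c (yr (pt (fun j => w (j, false))) (pt (fun j => w (j, true))) (tg N k))
          refine (F1_le _ _).trans ?_
          rw [one_mul, div_le_iff₀ (by positivity)]
          have hY : Y ^ 2 ≤ (32 / r ^ 2) ^ (2 * d) * X ^ 2 := by
            rw [← sq_abs Y, ← sq_abs X, mul_comm 2 d, pow_mul _ d 2, ← mul_pow]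
            gcongr
          have e : (32 / r ^ 2) ^ (2 * d) * ρ ^ 2 = 1024 ^ d * r ^ 2 := by
            rw [hρ, div_pow, pow_mul 32, ← pow_mul, ← pow_mul, div_mul_eq_mul_div,
              div_eq_iff (by positivity)]
            have h32 : (1024:ℝ) ^ d = 32 ^ (d * 2) := by rw [mul_comm, pow_mul]; norm_num
            rw [h32]
            ring
          have hX : X ^ 2 = ρ ^ 2 * (1 / ρ * X) ^ 2 := by field_simp
          have hr2 : r ^ 2 ≤ r := by nlinarith
          calc Y ^ 2 ≤ _ := hY
            _ = 1024 ^ d * r ^ 2 * (1 / ρ * X) ^ 2 := by rw [← e, hX]; ring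
            _ ≤ 1024 ^ d * r * (1 + (1 / ρ * X) ^ 2 + Y ^ 2) := by
              gcongr
              nlinarith [sq_nonneg Y]
        · rw [ind_true hk]
          refine ((F1_le _ _).trans (frac_le_one _ _)).trans ?_
          have : 0 ≤ 1024 ^ d * r := by positivity
          linarith
      refine (Ex_mono this).trans ?_
      rw [Ex_add, Ex_const]
      linarith
    have := Ex_le hw
    linarith
  have h2 : Ex (fun u : ι → Bool => ind (ev c (pt u) ^ 2 ≤ ρ ^ 2) * (1 / (4 * 9 ^ d) * (1 / 10)))
      ≤ Ex (fun u : ι → Bool => Ex (fun v : ι → Bool =>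
      F1 (1 / ρ * ev c (pt u)) (1 * ev c (pt v)))) := by
    apply Ex_mono
    intro u
    by_cases hu : ev c (pt u) ^ 2 ≤ ρ ^ 2
    · rw [ind_true hu, one_mul]
      have := pz_p hc hv.ge
      refine (mul_le_mul_of_nonneg_right this (by norm_num)).trans ?_
      rw [← Ex_mul_right]
      apply Ex_mono
      intro v
      by_cases hv : 1 / 2 ≤ ev c (pt v) ^ 2
      · rw [ind_true hv]
        unfold F1
        have ha : (1 / ρ * ev c (pt u)) ^ 2 ≤ 1 := by
          rw [mul_pow, one_div, inv_pow, inv_mul_le_iff₀ (by positivity), mul_one]; exact hu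
        set A := (1 / ρ * ev c (pt u)) ^ 2
        have hA : 0 ≤ A := sq_nonneg _
        rw [one_mul, one_mul, le_div_iff₀ (by positivity)]
        set B := ev c (pt v) ^ 2
        have : (1 + A) * (1 + A + B) ≤ 2 * (2 + B) := by
          apply mul_le_mul <;> linarith
        linarith
      · rw [ind_false hv, zero_mul]; exact F1_nonneg _ _
    · rw [ind_false hu, zero_mul]; exact Ex_nonneg fun v => F1_nonneg _ _
  rw [Ex_mul_right] at h2
  have h3 := h2.trans h1
  rw [one_div_mul_one_div, mul_one_div, div_le_iff₀ (by positivity)] at h3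
  refine h3.trans (le_of_eq ?_)
  unfold SBC; ring

/-- constant for anticoncentration -/
noncomputable def ACC (d : ℕ) : ℝ := 72 * (SBC d + 1 + 10 * d + 9 * d ^ 2 + 2 * LC d)

lemma ACC_pos (d : ℕ) : 0 < ACC d := by
  have := LC_nonneg d
  unfold ACC SBC; positivity

/-- auxiliary fraction -/
noncomputable def b2f (a b : ℝ) : ℝ := b ^ 2 / (1 + a ^ 2 + b ^ 2)

lemma F2_le (a b : ℝ) : F2 a b ≤ F3 a 0 + b ^ 2 / (1 + a ^ 2 + b ^ 2) := by
  unfold F2 F3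
  rw [add_div]
  refine add_le_add ?_ le_rfl
  refine one_div_le_one_div_of_le (by positivity) ?_
  nlinarith [sq_nonneg b]

set_option maxHeartbeats 1000000 in
lemma ac_one {d : ℕ} {c : Finset ι → ℝ} (hc : Deg d c) (hv : vr c = 1) {r θ : ℝ} (hr : 0 < r)
    (hr1 : r ≤ 1) (hθ : 0 < θ) (hθr : θ ≤ r ^ (6 * d + 7)) (hI : ∀ i, nrm (der i c) ≤ θ ^ 2) :
    Ex (fun u : ι → Bool => ind (ev c (pt u) ^ 2 ≤ r ^ 4 * ((∑ j, ev (der j c) (pt u) ^ 2) / 2)))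
      ≤ ACC d * r := by
  obtain ⟨N, hN0, hN⟩ := exists_N hr
  have : Nonempty (Fin N) := ⟨⟨0, hN0⟩⟩
  have hsb := small_ball hc hv hr hr1 hθ hθr hI
  set ρ := r ^ (2 * d + 1) with hρ
  have hρ0 : 0 < ρ := by positivity
  set σ := r ^ (2 * d + 2) with hσ
  have hσρ : σ = ρ * r := by rw [hσ, hρ]; ring
  have hσ0 : 0 < σ := by positivity
  have hσ1 : σ ≤ 1 := pow_le_one₀ hr.le hr1
  have hR1 : 1 ≤ 1 / σ := by rw [le_div_iff₀ hσ0]; linarith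
  have hr2 : r ^ 2 ≤ r := by nlinarith
  have herr : LC d * (1 / σ) ^ 3 * θ ≤ LC d * r := by
    have : (1 / σ) ^ 3 * θ ≤ r := by
      rw [one_div, inv_pow, inv_mul_le_iff₀ (by positivity)]
      refine hθr.trans (le_of_eq ?_)
      rw [hσ, ← pow_mul, ← pow_succ]; congr 1; ring
    have := mul_le_mul_of_nonneg_left this (LC_nonneg d)
    rw [← mul_assoc] at this
    exact this
  have h3 : Ex (fun u : ι → Bool => F3 (1 / σ * ev c (pt u)) 0) ≤ SBC d * r + r := by
    have : ∀ u : ι → Bool, F3 (1 / σ * ev c (pt u)) 0 ≤ ind (ev c (pt u) ^ 2 ≤ ρ ^ 2) + r := by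
      intro u
      unfold F3
      by_cases hu : ev c (pt u) ^ 2 ≤ ρ ^ 2
      · rw [ind_true hu, div_le_iff₀ (by positivity)]
        nlinarith [sq_nonneg (1 / σ * ev c (pt u)), mul_nonneg hr.le (sq_nonneg (1 / σ * ev c (pt u)))]
      · rw [ind_false hu, zero_add, div_le_iff₀ (by positivity)]
        have hlt := not_le.1 hu
        have : 1 ≤ r ^ 2 * (1 / σ * ev c (pt u)) ^ 2 := by
          have e : r ^ 2 * (1 / σ * ev c (pt u)) ^ 2 = ev c (pt u) ^ 2 / ρ ^ 2 := by
            rw [hσρ]; field_simp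
          rw [e, le_div_iff₀ (by positivity)]; linarith
        have h5 := mul_le_mul_of_nonneg_right hr2 (sq_nonneg (1 / σ * ev c (pt u)))
        linarith
    refine (Ex_mono this).trans ?_
    rw [Ex_add, Ex_const]
    linarith
  have hinv : ∀ k : Fin N, Ex (fun u : ι → Bool => Ex (fun v : ι → Bool =>
      F2 (1 / σ * ev c (pt u)) (r ^ 2 / σ * Dq c (pt u) (pt v))))
      ≤ Ex (fun w : ι × Bool → Bool => b2f (1 / σ * ev c (xr (pt (fun j => w (j, false))) (pt (fun j => w (j, true))) (tg N k)))
        (r ^ 2 / σ * Dq c (xr (pt (fun j => w (j, false))) (pt (fun j => w (j, true))) (tg N k)) (yr (pt (fun j => w (j, false))) (pt (fun j => w (j, true))) (tg N k))))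
        + (SBC d * r + r + 2 * (LC d * r)) := by
    intro k
    have h := inv_Dq (Cf_Sf (tg N k)) (by norm_num) (by norm_num) tay_F2 hc hθ hI hv.le
      (r1 := 1 / σ) (r2 := r ^ 2 / σ) (R := 1 / σ) (by rw [abs_of_nonneg (by positivity)])
      (by rw [abs_of_nonneg (by positivity)]; gcongr; linarith)
    have h' := inv_Dq (Cf_Sf (tg N k)) (by norm_num) (by norm_num) tay_F3 hc hθ hI hv.le
      (r1 := 1 / σ) (r2 := 0) (R := 1 / σ) (by rw [abs_of_nonneg (by positivity)])
      (by rw [abs_zero]; positivity)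
    simp only [zx_univ, zy_univ, zero_mul, Ex_const] at h h'
    have h1 := (abs_le.1 h).1
    have h1' := (abs_le.1 h').2
    have h6 := Ex_mono (fun w : ι × Bool → Bool => F2_le (1 / σ * ev c (xr (pt (fun j => w (j, false))) (pt (fun j => w (j, true))) (tg N k)))
        (r ^ 2 / σ * Dq c (xr (pt (fun j => w (j, false))) (pt (fun j => w (j, true))) (tg N k)) (yr (pt (fun j => w (j, false))) (pt (fun j => w (j, true))) (tg N k))))
    rw [Ex_add] at h6
    unfold b2f
    linarith
  have h1 : Ex (fun u : ι → Bool => Ex (fun v : ι → Bool =>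
      F2 (1 / σ * ev c (pt u)) (r ^ 2 / σ * Dq c (pt u) (pt v))))
        ≤ (SBC d + 1 + 10 * d + 9 * d ^ 2 + 2 * LC d) * r := by
    have := Ex_mono hinv
    rw [Ex_const, Ex_add, Ex_const, Ex_comm (Ω := Fin N) (Ω' := ι × Bool → Bool)] at this
    refine this.trans ?_
    have hw : ∀ w : ι × Bool → Bool, Ex (fun k : Fin N =>
        b2f (1 / σ * ev c (xr (pt (fun j => w (j, false))) (pt (fun j => w (j, true))) (tg N k)))
        (r ^ 2 / σ * Dq c (xr (pt (fun j => w (j, false))) (pt (fun j => w (j, true))) (tg N k)) (yr (pt (fun j => w (j, false))) (pt (fun j => w (j, true))) (tg N k))))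
        ≤ 10 * d * r + 9 * d ^ 2 * r := by
      intro w
      have hg := good_frac hc (pt (fun j => w (j, false))) (pt (fun j => w (j, true))) hr hr1 hN
      have : ∀ k : Fin N, b2f (1 / σ * ev c (xr (pt (fun j => w (j, false))) (pt (fun j => w (j, true))) (tg N k)))
        (r ^ 2 / σ * Dq c (xr (pt (fun j => w (j, false))) (pt (fun j => w (j, true))) (tg N k)) (yr (pt (fun j => w (j, false))) (pt (fun j => w (j, true))) (tg N k)))
        ≤ ind (¬ Good d c (pt (fun j => w (j, false))) (pt (fun j => w (j, true))) r (tg N k)) + 9 * d ^ 2 * r := by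
        intro k
        unfold b2f
        by_cases hk : Good d c (pt (fun j => w (j, false))) (pt (fun j => w (j, true))) r (tg N k)
        · rw [ind_false (by simpa using hk), zero_add]
          have h1 := hk.2
          set X := ev c (xr (pt (fun j => w (j, false))) (pt (fun j => w (j, true))) (tg N k))
          set Y := Dq c (xr (pt (fun j => w (j, false))) (pt (fun j => w (j, true))) (tg N k)) (yr (pt (fun j => w (j, false))) (pt (fun j => w (j, true))) (tg N k))
          rw [div_le_iff₀ (by positivity)]
          have hY : Y ^ 2 ≤ (3 * d / r) ^ 2 * X ^ 2 := by
            rw [← sq_abs Y, ← sq_abs X, ← mul_pow]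
            gcongr
          calc (r ^ 2 / σ * Y) ^ 2 = (r ^ 2 / σ) ^ 2 * Y ^ 2 := by ring
            _ ≤ (r ^ 2 / σ) ^ 2 * ((3 * d / r) ^ 2 * X ^ 2) := by gcongr
            _ = 9 * d ^ 2 * r ^ 2 * (1 / σ * X) ^ 2 := by field_simp; ring
            _ ≤ 9 * d ^ 2 * r * (1 + (1 / σ * X) ^ 2 + (r ^ 2 / σ * Y) ^ 2) := by
              gcongr
              nlinarith [sq_nonneg (r ^ 2 / σ * Y)]
        · rw [ind_true hk]
          refine (frac_le_one _ _).trans ?_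
          have : 0 ≤ 9 * d ^ 2 * r := by positivity
          linarith
      refine (Ex_mono this).trans ?_
      rw [Ex_add, Ex_const]
      linarith
    have := Ex_le hw
    linarith
  have h2 : Ex (fun u : ι → Bool => ind (ev c (pt u) ^ 2
        ≤ r ^ 4 * ((∑ j, ev (der j c) (pt u) ^ 2) / 2)) * (1 / 36 * (1 / 2)))
      ≤ Ex (fun u : ι → Bool => Ex (fun v : ι → Bool =>
      F2 (1 / σ * ev c (pt u)) (r ^ 2 / σ * Dq c (pt u) (pt v)))) := by
    apply Ex_mono
    intro u
    have hF2 : ∀ a b, 0 ≤ F2 a b := fun a b => by unfold F2; positivity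
    by_cases hu : ev c (pt u) ^ 2 ≤ r ^ 4 * ((∑ j, ev (der j c) (pt u) ^ 2) / 2)
    · rw [ind_true hu, one_mul]
      have := pz_q c (pt u)
      refine (mul_le_mul_of_nonneg_right this (by norm_num)).trans ?_
      rw [← Ex_mul_right]
      apply Ex_mono
      intro v
      by_cases hv : (∑ j, ev (der j c) (pt u) ^ 2) / 2 ≤ Dq c (pt u) (pt v) ^ 2
      · rw [ind_true hv]
        unfold F2
        have ha : ev c (pt u) ^ 2 ≤ r ^ 4 * Dq c (pt u) (pt v) ^ 2 :=
          hu.trans (by gcongr)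
        have hb : (1 / σ * ev c (pt u)) ^ 2 ≤ (r ^ 2 / σ * Dq c (pt u) (pt v)) ^ 2 := by
          calc _ = 1 / σ ^ 2 * ev c (pt u) ^ 2 := by field_simp
            _ ≤ 1 / σ ^ 2 * (r ^ 4 * Dq c (pt u) (pt v) ^ 2) := by gcongr
            _ = _ := by field_simp
        rw [one_mul, le_div_iff₀ (by positivity)]
        linarith
      · rw [ind_false hv, zero_mul]; exact hF2 _ _
    · rw [ind_false hu, zero_mul]; exact Ex_nonneg fun v => hF2 _ _
  rw [Ex_mul_right] at h2
  have h4 := h2.trans h1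
  unfold ACC
  linarith

lemma ev_smul (a : ℝ) (c : Finset ι → ℝ) (x : ι → ℝ) : ev (fun S => a * c S) x = a * ev c x := by
  unfold ev
  rw [Finset.mul_sum]
  exact Finset.sum_congr rfl fun S _ => by ring

lemma der_smul (a : ℝ) (c : Finset ι → ℝ) (j : ι) :
    der j (fun S => a * c S) = fun S => a * der j c S := by
  funext S; unfold der; split_ifs <;> simp

lemma nrm_smul (a : ℝ) (c : Finset ι → ℝ) : nrm (fun S => a * c S) = a ^ 2 * nrm c := by
  unfold nrm
  rw [Finset.mul_sum]
  exact Finset.sum_congr rfl fun S _ => by ring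

lemma vr_smul (a : ℝ) (c : Finset ι → ℝ) : vr (fun S => a * c S) = a ^ 2 * vr c := by
  unfold vr
  rw [Finset.mul_sum]
  exact Finset.sum_congr rfl fun S _ => by ring

/-- Anticoncentration of a regular polynomial relative to its gradient. -/
lemma ac {d : ℕ} {c : Finset ι → ℝ} (hc : Deg d c) (hv : 0 < vr c) {r : ℝ} (hr : 0 < r)
    (hr1 : r ≤ 1) (hI : ∀ i, nrm (der i c) ≤ r ^ (12 * d + 14) * vr c) :
    Ex (fun u : ι → Bool => ind (ev c (pt u) ^ 2 ≤ r ^ 4 * ((∑ j, ev (der j c) (pt u) ^ 2) / 2)))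
      ≤ ACC d * r := by
  set a := (Real.sqrt (vr c))⁻¹ with ha
  have ha2 : a ^ 2 = (vr c)⁻¹ := by rw [ha, inv_pow, Real.sq_sqrt hv.le]
  have ha0 : 0 < a ^ 2 := by rw [ha2]; positivity
  have h := ac_one (c := fun S => a * c S) (d := d) (fun S hS => by simp [hc S hS])
    (by rw [vr_smul, ha2, inv_mul_cancel₀ hv.ne']) hr hr1 (θ := r ^ (6 * d + 7)) (by positivity) le_rfl
    (by
      intro i
      rw [der_smul, nrm_smul, ha2, inv_mul_le_iff₀ hv]
      refine (hI i).trans (le_of_eq ?_)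
      rw [← pow_mul, mul_comm]; congr 2; ring)
  refine le_trans (Ex_mono fun u => ind_mono ?_) h
  intro hu
  simp only [der_smul, ev_smul, mul_pow]
  rw [← Finset.mul_sum]
  calc _ ≤ a ^ 2 * (r ^ 4 * ((∑ j, ev (der j c) (pt u) ^ 2) / 2)) := by gcongr
    _ = _ := by ring

end E
end NS

set_option linter.unusedSectionVars false
set_option linter.unusedVariables false

namespace NS
section F
variable {ι : Type*} [Fintype ι] [DecidableEq ι]

/-- restriction of the polynomial: variables outside `U` are set to `y` -/
noncomputable def res (U : Finset ι) (y : ι → ℝ) (c : Finset ι → ℝ) : Finset ι → ℝ :=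
  fun S => ∑ T, if T ∩ U = S then c T * ∏ i ∈ T \ U, y i else 0

lemma ev_res (U : Finset ι) (y : ι → ℝ) (c : Finset ι → ℝ) (x : ι → ℝ) :
    ev (res U y c) x = ev c (mix U x y) := by
  unfold ev res
  simp only [Finset.sum_mul]
  rw [Finset.sum_comm]
  refine Finset.sum_congr rfl fun T _ => ?_
  rw [Finset.sum_eq_single (T ∩ U)]
  · rw [if_pos rfl, mul_assoc]
    congr 1
    rw [← Finset.prod_inter_mul_prod_sdiff T U, mul_comm]
    congr 1
    · exact Finset.prod_congr rfl fun i hi => by simp [mix, (Finset.mem_inter.1 hi).2]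
    · exact Finset.prod_congr rfl fun i hi => by simp [mix, (Finset.mem_sdiff.1 hi).2]
  · intro S _ hS
    rw [if_neg (fun h => hS h.symm), zero_mul]
  · simp

lemma pt_mix (U : Finset ι) (x y : ι → Bool) : mix U (pt x) (pt y) = pt (mix U x y) := by
  funext i; simp only [mix, pt]; split_ifs <;> rfl

lemma ev_res_pt (U : Finset ι) (c : Finset ι → ℝ) (x y : ι → Bool) :
    ev (res U (pt y) c) (pt x) = ev c (pt (mix U x y)) := by
  rw [ev_res, pt_mix]

lemma Deg_res {d : ℕ} {c : Finset ι → ℝ} (h : Deg d c) (U : Finset ι) (y : ι → ℝ) :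
    Deg d (res U y c) := by
  intro S hS
  unfold res
  refine Finset.sum_eq_zero fun T _ => ?_
  split_ifs with hT
  · rw [h T, zero_mul]
    rw [← hT] at hS
    exact hS.trans_le (Finset.card_le_card Finset.inter_subset_left)
  · rfl

/-- the polynomial only uses variables in `U` -/
def Supp (U : Finset ι) (c : Finset ι → ℝ) : Prop := ∀ i, i ∉ U → NoVar i c

lemma Supp_res {V : Finset ι} {c : Finset ι → ℝ} (h : Supp V c) (U : Finset ι) (y : ι → ℝ) :
    Supp (V ∩ U) (res U y c) := by
  intro i hi S hS
  unfold res
  refine Finset.sum_eq_zero fun T _ => ?_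
  split_ifs with hT
  · rw [← hT, Finset.mem_inter] at hS
    rw [h i (fun hV => hi (Finset.mem_inter.2 ⟨hV, hS.2⟩)) T hS.1, zero_mul]
  · rfl

/-- coefficients are determined by values -/
lemma ev_inj {c c' : Finset ι → ℝ} (h : ∀ w, ev c (pt w) = ev c' (pt w)) : c = c' := by
  have h1 : nrm (fun S => c S - c' S) = 0 := by
    rw [← parseval]
    have : ∀ w : ι → Bool, ev (fun S => c S - c' S) (pt w) = 0 := by
      intro w
      have : ev (fun S => c S - c' S) (pt w) = ev c (pt w) - ev c' (pt w) := by
        unfold ev; rw [← Finset.sum_sub_distrib]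
        exact Finset.sum_congr rfl fun S _ => by ring
      rw [this, h, sub_self]
    simp only [this]
    rw [zero_pow two_ne_zero, Ex_const]
  funext S
  have := (Finset.sum_eq_zero_iff_of_nonneg (fun S _ => sq_nonneg (c S - c' S))).1 h1 S
    (Finset.mem_univ _)
  have := pow_eq_zero_iff two_ne_zero |>.1 this
  linarith

lemma ev_der_pt (i : ι) (c : Finset ι → ℝ) (w : ι → Bool) :
    2 * ev (der i c) (pt w) = sg (w i) * (ev c (pt w) - ev c (pt (flip i w))) := by
  rw [ev_split i c (pt w), ev_split i c (pt (flip i w))]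
  have h : ∀ j, j ≠ i → pt (flip i w) j = pt w j := fun j hj => by simp [pt, flip_ne hj]
  rw [ev_congr (noVar_rm i c) h, ev_congr (noVar_der i c) h]
  have h2 : pt (flip i w) i = - sg (w i) := by simp [pt, flip_same, sg_not]
  rw [h2]
  have h3 : pt w i = sg (w i) := rfl
  rw [h3]
  linear_combination (-2 * ev (der i c) (pt w)) * sg_mul_self (w i)

lemma flip_mix {U : Finset ι} {i : ι} (hi : i ∈ U) (x y : ι → Bool) :
    flip i (mix U x y) = mix U (flip i x) y := by
  funext j
  by_cases hj : j = i
  · subst hj; simp [flip_same, mix, hi]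
  · simp [flip_ne hj, mix]

lemma der_res {U : Finset ι} {i : ι} (hi : i ∈ U) (y : ι → Bool) (c : Finset ι → ℝ) :
    der i (res U (pt y) c) = res U (pt y) (der i c) := by
  apply ev_inj
  intro w
  have h1 := ev_der_pt i (res U (pt y) c) w
  rw [ev_res_pt, ev_res_pt, ← flip_mix hi] at h1
  have h2 := ev_der_pt i c (mix U w y)
  rw [ev_res_pt]
  have h3 : mix U w y i = w i := by simp [mix, hi]
  rw [h3] at h2
  linarith

lemma der_res_notMem {U : Finset ι} {i : ι} (hi : i ∉ U) (y : ι → ℝ) (c : Finset ι → ℝ) :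
    der i (res U y c) = 0 := by
  apply der_noVar
  have := Supp_res (V := Finset.univ) (c := c) (fun i hi => absurd (Finset.mem_univ i) hi) U y
  exact this i (by simpa using hi)

lemma nrm_zero : nrm (0 : Finset ι → ℝ) = 0 := by simp [nrm]

lemma nrm_res (U : Finset ι) (y : ι → Bool) (c : Finset ι → ℝ) :
    nrm (res U (pt y) c) = Ex (fun x => ev c (pt (mix U x y)) ^ 2) := by
  rw [← parseval]; simp only [ev_res_pt]

lemma Ex_nrm_res (U : Finset ι) (c : Finset ι → ℝ) :
    Ex (fun y => nrm (res U (pt y) c)) = nrm c := by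
  simp only [nrm_res]
  rw [Ex_mix U (fun w => ev c (pt w) ^ 2), parseval]

lemma Ex_sq_le {Ω : Type*} [Fintype Ω] [Nonempty Ω] (f : Ω → ℝ) :
    (Ex f) ^ 2 ≤ Ex (fun w => f w ^ 2) := by
  have := Ex_cs f (fun _ => 1)
  simpa [Ex_const] using this

lemma Ex_nrm_res_sq {d : ℕ} {c : Finset ι → ℝ} (hc : Deg d c) (U : Finset ι) :
    Ex (fun y => nrm (res U (pt y) c) ^ 2) ≤ 9 ^ d * nrm c ^ 2 := by
  refine le_trans ?_ (hc' hc)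
  rw [← Ex_mix U (fun w => ev c (pt w) ^ 4)]
  apply Ex_mono
  intro y
  rw [nrm_res]
  refine (Ex_sq_le _).trans (le_of_eq ?_)
  congr 1; funext x; ring

lemma ev_empty_Ex (c : Finset ι → ℝ) : Ex (fun w => ev c (pt w)) = c ∅ := by
  simp only [ev_pt]
  rw [Ex_sum]
  have : ∀ S, Ex (fun w => c S * chi S w) = if S = ∅ then c S else 0 := by
    intro S
    rw [Ex_mul_left]
    have := Ex_chi_mul S ∅
    have e : ∀ w : ι → Bool, chi S w * chi ∅ w = chi S w := fun w => by simp [chi]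
    simp only [e] at this
    rw [this]; split_ifs <;> simp
  simp only [this]
  simp

/-- coefficients of the mean polynomial -/
def mn (U : Finset ι) (c : Finset ι → ℝ) : Finset ι → ℝ := fun T => if T ∩ U = ∅ then c T else 0

lemma res_empty (U : Finset ι) (y : ι → ℝ) (c : Finset ι → ℝ) :
    res U y c ∅ = ev (mn U c) y := by
  unfold res ev mn
  refine Finset.sum_congr rfl fun T _ => ?_
  split_ifs with h
  · congr 1
    refine Finset.prod_congr ?_ fun _ _ => rfl
    rw [Finset.sdiff_eq_self_iff_disjoint, Finset.disjoint_iff_inter_eq_empty, h]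
  · simp

lemma Deg_mn {d : ℕ} {c : Finset ι → ℝ} (h : Deg d c) (U : Finset ι) : Deg d (mn U c) := by
  intro S hS; unfold mn; rw [h S hS]; simp

lemma nrm_mn (U : Finset ι) (c : Finset ι → ℝ) :
    nrm c ≤ nrm (mn U c) + ∑ i ∈ U, nrm (der i c) := by
  unfold mn
  simp only [nrm_der]
  rw [Finset.sum_comm]
  unfold nrm
  rw [← Finset.sum_add_distrib]
  refine Finset.sum_le_sum fun S _ => ?_
  dsimp only
  by_cases h : S ∩ U = ∅
  · rw [if_pos h]
    have : 0 ≤ ∑ i ∈ U, (if i ∈ S then c S ^ 2 else 0) :=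
      Finset.sum_nonneg fun i _ => by split_ifs <;> positivity
    linarith
  · rw [if_neg h]
    obtain ⟨i, hi⟩ := Finset.nonempty_iff_ne_empty.2 h
    rw [Finset.mem_inter] at hi
    have := Finset.single_le_sum (f := fun i => if i ∈ S then c S ^ 2 else 0)
      (fun i _ => by split_ifs <;> positivity) hi.2
    simp only [hi.1, if_true] at this
    linarith

lemma Ex_vr_res (U : Finset ι) (c : Finset ι → ℝ) :
    Ex (fun y => vr (res U (pt y) c)) = nrm c - nrm (mn U c) := by
  have : ∀ y : ι → Bool, vr (res U (pt y) c)
      = nrm (res U (pt y) c) - ev (mn U c) (pt y) ^ 2 := by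
    intro y; rw [nrm_eq, res_empty]; ring
  simp only [this]
  rw [Ex_sub, Ex_nrm_res, parseval]

lemma Ex_vr_res_le (U : Finset ι) (c : Finset ι → ℝ) :
    Ex (fun y => vr (res U (pt y) c)) ≤ ∑ i ∈ U, nrm (der i c) := by
  rw [Ex_vr_res]; linarith [nrm_mn U c]

/-- second moment of a sum from second moments of the summands -/
lemma Ex_sum_sq {Ω : Type*} [Fintype Ω] {κ : Type*} (s : Finset κ) (f : κ → Ω → ℝ) (a : κ → ℝ)
    (ha : ∀ k, 0 ≤ a k) {K : ℝ} (hK : 0 ≤ K) (h : ∀ k, Ex (fun w => f k w ^ 2) ≤ K * a k ^ 2) :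
    Ex (fun w => (∑ k ∈ s, f k w) ^ 2) ≤ K * (∑ k ∈ s, a k) ^ 2 := by
  have h1 : ∀ k l, Ex (fun w => f k w * f l w) ≤ K * a k * a l := by
    intro k l
    have h2 := Ex_cs (f k) (f l)
    have h3 : (Ex fun w => f k w * f l w) ^ 2 ≤ (K * a k * a l) ^ 2 := by
      refine h2.trans ?_
      calc _ ≤ (K * a k ^ 2) * (K * a l ^ 2) :=
            mul_le_mul (h k) (h l) (Ex_nonneg fun _ => sq_nonneg _) (by positivity)
        _ = _ := by ring
    exact (abs_le_of_sq_le_sq' h3 (mul_nonneg (mul_nonneg hK (ha k)) (ha l))).2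
  have e : ∀ w, (∑ k ∈ s, f k w) ^ 2 = ∑ k ∈ s, ∑ l ∈ s, f k w * f l w := by
    intro w; rw [sq, Finset.sum_mul_sum]
  simp only [e]
  rw [Ex_sum]
  simp only [Ex_sum]
  calc _ ≤ ∑ k ∈ s, ∑ l ∈ s, K * a k * a l :=
        Finset.sum_le_sum fun k _ => Finset.sum_le_sum fun l _ => h1 k l
    _ = _ := by
      rw [sq, Finset.sum_mul_sum, Finset.mul_sum]
      refine Finset.sum_congr rfl fun k _ => ?_
      rw [Finset.mul_sum]
      exact Finset.sum_congr rfl fun l _ => by ring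

lemma Ex_ind_compl {Ω : Type*} [Fintype Ω] [Nonempty Ω] (P : Ω → Prop) :
    Ex (fun w => ind (¬ P w)) = 1 - Ex (fun w => ind (P w)) := by
  have : ∀ w, ind (¬ P w) = 1 - ind (P w) := by
    intro w; by_cases h : P w
    · rw [ind_true h, ind_false (not_not.2 h)]; ring
    · rw [ind_false h, ind_true h]; ring
  simp only [this]
  rw [Ex_sub, Ex_const]

/-- combine a lower bound and an upper bound on bad event -/
lemma Ex_ind_and {Ω : Type*} [Fintype Ω] {P Q R : Ω → Prop} {a b : ℝ}
    (h1 : a ≤ Ex (fun w => ind (P w))) (h2 : Ex (fun w => ind (Q w)) ≤ b)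
    (h : ∀ w, P w → ¬ Q w → R w) : a - b ≤ Ex (fun w => ind (R w)) := by
  have : ∀ w, ind (P w) - ind (Q w) ≤ ind (R w) := by
    intro w
    by_cases hq : Q w
    · rw [ind_true hq]; linarith [ind_le_one (P w), ind_nonneg (R w)]
    · rw [ind_false hq, sub_zero]
      exact ind_mono fun hp => h w hp hq
  have := Ex_mono this
  rw [Ex_sub] at this
  linarith

/-- near constant -/
def NC (T : ℝ) (c : Finset ι → ℝ) : Prop := T ^ 2 * vr c ≤ c ∅ ^ 2

/-- Regular -/
def Reg (τ : ℝ) (c : Finset ι → ℝ) : Prop := 0 < vr c ∧ ∀ i, nrm (der i c) ≤ τ * vr c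

lemma greedy (c : Finset ι → ℝ) {τ : ℝ} (hτ : 0 < τ) (K : ℕ) : ∃ H : Finset ι, H.card ≤ K ∧
    ((∀ i, i ∉ H → nrm (der i c) ≤ τ * ∑ j ∈ Hᶜ, nrm (der j c)) ∨
      (K * τ * ∑ j ∈ Hᶜ, nrm (der j c) + ∑ j ∈ Hᶜ, nrm (der j c) ≤ ∑ j, nrm (der j c))) := by
  induction K with
  | zero => exact ⟨∅, by simp, Or.inr (by simp)⟩
  | succ K ih =>
    obtain ⟨H, hH, h⟩ := ih
    rcases h with h | h
    · exact ⟨H, by omega, Or.inl h⟩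
    · by_cases hA : ∀ i, i ∉ H → nrm (der i c) ≤ τ * ∑ j ∈ Hᶜ, nrm (der j c)
      · exact ⟨H, by omega, Or.inl hA⟩
      · push Not at hA
        obtain ⟨i, hi, hlt⟩ := hA
        refine ⟨insert i H, (Finset.card_insert_le _ _).trans (by omega), Or.inr ?_⟩
        have e : ∑ j ∈ (insert i H)ᶜ, nrm (der j c)
            = ∑ j ∈ Hᶜ, nrm (der j c) - nrm (der i c) := by
          rw [Finset.compl_insert, ← Finset.add_sum_erase Hᶜ _ (Finset.mem_compl.2 hi)]; ring
        have h0 : 0 ≤ nrm (der i c) := nrm_nonneg _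
        rw [e]
        set I := ∑ j ∈ Hᶜ, nrm (der j c)
        push_cast
        have hK : (0:ℝ) ≤ K * τ := by positivity
        nlinarith [mul_nonneg hK h0, mul_nonneg hτ.le h0]

lemma sum_nrm_der_res (H : Finset ι) (c : Finset ι → ℝ) (y : ι → Bool) :
    ∑ i, nrm (der i (res H (pt y) c)) = ∑ i ∈ H, nrm (res H (pt y) (der i c)) := by
  rw [← Finset.sum_subset (Finset.subset_univ H)]
  · exact Finset.sum_congr rfl fun i hi => by rw [der_res hi]
  · intro i _ hi; rw [der_res_notMem hi, nrm_zero]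

set_option maxHeartbeats 1000000 in
/-- random restriction makes a polynomial regular or near constant -/
lemma reg_or_nc {d : ℕ} (hd : 0 < d) {c : Finset ι → ℝ} (hc : Deg d c) {τ T : ℝ} (hτ : 0 < τ)
    (hT : 1 ≤ T) {K : ℕ} (hK : 32 * 9 ^ d * d * T ^ 2 ≤ K * (τ ^ 2 / (32 * d ^ 2 * 81 ^ d))) :
    ∃ H : Finset ι, H.card ≤ K ∧ 1 / (8 * 9 ^ d) ≤ Ex (fun y : ι → Bool =>
      ind (Reg τ (res Hᶜ (pt y) c) ∨ NC T (res Hᶜ (pt y) c))) := by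
  have hd0 : (0:ℝ) < d := by exact_mod_cast hd
  set τ' := τ ^ 2 / (32 * d ^ 2 * 81 ^ d) with hτ'
  have hτ'0 : 0 < τ' := by positivity
  obtain ⟨H, hH, h⟩ := greedy c hτ'0 K
  refine ⟨H, hH, ?_⟩
  set I := ∑ j ∈ Hᶜ, nrm (der j c) with hI
  have hI0 : 0 ≤ I := Finset.sum_nonneg fun _ _ => nrm_nonneg _
  have h9 : (1:ℝ) ≤ 9 ^ d := one_le_pow₀ (by norm_num)
  have hvr := Ex_vr_res_le Hᶜ c
  rw [← hI] at hvr
  have h818 : (1:ℝ) / (4 * 9 ^ d) - 1 / (8 * 9 ^ d) = 1 / (8 * 9 ^ d) := by field_simp; norm_num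
  rcases hI0.eq_or_lt with hz | hpos
  · -- everything is constant
    rw [← hz] at hvr
    have h0 : ∀ y : ι → Bool, vr (res Hᶜ (pt y) c) = 0 := by
      have h1 : Ex (fun y => vr (res Hᶜ (pt y) c)) = 0 := le_antisymm hvr (Ex_nonneg fun _ => vr_nonneg _)
      unfold Ex at h1
      rw [div_eq_zero_iff] at h1
      rcases h1 with h1 | h1
      · intro y
        exact (Finset.sum_eq_zero_iff_of_nonneg (fun y _ => vr_nonneg _)).1 h1 y (Finset.mem_univ _)
      · exfalso
        have : (Fintype.card (ι → Bool) : ℝ) ≠ 0 := by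
          exact_mod_cast Fintype.card_ne_zero
        exact this h1
    have : ∀ y : ι → Bool, ind (Reg τ (res Hᶜ (pt y) c) ∨ NC T (res Hᶜ (pt y) c)) = 1 := by
      intro y
      apply ind_true
      right
      unfold NC
      rw [h0, mul_zero]; positivity
    simp only [this]
    rw [Ex_const, div_le_one (by positivity)]
    linarith
  · rcases h with h | h
    · -- regular case
      have hJ : Ex (fun y => ∑ i ∈ Hᶜ, nrm (res Hᶜ (pt y) (der i c))) = I := by
        rw [Ex_sum]
        exact Finset.sum_congr rfl fun i _ => Ex_nrm_res _ _
      have hJ2 : Ex (fun y => (∑ i ∈ Hᶜ, nrm (res Hᶜ (pt y) (der i c))) ^ 2) ≤ 9 ^ d * I ^ 2 :=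
        Ex_sum_sq Hᶜ (fun i y => nrm (res Hᶜ (pt y) (der i c))) (fun i => nrm (der i c))
          (fun i => nrm_nonneg _) (by positivity) fun i => Ex_nrm_res_sq (Deg_der' hc i) _
      have pz := paley_zygmund (f := fun y : ι → Bool => ∑ i ∈ Hᶜ, nrm (res Hᶜ (pt y) (der i c)))
        (fun y => Finset.sum_nonneg fun _ _ => nrm_nonneg _) (K := 9 ^ d) (by positivity) hpos
        hJ.ge (by rw [hJ]; exact hJ2)
      have hQ : Ex (fun y => ∑ i ∈ Hᶜ, nrm (res Hᶜ (pt y) (der i c)) ^ 2) ≤ 9 ^ d * (τ' * I ^ 2) := by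
        rw [Ex_sum]
        calc _ ≤ ∑ i ∈ Hᶜ, 9 ^ d * (τ' * I * nrm (der i c)) := by
              refine Finset.sum_le_sum fun i hi => (Ex_nrm_res_sq (Deg_der' hc i) _).trans ?_
              rw [sq]
              gcongr
              · exact nrm_nonneg _
              · exact h i (Finset.mem_compl.1 hi)
          _ = _ := by rw [← Finset.mul_sum, ← Finset.mul_sum, ← hI]; ring
      have mk := markov (f := fun y : ι → Bool => ∑ i ∈ Hᶜ, nrm (res Hᶜ (pt y) (der i c)) ^ 2)
        (fun y => Finset.sum_nonneg fun _ _ => sq_nonneg _) (t := 8 * 81 ^ d * τ' * I ^ 2)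
        (by positivity)
      have mk2 := mk.trans (b := _) (c := 1 / (8 * 9 ^ d)) (by
        rw [div_le_div_iff₀ (by positivity) (by positivity)]
        have e81 : (81:ℝ) ^ d = 9 ^ d * 9 ^ d := by rw [← mul_pow]; norm_num
        rw [e81]
        nlinarith [mul_le_mul_of_nonneg_right hQ (show (0:ℝ) ≤ 8 * 9 ^ d by positivity)])
      rw [← h818]
      refine Ex_ind_and pz mk2 fun y h1 h2 => Or.inl ?_
      rw [not_le] at h2
      rw [← sum_nrm_der_res] at h1
      have h3 := sum_nrm_der_le (Deg_res hc Hᶜ (pt y))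
      set c' := res Hᶜ (pt y) c with hc'
      have hv : I / (2 * d) ≤ vr c' := by
        rw [div_le_iff₀ (by positivity)]; nlinarith
      have hv0 : 0 < vr c' := lt_of_lt_of_le (by positivity) hv
      refine ⟨hv0, fun i => ?_⟩
      by_cases hi : i ∈ Hᶜ
      · rw [hc', der_res hi]
        have h4 := Finset.single_le_sum (f := fun i => nrm (res Hᶜ (pt y) (der i c)) ^ 2)
          (fun i _ => sq_nonneg _) hi
        have h5 : nrm (res Hᶜ (pt y) (der i c)) ^ 2 ≤ (τ * vr c') ^ 2 := by
          refine (h4.trans h2.le).trans ?_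
          calc 8 * 81 ^ d * τ' * I ^ 2 = τ ^ 2 * (I / (2 * d)) ^ 2 := by
                rw [hτ']; field_simp; ring
            _ ≤ τ ^ 2 * vr c' ^ 2 := by gcongr
            _ = _ := by ring
        exact (abs_le_of_sq_le_sq' h5 (by positivity)).2
      · rw [hc', der_res_notMem hi, nrm_zero]; positivity
    · -- near constant case
      have hIall := sum_nrm_der_le hc
      have hW : vr c ≤ nrm c := vr_le_nrm c
      set W := nrm c with hWdef
      have hKI : K * τ' * I ≤ d * W := by nlinarith
      have hI2 : 32 * 9 ^ d * T ^ 2 * I ≤ W := by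
        have := mul_le_mul_of_nonneg_right hK hpos.le
        have : d * (32 * 9 ^ d * T ^ 2 * I) ≤ d * W := by linarith
        exact le_of_mul_le_mul_left this hd0
      have hT2 : 1 ≤ T ^ 2 := one_le_pow₀ hT
      have hW0 : 0 < W := lt_of_lt_of_le (by positivity) hI2
      have hIW : 32 * I ≤ W := by
        refine le_trans ?_ hI2
        have : 1 ≤ 9 ^ d * T ^ 2 := by nlinarith
        nlinarith
      have hmu : W / 2 ≤ Ex (fun y : ι → Bool => ev (mn Hᶜ c) (pt y) ^ 2) := by
        rw [parseval]
        have := nrm_mn Hᶜ c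
        linarith
      have h4 := NS.hc (Deg_mn hc Hᶜ)
      have pz := paley_zygmund (f := fun y : ι → Bool => ev (mn Hᶜ c) (pt y) ^ 2)
        (fun y => sq_nonneg _) (K := 9 ^ d) (by positivity) (m := W / 2) (by positivity) hmu
        (le_trans (le_of_eq (by congr 1; funext y; ring)) h4)
      have mk := markov (f := fun y : ι → Bool => vr (res Hᶜ (pt y) c))
        (fun y => vr_nonneg _) (t := W / (4 * T ^ 2)) (by positivity)
      have mk2 := mk.trans (b := _) (c := 1 / (8 * 9 ^ d)) (by
        rw [div_le_iff₀ (by positivity)]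
        refine hvr.trans ?_
        rw [div_mul_div_comm, le_div_iff₀ (by positivity)]
        linarith)
      rw [← h818]
      refine Ex_ind_and pz mk2 fun y h1 h2 => Or.inr ?_
      rw [not_le, lt_div_iff₀ (by positivity)] at h2
      unfold NC
      rw [res_empty]
      linarith

end F
end NS

set_option linter.unusedSectionVars false
set_option linter.unusedVariables false

namespace NS
section G
variable {ι : Type*} [Fintype ι] [DecidableEq ι]

/-- sign change -/
def sc (a b : ℝ) : Prop := ¬ (0 ≤ a ↔ 0 ≤ b)

lemma sc_self (a : ℝ) : ¬ sc a a := by simp [sc]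

/-- influence of the threshold function -/
noncomputable def asi (i : ι) (c : Finset ι → ℝ) : ℝ :=
  Ex (fun w : ι → Bool => ind (sc (ev c (pt w)) (ev c (pt (flip i w)))))

/-- average sensitivity of the threshold function -/
noncomputable def as (c : Finset ι → ℝ) : ℝ := ∑ i, asi i c

lemma asi_nonneg (i : ι) (c : Finset ι → ℝ) : 0 ≤ asi i c := Ex_nonneg fun _ => ind_nonneg _
lemma asi_le_one (i : ι) (c : Finset ι → ℝ) : asi i c ≤ 1 := Ex_le fun _ => ind_le_one _
lemma as_nonneg (c : Finset ι → ℝ) : 0 ≤ as c := Finset.sum_nonneg fun _ _ => asi_nonneg _ _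

lemma asi_noVar {i : ι} {c : Finset ι → ℝ} (h : NoVar i c) : asi i c = 0 := by
  unfold asi
  have : ∀ w : ι → Bool, ind (sc (ev c (pt w)) (ev c (pt (flip i w)))) = 0 := by
    intro w
    apply ind_false
    have : ev c (pt (flip i w)) = ev c (pt w) :=
      ev_congr h fun j hj => by simp [pt, flip_ne hj]
    rw [this]; exact sc_self _
  simp only [this]
  exact Ex_zero

lemma as_supp {U : Finset ι} {c : Finset ι → ℝ} (h : Supp U c) : as c = ∑ i ∈ U, asi i c := by
  unfold as
  symm
  apply Finset.sum_subset (Finset.subset_univ U)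
  intro i _ hi
  exact asi_noVar (h i hi)

lemma as_le_card {U : Finset ι} {c : Finset ι → ℝ} (h : Supp U c) : as c ≤ U.card := by
  rw [as_supp h]
  refine (Finset.sum_le_sum fun i _ => asi_le_one i c).trans ?_
  simp

lemma asi_res {U : Finset ι} {i : ι} (hi : i ∈ U) (c : Finset ι → ℝ) :
    asi i c = Ex (fun y : ι → Bool => asi i (res U (pt y) c)) := by
  unfold asi
  rw [← Ex_mix U]
  congr 1; funext y; congr 1; funext x
  rw [ev_res_pt, ev_res_pt, flip_mix hi]

lemma sum_asi_res (U : Finset ι) (c : Finset ι → ℝ) :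
    ∑ i ∈ U, asi i c = Ex (fun y : ι → Bool => as (res U (pt y) c)) := by
  have : ∀ y : ι → Bool, as (res U (pt y) c) = ∑ i ∈ U, asi i (res U (pt y) c) := by
    intro y
    apply as_supp
    have := Supp_res (V := Finset.univ) (c := c) (fun i hi => absurd (Finset.mem_univ i) hi) U (pt y)
    simpa using this
  simp only [this]
  rw [Ex_sum]
  exact Finset.sum_congr rfl fun i hi => asi_res hi c

/-- near constant polynomials have bounded average sensitivity -/
lemma as_nc (d B : ℕ) : ∃ C : ℝ, 0 < C ∧ ∀ (n : ℕ) (c : Finset (Fin n) → ℝ) (U : Finset (Fin n))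
    (L : ℕ), 0 < L → Deg d c → Supp U c → (U.card : ℝ) ≤ 2 ^ B * (L : ℝ) ^ B → NC L c →
    as c ≤ C := by
  obtain ⟨C, hC, h⟩ := moments d B
  refine ⟨2 * (2 ^ B * C), by positivity, ?_⟩
  intro n c U L hL hc hs hU hnc
  have hL1 : (1:ℝ) ≤ L := by exact_mod_cast hL
  have hL0 : (0:ℝ) < L := by linarith
  set μ := c ∅ with hμ
  set g : (Fin n → Bool) → ℝ := fun w => ev c (pt w) - μ with hg
  have hgdeg : g ∈ DegLE (Fin n) d := Submodule.sub_mem _ (DegLE_ev_pt hc) (DegLE_const μ d)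
  have hm := h n g hgdeg
  have hg2 : Ex (fun w => g w ^ 2) = vr c := by
    have : ∀ w, g w ^ 2 = ev c (pt w) ^ 2 - (2 * μ) * ev c (pt w) + μ ^ 2 := by
      intro w; rw [hg]; ring
    simp only [this]
    rw [Ex_add, Ex_sub, Ex_mul_left, Ex_const, parseval, ev_empty_Ex, nrm_eq]
    ring
  rw [hg2] at hm
  have hscP : ∀ i, asi i c ≤ 2 * (C / (L:ℝ) ^ B) := by
    intro i
    by_cases h0 : μ = 0
    · have hv : vr c = 0 := by
        unfold NC at hnc
        rw [← hμ, h0] at hnc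
        have := vr_nonneg c
        have h5 : (L:ℝ) ^ 2 * vr c ≤ 0 := by simpa using hnc
        have h6 : 0 < (L:ℝ) ^ 2 := by positivity
        nlinarith
      have hn : nrm c = 0 := by rw [nrm_eq, hv, ← hμ, h0]; ring
      have hc0 : c = 0 := by
        funext S
        have := (Finset.sum_eq_zero_iff_of_nonneg (fun S _ => sq_nonneg (c S))).1 hn S
          (Finset.mem_univ _)
        exact pow_eq_zero_iff two_ne_zero |>.1 this
      rw [asi_noVar (by rw [hc0]; intro S _; rfl)]
      positivity
    · have hμ2 : 0 < μ ^ 2 := by positivity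
      have e2 : 2 ^ (B + 1) = 2 * 2 ^ B := by ring
      have hp : Ex (fun w => ind (μ ^ 2 ≤ g w ^ 2)) ≤ C / (L:ℝ) ^ B := by
        have mk := markov (f := fun w => g w ^ (2 ^ (B + 1))) (fun w => by rw [e2, pow_mul]; positivity)
          (t := (μ ^ 2) ^ (2 ^ B)) (by positivity)
        have h1 : Ex (fun w => ind (μ ^ 2 ≤ g w ^ 2))
            ≤ Ex (fun w => ind ((μ ^ 2) ^ (2 ^ B) ≤ g w ^ (2 ^ (B + 1)))) := by
          refine Ex_mono fun w => ind_mono fun hw => ?_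
          rw [e2, pow_mul]
          gcongr
        refine (h1.trans mk).trans ?_
        rw [div_le_div_iff₀ (by positivity) (by positivity)]
        have h2 : (L:ℝ) ^ B ≤ ((L:ℝ) ^ 2) ^ (2 ^ B) := by
          rw [← pow_mul]
          apply pow_le_pow_right₀ hL1
          have := Nat.lt_two_pow_self (n := B)
          omega
        calc _ ≤ C * vr c ^ 2 ^ B * ((L:ℝ) ^ 2) ^ (2 ^ B) := by
              have := vr_nonneg c
              gcongr
          _ = C * ((L:ℝ) ^ 2 * vr c) ^ 2 ^ B := by rw [mul_pow]; ring
          _ ≤ C * (μ ^ 2) ^ 2 ^ B := by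
            have := vr_nonneg c
            gcongr
            exact hnc
      have hle : asi i c ≤ Ex (fun w => ind (μ ^ 2 ≤ g w ^ 2) + ind (μ ^ 2 ≤ g (flip i w) ^ 2)) := by
        refine Ex_mono fun w => ?_
        by_cases h1 : μ ^ 2 ≤ g w ^ 2
        · rw [ind_true h1]
          linarith [ind_le_one (sc (ev c (pt w)) (ev c (pt (flip i w)))),
            ind_nonneg (μ ^ 2 ≤ g (flip i w) ^ 2)]
        · by_cases h2 : μ ^ 2 ≤ g (flip i w) ^ 2
          · rw [ind_true h2]
            linarith [ind_le_one (sc (ev c (pt w)) (ev c (pt (flip i w)))),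
              ind_nonneg (μ ^ 2 ≤ g w ^ 2)]
          · rw [ind_false h1, ind_false h2, ind_false]
            · simp
            · unfold sc
              rw [not_not]
              rw [not_le] at h1 h2
              simp only [hg] at h1 h2
              set a := ev c (pt w)
              set b := ev c (pt (flip i w))
              rcases lt_or_gt_of_ne h0 with hneg | hpos
              · constructor
                · intro ha; nlinarith
                · intro ha; nlinarith
              · constructor
                · intro _; nlinarith
                · intro _; nlinarith
      refine hle.trans ?_
      rw [Ex_add, Ex_invol (flip_invol i) (fun w => ind (μ ^ 2 ≤ g w ^ 2))]
      linarith
  rw [as_supp hs]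
  refine (Finset.sum_le_sum fun i _ => hscP i).trans ?_
  rw [Finset.sum_const, nsmul_eq_mul]
  calc _ ≤ 2 ^ B * (L:ℝ) ^ B * (2 * (C / (L:ℝ) ^ B)) := by gcongr
    _ = _ := by field_simp

lemma block_aux {d : ℕ} {c : Finset ι → ℝ} (hc : Deg d c) {T : ℝ} (hT : 1 ≤ T) (h : ¬ NC T c) :
    1 / (8 * 9 ^ d) ≤ Ex (fun x : ι → Bool =>
      ind (ev c (pt x) ^ 2 ≤ 32 * 9 ^ d * T ^ 2 * ∑ j, ev (der j c) (pt x) ^ 2)) := by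
  unfold NC at h
  rw [not_le] at h
  have hT2 : 1 ≤ T ^ 2 := one_le_pow₀ hT
  have hv : 0 < vr c := by nlinarith [sq_nonneg (c ∅)]
  have h818 : (1:ℝ) / (4 * 9 ^ d) - 1 / (8 * 9 ^ d) = 1 / (8 * 9 ^ d) := by field_simp; norm_num
  have hG : Ex (fun x : ι → Bool => ∑ j, ev (der j c) (pt x) ^ 2) = ∑ j, nrm (der j c) := by
    rw [Ex_sum]
    exact Finset.sum_congr rfl fun j _ => parseval _
  have hG2 : Ex (fun x : ι → Bool => (∑ j, ev (der j c) (pt x) ^ 2) ^ 2)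
      ≤ 9 ^ d * (∑ j, nrm (der j c)) ^ 2 :=
    Ex_sum_sq Finset.univ (fun j x => ev (der j c) (pt x) ^ 2) (fun j => nrm (der j c))
      (fun j => nrm_nonneg _) (by positivity) fun j => by
        refine le_trans (le_of_eq ?_) (hc' (Deg_der' hc j))
        congr 1; funext x; ring
  have pz := paley_zygmund (f := fun x : ι → Bool => ∑ j, ev (der j c) (pt x) ^ 2)
    (fun x => Finset.sum_nonneg fun _ _ => sq_nonneg _) (K := 9 ^ d) (by positivity) hv
    (by rw [hG]; exact vr_le_sum_nrm_der c) (by rw [hG]; exact hG2)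
  have mk := markov (f := fun x : ι → Bool => ev c (pt x) ^ 2) (fun x => sq_nonneg _)
    (t := 16 * 9 ^ d * T ^ 2 * vr c) (by positivity)
  have mk2 := mk.trans (b := _) (c := 1 / (8 * 9 ^ d)) (by
    rw [parseval, nrm_eq, div_le_div_iff₀ (by positivity) (by positivity)]
    have h9 : (0:ℝ) < 9 ^ d := by positivity
    have : c ∅ ^ 2 + vr c ≤ 2 * (T ^ 2 * vr c) := by nlinarith
    nlinarith [mul_le_mul_of_nonneg_right this (show (0:ℝ) ≤ 8 * 9 ^ d by positivity)])
  rw [← h818]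
  refine Ex_ind_and pz mk2 fun x h1 h2 => ?_
  rw [not_le] at h2
  have h3 : (0:ℝ) ≤ 32 * 9 ^ d * T ^ 2 := by positivity
  have := mul_le_mul_of_nonneg_left h1 h3
  linarith

/-- probability that a block is not near constant -/
lemma block {d : ℕ} {c : Finset ι → ℝ} (hc : Deg d c) {T : ℝ} (hT : 1 ≤ T) (S : Finset ι) :
    Ex (fun y : ι → Bool => ind (¬ NC T (res S (pt y) c)))
      ≤ 8 * 9 ^ d * Ex (fun w : ι → Bool =>
      ind (ev c (pt w) ^ 2 ≤ 32 * 9 ^ d * T ^ 2 * ∑ j ∈ S, ev (der j c) (pt w) ^ 2)) := by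
  rw [← Ex_mix S (fun w : ι → Bool => ind (ev c (pt w) ^ 2
    ≤ 32 * 9 ^ d * T ^ 2 * ∑ j ∈ S, ev (der j c) (pt w) ^ 2)), ← Ex_mul_left]
  refine Ex_mono fun y => ?_
  by_cases h : NC T (res S (pt y) c)
  · rw [ind_false (not_not.2 h)]
    have : 0 ≤ Ex (fun x : ι → Bool => ind (ev c (pt (mix S x y)) ^ 2
      ≤ 32 * 9 ^ d * T ^ 2 * ∑ j ∈ S, ev (der j c) (pt (mix S x y)) ^ 2)) :=
      Ex_nonneg fun _ => ind_nonneg _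
    positivity
  · rw [ind_true h]
    have h1 := block_aux (Deg_res hc S (pt y)) hT h
    have e : ∀ x : ι → Bool, ∑ j, ev (der j (res S (pt y) c)) (pt x) ^ 2
        = ∑ j ∈ S, ev (der j c) (pt (mix S x y)) ^ 2 := by
      intro x
      rw [← Finset.sum_subset (Finset.subset_univ S)]
      · exact Finset.sum_congr rfl fun i hi => by rw [der_res hi, ev_res_pt]
      · intro i _ hi; rw [der_res_notMem hi, ev_zero]; ring
    simp only [e, ev_res_pt] at h1
    rw [div_le_iff₀ (by positivity)] at h1
    linarith

/-- sum over blocks -/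
lemma blocks {d : ℕ} {c : Finset ι → ℝ} (hc : Deg d c) {T r : ℝ} (hT : 1 ≤ T) (hr : 0 < r)
    (hr1 : r ≤ 1) (hreg : Reg (r ^ (12 * d + 14)) c) {b : ℕ} (blk : ι → Fin b) :
    ∑ s, Ex (fun y : ι → Bool =>
        ind (¬ NC T (res (Finset.univ.filter fun i => blk i = s) (pt y) c)))
      ≤ 8 * 9 ^ d * (b * (ACC d * r) + 64 * 9 ^ d * T ^ 2 / r ^ 4) := by
  have h1 := ac hc hreg.1 hr hr1 hreg.2
  refine (Finset.sum_le_sum fun s _ => block hc hT _).trans ?_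
  rw [← Finset.mul_sum, ← Ex_sum]
  refine mul_le_mul_of_nonneg_left ?_ (by positivity)
  have h2 : ∀ w : ι → Bool, ∑ s, ind (ev c (pt w) ^ 2 ≤ 32 * 9 ^ d * T ^ 2 *
        ∑ j ∈ (Finset.univ.filter fun i => blk i = s), ev (der j c) (pt w) ^ 2)
      ≤ b * ind (ev c (pt w) ^ 2 ≤ r ^ 4 * ((∑ j, ev (der j c) (pt w) ^ 2) / 2))
        + 64 * 9 ^ d * T ^ 2 / r ^ 4 := by
    intro w
    by_cases hw : ev c (pt w) ^ 2 ≤ r ^ 4 * ((∑ j, ev (der j c) (pt w) ^ 2) / 2)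
    · rw [ind_true hw]
      have : ∑ s : Fin b, ind (ev c (pt w) ^ 2 ≤ 32 * 9 ^ d * T ^ 2 *
        ∑ j ∈ (Finset.univ.filter fun i => blk i = s), ev (der j c) (pt w) ^ 2) ≤ b := by
        refine (Finset.sum_le_sum fun s _ => ind_le_one _).trans ?_
        simp
      have h0 : 0 ≤ 64 * 9 ^ d * T ^ 2 / r ^ 4 := by positivity
      linarith
    · rw [ind_false hw, mul_zero, zero_add]
      rw [not_le] at hw
      have hG0 : 0 ≤ ∑ j, ev (der j c) (pt w) ^ 2 := Finset.sum_nonneg fun _ _ => sq_nonneg _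
      have hp : 0 < ev c (pt w) ^ 2 := lt_of_le_of_lt (by positivity) hw
      have h3 : ∀ s : Fin b, ind (ev c (pt w) ^ 2 ≤ 32 * 9 ^ d * T ^ 2 *
        ∑ j ∈ (Finset.univ.filter fun i => blk i = s), ev (der j c) (pt w) ^ 2)
        ≤ 32 * 9 ^ d * T ^ 2 / ev c (pt w) ^ 2 *
        ∑ j ∈ (Finset.univ.filter fun i => blk i = s), ev (der j c) (pt w) ^ 2 := by
        intro s
        by_cases hs : ev c (pt w) ^ 2 ≤ 32 * 9 ^ d * T ^ 2 *
          ∑ j ∈ (Finset.univ.filter fun i => blk i = s), ev (der j c) (pt w) ^ 2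
        · rw [ind_true hs, div_mul_eq_mul_div, le_div_iff₀ hp]; linarith
        · rw [ind_false hs]
          have : 0 ≤ ∑ j ∈ (Finset.univ.filter fun i => blk i = s), ev (der j c) (pt w) ^ 2 :=
            Finset.sum_nonneg fun _ _ => sq_nonneg _
          positivity
      refine (Finset.sum_le_sum fun s _ => h3 s).trans ?_
      rw [← Finset.mul_sum, Finset.sum_fiberwise, div_mul_eq_mul_div, div_le_div_iff₀ hp (by positivity)]
      have := mul_le_mul_of_nonneg_left hw.le (show 0 ≤ 64 * 9 ^ d * T ^ 2 by positivity)
      linarith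
  refine (Ex_mono h2).trans ?_
  rw [Ex_add, Ex_const, Ex_mul_left]
  have := mul_le_mul_of_nonneg_left h1 (Nat.cast_nonneg (α := ℝ) b)
  linarith

/-- existence of balanced blocks -/
lemma exists_blk (U : Finset ι) {m b : ℕ} (hU : U.card ≤ m) (hb : 0 < b) :
    ∃ blk : ι → Fin b, ∀ s, (U.filter fun i => blk i = s).card ≤ m / b + 1 := by
  set q := m / b + 1 with hq
  have hq0 : 0 < q := Nat.succ_pos _
  have hqb : m < q * b := by
    have := Nat.lt_mul_div_succ m hb
    rw [hq]; linarith
  classical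
  have hlt : ∀ k : Fin U.card, (k : ℕ) / q < b := by
    intro k
    rw [Nat.div_lt_iff_lt_mul hq0]
    rw [mul_comm]
    exact (k.2.trans_le hU).trans hqb
  refine ⟨fun i => if h : i ∈ U then ⟨(U.equivFin ⟨i, h⟩ : ℕ) / q, hlt _⟩ else ⟨0, hb⟩, ?_⟩
  intro s
  have : (U.filter fun i => (if h : i ∈ U then (⟨(U.equivFin ⟨i, h⟩ : ℕ) / q, hlt _⟩ : Fin b)
      else ⟨0, hb⟩) = s).card ≤ (Finset.Ico (s * q : ℕ) (s * q + q)).card := by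
    refine Finset.card_le_card_of_injOn
      (fun i => if h : i ∈ U then (U.equivFin ⟨i, h⟩ : ℕ) else 0) ?_ ?_
    · intro i hi
      simp only [Finset.coe_filter, Set.mem_ofPred_eq] at hi
      obtain ⟨hiU, hs⟩ := hi
      rw [dif_pos hiU] at hs
      simp only [dif_pos hiU, Finset.coe_Ico, Set.mem_Ico]
      have hs' : (U.equivFin ⟨i, hiU⟩ : ℕ) / q = s := by rw [← hs]
      have h1 := Nat.div_mul_le_self (U.equivFin ⟨i, hiU⟩ : ℕ) q
      have h2 := Nat.lt_mul_div_succ (U.equivFin ⟨i, hiU⟩ : ℕ) hq0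
      rw [hs'] at h1 h2
      exact ⟨h1, by linarith⟩
    · intro i hi j hj hij
      simp only [Finset.coe_filter, Set.mem_ofPred_eq] at hi hj
      simp only [dif_pos hi.1, dif_pos hj.1] at hij
      have := U.equivFin.injective (Fin.ext hij)
      exact congrArg Subtype.val this
  simpa using this

end G
end NS

set_option linter.unusedSectionVars false
set_option linter.unusedVariables false

namespace NS
section H

/-- set of average sensitivities with at most `m` relevant variables -/
def MS (d m : ℕ) : Set ℝ := {a | ∃ (n : ℕ) (c : Finset (Fin n) → ℝ) (U : Finset (Fin n)),
  Deg d c ∧ Supp U c ∧ U.card ≤ m ∧ a = as c}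

/-- maximal average sensitivity -/
noncomputable def MM (d m : ℕ) : ℝ := sSup (MS d m)

lemma MS_bdd (d m : ℕ) : BddAbove (MS d m) := by
  refine ⟨m, ?_⟩
  rintro _ ⟨n, c, U, h1, h2, h3, rfl⟩
  exact (as_le_card h2).trans (by exact_mod_cast h3)

lemma le_MM {d m n : ℕ} {c : Finset (Fin n) → ℝ} {U : Finset (Fin n)} (h1 : Deg d c)
    (h2 : Supp U c) (h3 : U.card ≤ m) : as c ≤ MM d m :=
  le_csSup (MS_bdd d m) ⟨n, c, U, h1, h2, h3, rfl⟩

lemma MS_nonempty (d m : ℕ) : (MS d m).Nonempty :=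
  ⟨_, 0, 0, ∅, fun _ _ => rfl, fun _ _ _ _ => rfl, by simp, rfl⟩

lemma MM_le {d m : ℕ} {V : ℝ} (h : ∀ (n : ℕ) (c : Finset (Fin n) → ℝ) (U : Finset (Fin n)),
    Deg d c → Supp U c → U.card ≤ m → as c ≤ V) : MM d m ≤ V := by
  apply csSup_le (MS_nonempty d m)
  rintro _ ⟨n, c, U, h1, h2, h3, rfl⟩
  exact h n c U h1 h2 h3

lemma MM_nonneg (d m : ℕ) : 0 ≤ MM d m := by
  obtain ⟨a, n, c, U, h1, h2, h3, rfl⟩ := MS_nonempty d m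
  exact (as_nonneg c).trans (le_MM h1 h2 h3)

lemma MM_le_self (d m : ℕ) : MM d m ≤ m := MM_le fun n c U h1 h2 h3 =>
  (as_le_card h2).trans (by exact_mod_cast h3)

/-- reduction to regular or near constant -/
lemma MM_reduce {d : ℕ} (hd : 0 < d) {m : ℕ} {τ T : ℝ} (hτ : 0 < τ)
    (hT : 1 ≤ T) {K : ℕ} (hK : 32 * 9 ^ d * d * T ^ 2 ≤ K * (τ ^ 2 / (32 * d ^ 2 * 81 ^ d)))
    {G : ℝ} (hG0 : 0 ≤ G) (hG : ∀ (n : ℕ) (c : Finset (Fin n) → ℝ) (U : Finset (Fin n)),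
    Deg d c → Supp U c → U.card ≤ m → Reg τ c ∨ NC T c → as c ≤ G) :
    MM d m ≤ G + 8 * 9 ^ d * K := by
  set M := MM d m with hM
  have hK0 : (0:ℝ) ≤ 8 * 9 ^ d * K := by positivity
  by_cases hMG : M ≤ G
  · linarith
  rw [not_le] at hMG
  have key : M ≤ K + (M - 1 / (8 * 9 ^ d) * (M - G)) := by
    apply MM_le
    intro n c U hc hs hU
    obtain ⟨H, hH, hp⟩ := reg_or_nc hd hc hτ hT hK
    have h1 : as c = ∑ i ∈ H, asi i c + ∑ i ∈ Hᶜ, asi i c := (Finset.sum_add_sum_compl H _).symm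
    have h2 : ∑ i ∈ H, asi i c ≤ K := by
      refine (Finset.sum_le_sum fun i _ => asi_le_one i c).trans ?_
      simp only [Finset.sum_const, nsmul_eq_mul, mul_one]
      exact_mod_cast hH
    have h3 : ∑ i ∈ Hᶜ, asi i c ≤ M - 1 / (8 * 9 ^ d) * (M - G) := by
      rw [sum_asi_res]
      have h4 : ∀ y : Fin n → Bool, as (res Hᶜ (pt y) c)
          ≤ M - ind (Reg τ (res Hᶜ (pt y) c) ∨ NC T (res Hᶜ (pt y) c)) * (M - G) := by
        intro y
        have hcard : (U ∩ Hᶜ).card ≤ m := (Finset.card_le_card Finset.inter_subset_left).trans hU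
        by_cases hy : Reg τ (res Hᶜ (pt y) c) ∨ NC T (res Hᶜ (pt y) c)
        · rw [ind_true hy]
          have := hG n _ _ (Deg_res hc Hᶜ (pt y)) (Supp_res hs Hᶜ (pt y)) hcard hy
          linarith
        · rw [ind_false hy, zero_mul, sub_zero]
          exact le_MM (Deg_res hc Hᶜ (pt y)) (Supp_res hs Hᶜ (pt y)) hcard
      refine (Ex_mono h4).trans ?_
      rw [Ex_sub, Ex_const, Ex_mul_right]
      have := mul_le_mul_of_nonneg_right hp (sub_nonneg.2 hMG.le)
      linarith
    linarith
  have : 1 / (8 * 9 ^ d) * (M - G) ≤ K := by linarith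
  rw [one_div_mul_eq_div, div_le_iff₀ (by positivity)] at this
  linarith

/-- regular polynomials -/
lemma as_reg {d : ℕ} {m b : ℕ} (hb : 0 < b) {T r Cn : ℝ} (hT : 1 ≤ T) (hr : 0 < r)
    (hr1 : r ≤ 1) (hCn : 0 ≤ Cn)
    (hnc : ∀ (n : ℕ) (c : Finset (Fin n) → ℝ) (U : Finset (Fin n)),
      Deg d c → Supp U c → U.card ≤ m → NC T c → as c ≤ Cn)
    {n : ℕ} {c : Finset (Fin n) → ℝ} {U : Finset (Fin n)} (hc : Deg d c) (hs : Supp U c)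
    (hU : U.card ≤ m) (hreg : Reg (r ^ (12 * d + 14)) c) :
    as c ≤ b * Cn + 8 * 9 ^ d * (b * (ACC d * r) + 64 * 9 ^ d * T ^ 2 / r ^ 4)
      * MM d (m / b + 1) := by
  obtain ⟨blk, hblk⟩ := exists_blk U hU hb
  have h0 : as c = ∑ s, ∑ i ∈ (Finset.univ.filter fun i => blk i = s), asi i c := by
    rw [Finset.sum_fiberwise]; rfl
  rw [h0]
  have h1 : ∀ s, ∑ i ∈ (Finset.univ.filter fun i => blk i = s), asi i c
      ≤ Cn + Ex (fun y : Fin n → Bool =>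
        ind (¬ NC T (res (Finset.univ.filter fun i => blk i = s) (pt y) c))) * MM d (m / b + 1) := by
    intro s
    rw [sum_asi_res, ← Ex_mul_right]
    have : ∀ y : Fin n → Bool, as (res (Finset.univ.filter fun i => blk i = s) (pt y) c)
        ≤ Cn + ind (¬ NC T (res (Finset.univ.filter fun i => blk i = s) (pt y) c))
          * MM d (m / b + 1) := by
      intro y
      have hD := Deg_res hc (Finset.univ.filter fun i => blk i = s) (pt y)
      have hS := Supp_res hs (Finset.univ.filter fun i => blk i = s) (pt y)
      have hcard : (U ∩ Finset.univ.filter fun i => blk i = s).card ≤ m / b + 1 := by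
        refine le_trans (le_of_eq ?_) (hblk s)
        congr 1; ext i; simp
      by_cases hy : NC T (res (Finset.univ.filter fun i => blk i = s) (pt y) c)
      · rw [ind_false (not_not.2 hy), zero_mul, add_zero]
        exact hnc n _ _ hD hS ((Finset.card_le_card Finset.inter_subset_left).trans hU) hy
      · rw [ind_true hy, one_mul]
        have := le_MM hD hS hcard
        linarith
    refine (Ex_mono this).trans ?_
    rw [Ex_add, Ex_const]
  refine (Finset.sum_le_sum fun s _ => h1 s).trans ?_
  rw [Finset.sum_add_distrib, ← Finset.sum_mul]
  have h2 := mul_le_mul_of_nonneg_right (blocks hc hT hr hr1 hreg blk) (MM_nonneg d (m / b + 1))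
  simp only [Finset.sum_const, Finset.card_univ, Fintype.card_fin, nsmul_eq_mul]
  linarith

/-- exponent -/
def tt (d : ℕ) : ℕ := 18 * (12 * d + 14)
/-- big exponent -/
def BB (d : ℕ) : ℕ := 184 + 4 * tt d

/-- recursive inequality -/
lemma MM_rec {d : ℕ} (hd : 0 < d) : ∃ C3 C4 : ℝ, 0 < C3 ∧ 0 < C4 ∧ ∀ m L : ℕ, 0 < L →
    (m : ℝ) ≤ 2 ^ BB d * (L : ℝ) ^ BB d →
    MM d m ≤ C3 * (L : ℝ) ^ (92 + 2 * tt d) + C4 * (L : ℝ) ^ 74 * MM d (m / L ^ 90 + 1) := by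
  obtain ⟨Cn, hCn, hnc⟩ := as_nc d (BB d)
  set C2 : ℝ := 8 * 9 ^ d * (1024 * 9 ^ d * 81 ^ d * d ^ 3) with hC2
  set C4 : ℝ := 8 * 9 ^ d * (ACC d + 64 * 9 ^ d) with hC4
  have hA := ACC_pos d
  refine ⟨C2 + Cn, C4, by positivity, by positivity, ?_⟩
  intro m L hL hm
  have hL1 : (1:ℝ) ≤ L := by exact_mod_cast hL
  have hL0 : (0:ℝ) < L := by linarith
  have hM0 := MM_nonneg d (m / L ^ 90 + 1)
  have hnc' : ∀ (n : ℕ) (c : Finset (Fin n) → ℝ) (U : Finset (Fin n)),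
      Deg d c → Supp U c → U.card ≤ m → NC (L:ℝ) c → as c ≤ Cn := by
    intro n c U h1 h2 h3 h4
    refine hnc n c U L hL h1 h2 (le_trans ?_ hm) h4
    exact_mod_cast h3
  set r : ℝ := 1 / (L:ℝ) ^ 18 with hr
  have hr0 : 0 < r := by positivity
  have hr1 : r ≤ 1 := by rw [hr, div_le_one (by positivity)]; exact one_le_pow₀ hL1
  have hτ : r ^ (12 * d + 14) = 1 / (L:ℝ) ^ tt d := by
    rw [hr, div_pow, one_pow, ← pow_mul]; rfl
  set G : ℝ := Cn * (L:ℝ) ^ 90 + C4 * (L:ℝ) ^ 74 * MM d (m / L ^ 90 + 1) with hG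
  have hL90 : (1:ℝ) ≤ (L:ℝ) ^ 90 := one_le_pow₀ hL1
  have h8 : 8 * 9 ^ d * (((L ^ 90 : ℕ) : ℝ) * (ACC d * r) + 64 * 9 ^ d * (L:ℝ) ^ 2 / r ^ 4)
      ≤ C4 * (L:ℝ) ^ 74 := by
    rw [hC4, mul_assoc (8 * 9 ^ d) (ACC d + 64 * 9 ^ d)]
    refine mul_le_mul_of_nonneg_left ?_ (by positivity)
    have e1 : ((L ^ 90 : ℕ) : ℝ) * (ACC d * r) = ACC d * (L:ℝ) ^ 72 := by
      rw [hr]; push_cast; field_simp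
    have e2 : 64 * 9 ^ d * (L:ℝ) ^ 2 / r ^ 4 = 64 * 9 ^ d * (L:ℝ) ^ 74 := by
      rw [hr]; field_simp
    rw [e1, e2, add_mul]
    gcongr <;> norm_num
  have hred := MM_reduce hd (m := m) (τ := r ^ (12 * d + 14)) (T := L) (by positivity) hL1
    (K := 1024 * 9 ^ d * 81 ^ d * d ^ 3 * L ^ (2 + 2 * tt d)) (by
      rw [hτ]
      have hd0 : (0:ℝ) < d := by exact_mod_cast hd
      push_cast
      apply le_of_eq
      field_simp
      ring) (G := G) (by positivity) (by
      intro n c U hc hs hU hh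
      rcases hh with hh | hh
      · refine (as_reg (b := L ^ 90) (by positivity) hL1 hr0 hr1 hCn.le hnc' hc hs hU hh).trans ?_
        have := mul_le_mul_of_nonneg_right h8 hM0
        rw [hG]
        push_cast at this ⊢
        linarith
      · refine (hnc' n c U hc hs hU hh).trans ?_
        have : 0 ≤ C4 * (L:ℝ) ^ 74 * MM d (m / L ^ 90 + 1) := by positivity
        nlinarith)
  refine hred.trans ?_
  have e3 : 8 * 9 ^ d * ((1024 * 9 ^ d * 81 ^ d * d ^ 3 * L ^ (2 + 2 * tt d) : ℕ) : ℝ)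
      = C2 * (L:ℝ) ^ (2 + 2 * tt d) := by rw [hC2]; push_cast; ring
  rw [e3, hG]
  have h5 : (L:ℝ) ^ (2 + 2 * tt d) ≤ (L:ℝ) ^ (92 + 2 * tt d) := pow_le_pow_right₀ hL1 (by omega)
  have h6 : (L:ℝ) ^ 90 ≤ (L:ℝ) ^ (92 + 2 * tt d) := pow_le_pow_right₀ hL1 (by omega)
  have hC20 : 0 ≤ C2 := by positivity
  nlinarith [mul_le_mul_of_nonneg_left h5 hC20, mul_le_mul_of_nonneg_left h6 hCn.le]

/-- the main bound on average sensitivity -/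
lemma MM_bound {d : ℕ} (hd : 0 < d) : ∃ A : ℝ, 0 < A ∧ ∀ m : ℕ, MM d m ≤ A * (m : ℝ) ^ ((5:ℝ) / 6) := by
  obtain ⟨C3, C4, hC3, hC4, hrec⟩ := MM_rec hd
  have hBt : BB d = 184 + 4 * tt d := rfl
  generalize BB d = B at hrec hBt
  generalize tt d = t at hrec hBt
  obtain ⟨L0, hL0⟩ := exists_nat_ge (4 * C4 + 2)
  have hBpos : 0 < B := by omega
  refine ⟨2 * C3 + ((L0 + 1 : ℝ)) ^ B, by positivity, ?_⟩
  set A := 2 * C3 + ((L0 + 1 : ℝ)) ^ B with hA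
  have hA0 : 0 < A := by positivity
  intro m
  induction m using Nat.strong_induction_on with
  | _ m ih =>
    rcases Nat.eq_zero_or_pos m with h0 | hm
    · subst h0
      have := MM_le_self d 0
      refine this.trans ?_
      simp
    have hm1 : (1:ℝ) ≤ m := by exact_mod_cast hm
    have hm0 : (0:ℝ) < m := by linarith
    have hmp : (1:ℝ) ≤ (m:ℝ) ^ ((5:ℝ) / 6) := Real.one_le_rpow hm1 (by norm_num)
    by_cases hsmall : m < (L0 + 1) ^ B
    · refine (MM_le_self d m).trans ?_
      have h1 : (m:ℝ) ≤ (L0 + 1 : ℝ) ^ B := by exact_mod_cast hsmall.le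
      nlinarith
    · rw [not_lt] at hsmall
      -- the root
      obtain ⟨L, hL1, hL2⟩ : ∃ L : ℕ, L ^ B ≤ m ∧ m < (L + 1) ^ B := by
        refine ⟨Nat.nthRoot (B) m, Nat.pow_nthRoot_le (Or.inl hBpos.ne'), Nat.lt_pow_nthRoot_add_one hBpos.ne' m⟩
      have hLL : L0 + 1 ≤ L := by
        by_contra hcon
        have : L + 1 ≤ L0 + 1 := by omega
        have := Nat.pow_le_pow_left this (B)
        omega
      have hLR : (L0:ℝ) + 1 ≤ L := by exact_mod_cast hLL
      have hL0' : (0:ℝ) < L := by linarith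
      have hL1' : (1:ℝ) ≤ L := by linarith
      have hLm : (L:ℝ) ^ B ≤ m := by exact_mod_cast hL1
      have hmL : (m:ℝ) ≤ 2 ^ B * (L:ℝ) ^ B := by
        have h1 : (m:ℝ) ≤ ((L:ℝ) + 1) ^ B := by exact_mod_cast hL2.le
        refine h1.trans ?_
        rw [← mul_pow]
        gcongr
        linarith
      have hr := hrec m L (by omega) hmL
      have hL90 : (L:ℝ) ^ 90 ≤ m := le_trans (pow_le_pow_right₀ hL1' (by omega)) hLm
      have hL90' : L ^ 90 ≤ m := by exact_mod_cast hL90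
      have hL2' : 2 ≤ L := by
        have : (2:ℝ) ≤ L := by linarith
        exact_mod_cast this
      have h4 : 4 ≤ L ^ 90 := by
        calc 4 = 2 ^ 2 := by norm_num
          _ ≤ L ^ 2 := Nat.pow_le_pow_left hL2' 2
          _ ≤ L ^ 90 := Nat.pow_le_pow_right (by omega) (by norm_num)
      have hlt : m / L ^ 90 + 1 < m := by
        have : m / L ^ 90 ≤ m / 4 := Nat.div_le_div_left h4 (by norm_num)
        omega
      have hi := ih _ hlt
      have hmb : ((m / L ^ 90 + 1 : ℕ) : ℝ) ≤ 2 * (m / (L:ℝ) ^ 90) := by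
        push_cast
        have h1 : ((m / L ^ 90 : ℕ) : ℝ) ≤ (m:ℝ) / (L:ℝ) ^ 90 := by
          have := @Nat.cast_div_le ℝ _ _ _ m (L ^ 90)
          push_cast at this; exact this
        have h2 : 1 ≤ (m:ℝ) / (L:ℝ) ^ 90 := by rw [le_div_iff₀ (by positivity)]; linarith
        linarith
      have hpow : ((m / L ^ 90 + 1 : ℕ) : ℝ) ^ ((5:ℝ) / 6) ≤ 2 * ((m:ℝ) ^ ((5:ℝ) / 6) / (L:ℝ) ^ 75) := by
        refine (Real.rpow_le_rpow (by positivity) hmb (by norm_num)).trans ?_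
        rw [Real.mul_rpow (by norm_num) (by positivity), Real.div_rpow (by positivity) (by positivity)]
        have e1 : ((L:ℝ) ^ 90) ^ ((5:ℝ) / 6) = (L:ℝ) ^ 75 := by
          rw [← Real.rpow_natCast, ← Real.rpow_natCast, ← Real.rpow_mul hL0'.le]; norm_num
        rw [e1]
        gcongr
        calc (2:ℝ) ^ ((5:ℝ) / 6) ≤ 2 ^ (1:ℝ) := Real.rpow_le_rpow_of_exponent_le (by norm_num) (by norm_num)
          _ = 2 := Real.rpow_one 2
      have hhalf : (L:ℝ) ^ (92 + 2 * t) ≤ (m:ℝ) ^ ((5:ℝ) / 6) := by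
        have e1 : ((L:ℝ) ^ (92 + 2 * t)) ^ 2 = (L:ℝ) ^ B := by
          rw [← pow_mul]; congr 1; rw [hBt]; ring
        have h1 : (L:ℝ) ^ (92 + 2 * t) ≤ Real.sqrt m := by
          apply Real.le_sqrt_of_sq_le; rw [e1]; exact hLm
        refine h1.trans ?_
        rw [Real.sqrt_eq_rpow]
        exact Real.rpow_le_rpow_of_exponent_le hm1 (by norm_num)
      set P := (m:ℝ) ^ ((5:ℝ) / 6) with hP
      have h5 : C4 * (L:ℝ) ^ 74 * MM d (m / L ^ 90 + 1) ≤ A / 2 * P := by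
        calc _ ≤ C4 * (L:ℝ) ^ 74 * (A * (2 * (P / (L:ℝ) ^ 75))) := by gcongr; exact hi.trans (by gcongr)
          _ = (2 * C4 / L) * (A * P) := by field_simp
          _ ≤ (1 / 2) * (A * P) := by
            refine mul_le_mul_of_nonneg_right ?_ (by positivity)
            rw [div_le_div_iff₀ hL0' (by norm_num)]
            linarith
          _ = _ := by ring
      have h6 : C3 ≤ A / 2 := by
        rw [hA]
        have : 0 ≤ ((L0 + 1 : ℝ)) ^ B := by positivity
        linarith
      calc MM d m ≤ _ := hr
        _ ≤ C3 * P + A / 2 * P := by gcongr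
        _ ≤ A / 2 * P + A / 2 * P := by gcongr
        _ = A * P := by ring

end H
end NS

set_option linter.unusedSectionVars false
set_option linter.unusedVariables false

namespace NS
section I

lemma DegLE_pow1 {ι : Type*} [Fintype ι] [DecidableEq ι] {f : (ι → Bool) → ℝ}
    (hf : f ∈ DegLE ι 1) (k : ℕ) : (fun z => f z ^ k) ∈ DegLE ι k := by
  induction k with
  | zero => simpa using DegLE_const (ι := ι) 1 0
  | succ k ih =>
    have := DegLE_mul ih hf
    convert this using 1
    funext z
    simp [pow_succ]

lemma DegLE_prodpow {ι κ : Type*} [Fintype ι] [DecidableEq ι] (s : Finset κ)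
    (f : κ → (ι → Bool) → ℝ) (hf : ∀ k, f k ∈ DegLE ι 1) (m : κ → ℕ) :
    (fun z => ∏ k ∈ s, f k z ^ m k) ∈ DegLE ι (∑ k ∈ s, m k) := by
  classical
  induction s using Finset.induction_on with
  | empty => simpa using DegLE_const (ι := ι) 1 0
  | insert a s ha ih =>
    have := DegLE_mul (DegLE_pow1 (hf a) (m a)) ih
    rw [Finset.sum_insert ha]
    convert this using 1
    funext z
    simp [Finset.prod_insert ha]

lemma DegLE_eval {ι : Type*} [Fintype ι] [DecidableEq ι] {n d : ℕ}
    (p : MvPolynomial (Fin n) ℝ) (hp : p.totalDegree ≤ d)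
    (f : Fin n → (ι → Bool) → ℝ) (hf : ∀ k, f k ∈ DegLE ι 1) :
    (fun z => MvPolynomial.eval (fun k => f k z) p) ∈ DegLE ι d := by
  simp only [MvPolynomial.eval_eq']
  refine DegLE_sum _ (fun (m : Fin n →₀ ℕ) z => p.coeff m * ∏ i, f i z ^ m i) ?_
  intro m hm
  have h1 := DegLE_mul (DegLE_const (ι := ι) (p.coeff m) 0) (DegLE_prodpow Finset.univ f hf m)
  have h2 : 0 + ∑ k, m k ≤ d := by
    have := MvPolynomial.le_totalDegree hm
    rw [Finsupp.sum_fintype _ _ (by simp)] at this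
    omega
  exact DegLE_mono h2 h1

/-- random point after bucket signs -/
def YY {n b : ℕ} (β : Fin n → Fin (b + 1)) (w : Fin n → Bool) (z : Fin b → Bool) : Fin n → Bool :=
  fun i => (w i == (Fin.cons true z : Fin (b + 1) → Bool) (β i))

/-- flip all the coordinates in bucket `j` -/
def flb {n b : ℕ} (β : Fin n → Fin (b + 1)) (j : Fin b) (w : Fin n → Bool) : Fin n → Bool :=
  fun i => if β i = j.succ then !(w i) else w i

lemma YY_invol {n b : ℕ} (β : Fin n → Fin (b + 1)) (z : Fin b → Bool) :
    Function.Involutive (fun w => YY β w z) := by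
  intro w
  funext i
  simp only [YY]
  cases w i <;> cases (Fin.cons true z : Fin (b + 1) → Bool) (β i) <;> rfl

lemma YY_flip {n b : ℕ} (β : Fin n → Fin (b + 1)) (w : Fin n → Bool) (z : Fin b → Bool)
    (j : Fin b) : YY β w (flip j z) = flb β j (YY β w z) := by
  funext i
  simp only [YY, flb]
  refine Fin.cases ?_ (fun k => ?_) (β i)
  · simp [(Fin.succ_ne_zero j).symm]
  · simp only [Fin.cons_succ, Fin.succ_inj]
    by_cases h : k = j
    · subst h
      rw [flip_same]
      cases w i <;> cases z k <;> simp
    · rw [flip_ne h]; simp [h]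

lemma YY_deg {n b : ℕ} (β : Fin n → Fin (b + 1)) (w : Fin n → Bool) (i : Fin n) :
    (fun z : Fin b → Bool => pt (YY β w z) i) ∈ DegLE (Fin b) 1 := by
  simp only [YY, pt]
  refine Fin.cases ?_ (fun k => ?_) (β i)
  · simpa using DegLE_const (ι := Fin b) _ 1
  · simp only [Fin.cons_succ]
    have h := Submodule.smul_mem _ (sg (w i)) (DegLE_coord k)
    convert h using 1
    funext z
    simp only [Pi.smul_apply, smul_eq_mul]
    cases w i <;> cases z k <;> simp [sg]

lemma bucket {n b d : ℕ} (p : MvPolynomial (Fin n) ℝ) (hp : p.totalDegree ≤ d)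
    (β : Fin n → Fin (b + 1)) :
    ∑ j : Fin b, Ex (fun w : Fin n → Bool => ind (sc (MvPolynomial.eval (pt w) p)
      (MvPolynomial.eval (pt (flb β j w)) p))) ≤ MM d b := by
  have hc : ∀ w : Fin n → Bool, ∃ c : Finset (Fin b) → ℝ, Deg d c ∧
      ∀ z, MvPolynomial.eval (pt (YY β w z)) p = ev c (pt z) := fun w =>
    DegLE_coef (DegLE_eval p hp (fun i z => pt (YY β w z) i) (YY_deg β w))
  choose c hc1 hc2 using hc
  have key : ∀ j : Fin b, Ex (fun w : Fin n → Bool => ind (sc (MvPolynomial.eval (pt w) p)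
      (MvPolynomial.eval (pt (flb β j w)) p))) = Ex (fun w => asi j (c w)) := by
    intro j
    have h1 : ∀ z : Fin b → Bool, Ex (fun w : Fin n → Bool => ind (sc (MvPolynomial.eval (pt w) p)
      (MvPolynomial.eval (pt (flb β j w)) p))) = Ex (fun w : Fin n → Bool =>
        ind (sc (ev (c w) (pt z)) (ev (c w) (pt (flip j z))))) := by
      intro z
      rw [← Ex_invol (YY_invol β z)]
      congr 1
      funext w
      rw [← hc2, ← hc2, YY_flip]
    rw [← Ex_const (Ω := Fin b → Bool) (Ex (fun w : Fin n → Bool => ind (sc _ _)))]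
    simp only [asi]
    refine Eq.trans ?_ (Ex_comm (fun (z : Fin b → Bool) (w : Fin n → Bool) =>
      ind (sc (ev (c w) (pt z)) (ev (c w) (pt (flip j z))))))
    congr 1
    funext z
    exact h1 z
  simp only [key]
  rw [← Ex_sum]
  refine Ex_le fun w => ?_
  exact le_MM (U := Finset.univ) (hc1 w) (fun i hi => absurd (Finset.mem_univ i) hi) (by simp)

end I
end NS

set_option linter.unusedSectionVars false
set_option linter.unusedVariables false

namespace NS
section J

/-- uniform measure on bits -/
noncomputable def nuB : Measure Bool :=
  ((1 : ℝ≥0∞) / 2) • Measure.dirac true + ((1 : ℝ≥0∞) / 2) • Measure.dirac false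

/-- bucket weights -/
noncomputable def bw (b : ℕ) (δ : ℝ) : Fin (b + 1) → ℝ := Fin.cons (1 - b * δ) (fun _ => δ)

/-- bucket distribution -/
noncomputable def nuO (b : ℕ) (δ : ℝ) : Measure (Fin (b + 1)) :=
  ∑ k, ENNReal.ofReal (bw b δ k) • Measure.dirac k

instance nuB_fin : IsFiniteMeasure nuB := ⟨by simp [nuB]⟩

instance nuO_fin (b : ℕ) (δ : ℝ) : IsFiniteMeasure (nuO b δ) := ⟨by
  simp [nuO, Measure.finsetSum_apply]⟩

lemma nuB_real (x : Bool) : nuB.real {x} = 1 / 2 := by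
  cases x <;> simp [nuB, Measure.real]

lemma bw_nonneg {b : ℕ} {δ : ℝ} (h0 : 0 < δ) (h1 : b * δ ≤ 1) (k : Fin (b + 1)) : 0 ≤ bw b δ k := by
  refine Fin.cases ?_ (fun k => ?_) k
  · simp [bw]; linarith
  · simp [bw]; linarith

lemma bw_sum (b : ℕ) (δ : ℝ) : ∑ k, bw b δ k = 1 := by
  simp [bw, Fin.sum_univ_succ]

lemma nuO_real {b : ℕ} {δ : ℝ} (h0 : 0 < δ) (h1 : b * δ ≤ 1) (k : Fin (b + 1)) :
    (nuO b δ).real {k} = bw b δ k := by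
  simp only [nuO, Measure.real, Measure.finsetSum_apply, Measure.smul_apply, smul_eq_mul]
  rw [Finset.sum_eq_single k]
  · simp [ENNReal.toReal_ofReal (bw_nonneg h0 h1 k)]
  · intro l _ hl
    simp [hl]
  · simp

lemma map_nuB : nuB.map sg = bernoulliPM := by
  have : Measurable sg := measurable_of_countable _
  unfold nuB bernoulliPM
  rw [Measure.map_add _ _ this, Measure.map_smul, Measure.map_smul, Measure.map_dirac' this,
    Measure.map_dirac' this]
  simp [sg]

/-- sign attached to bucket `j` -/
noncomputable def sj {b : ℕ} (j : Fin b) (k : Fin (b + 1)) : ℝ := if k = j.succ then -1 else 1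

lemma map_nuO {b : ℕ} {δ : ℝ} (h0 : 0 < δ) (h1 : b * δ ≤ 1) (j : Fin b) :
    (nuO b δ).map (sj j) = flipPM δ := by
  have hm : Measurable (sj j) := measurable_of_countable _
  ext s hs
  rw [Measure.map_apply hm hs]
  simp only [nuO, flipPM, Measure.finsetSum_apply, Measure.smul_apply, smul_eq_mul,
    Measure.add_apply, Measure.dirac_apply' _ (hm hs), Measure.dirac_apply' _ hs]
  rw [← Finset.add_sum_erase _ _ (Finset.mem_univ j.succ), add_comm]
  congr 1
  · have : ∀ k ∈ Finset.univ.erase j.succ, ENNReal.ofReal (bw b δ k) *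
        ((sj j) ⁻¹' s).indicator 1 k = ENNReal.ofReal (bw b δ k) * s.indicator 1 (1:ℝ) := by
      intro k hk
      have hk' : k ≠ j.succ := by simpa using hk
      congr 1
      have e0 : sj j k = 1 := by simp [sj, hk']
      rw [← e0]
      rfl
    rw [Finset.sum_congr rfl this, ← Finset.sum_mul,
      ← ENNReal.ofReal_sum_of_nonneg (fun k _ => bw_nonneg h0 h1 k)]
    congr 2
    have h2 := Finset.add_sum_erase _ (bw b δ) (Finset.mem_univ j.succ)
    rw [bw_sum] at h2
    have h3 : bw b δ j.succ = δ := by simp [bw]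
    linarith
  · have e0 : sj j j.succ = -1 := by simp [sj]
    have e1 : bw b δ j.succ = δ := by simp [bw]
    rw [e1, ← e0]
    rfl

lemma meas_event {n : ℕ} (p : MvPolynomial (Fin n) ℝ) :
    MeasurableSet {ae : (Fin n → ℝ) × (Fin n → ℝ) | psign (MvPolynomial.eval ae.1 p) ≠
      psign (MvPolynomial.eval (fun i => ae.1 i * ae.2 i) p)} := by
  have hs : Measurable psign := by
    unfold psign
    exact Measurable.ite measurableSet_Ici measurable_const measurable_const
  have hp : Continuous fun x : Fin n → ℝ => MvPolynomial.eval x p := MvPolynomial.continuous_eval p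
  have h1 : Measurable fun ae : (Fin n → ℝ) × (Fin n → ℝ) => psign (MvPolynomial.eval ae.1 p) :=
    hs.comp (hp.measurable.comp measurable_fst)
  have h2 : Measurable fun ae : (Fin n → ℝ) × (Fin n → ℝ) =>
      psign (MvPolynomial.eval (fun i => ae.1 i * ae.2 i) p) :=
    hs.comp (hp.measurable.comp (by fun_prop))
  exact (measurableSet_eq_fun h1 h2).compl

lemma psign_ne (a b : ℝ) : psign a ≠ psign b ↔ sc a b := by
  unfold psign sc
  by_cases h1 : 0 ≤ a <;> by_cases h2 : 0 ≤ b <;> simp [h1, h2] <;> norm_num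

lemma pi_real {n : ℕ} {X : Type*} [Fintype X] [MeasurableSpace X]
    (μ : Measure X) [IsFiniteMeasure μ] (x : Fin n → X) :
    (Measure.pi fun _ : Fin n => μ).real {x} = ∏ i, μ.real {x i} := by
  simp only [Measure.real]
  rw [Measure.pi_singleton, ENNReal.toReal_prod]

lemma ns_eq {n b : ℕ} {δ : ℝ} (h0 : 0 < δ) (h1 : b * δ ≤ 1) (j : Fin b)
    (p : MvPolynomial (Fin n) ℝ) :
    noiseSensitivity n δ (fun x => psign (MvPolynomial.eval x p)) =
      ∑ β : Fin n → Fin (b + 1), (∏ i, bw b δ (β i)) *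
        Ex (fun w : Fin n → Bool => ind (sc (MvPolynomial.eval (pt w) p)
          (MvPolynomial.eval (pt (flb β j w)) p))) := by
  classical
  have hm : Measurable (sj j) := measurable_of_countable _
  have hg : Measurable sg := measurable_of_countable _
  have hpt : Measurable (fun (w : Fin n → Bool) i => sg (w i)) := measurable_of_countable _
  have hpj : Measurable (fun (β : Fin n → Fin (b + 1)) i => sj j (β i)) := measurable_of_countable _
  unfold noiseSensitivity bernoulliCube
  rw [← map_nuB, ← map_nuO h0 h1 j, ← Measure.pi_map_pi (fun _ => hg.aemeasurable),
    ← Measure.pi_map_pi (fun _ => hm.aemeasurable), Measure.map_prod_map _ _ hpt hpj,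
    Measure.map_apply (hpt.prodMap hpj) (meas_event p)]
  change Measure.real _ _ = _
  set S := (Prod.map (fun (w : Fin n → Bool) i => sg (w i))
    (fun (β : Fin n → Fin (b + 1)) i => sj j (β i))) ⁻¹' {ae : (Fin n → ℝ) × (Fin n → ℝ) |
      psign (MvPolynomial.eval ae.1 p) ≠
      psign (MvPolynomial.eval (fun i => ae.1 i * ae.2 i) p)} with hS
  have e1 : S = ↑(S.toFinset) := by simp
  rw [e1, ← sum_measureReal_singleton]
  have e2 : ∀ q : (Fin n → Bool) × (Fin n → Fin (b + 1)),
      (((Measure.pi fun _ : Fin n => nuB).prod (Measure.pi fun _ : Fin n => nuO b δ)).real {q})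
        = (1 / 2) ^ n * ∏ i, bw b δ (q.2 i) := by
    rintro ⟨w, β⟩
    rw [← Set.singleton_prod_singleton, measureReal_prod_prod, pi_real, pi_real]
    simp [nuB_real, nuO_real h0 h1]
  have e3 : ∀ q : (Fin n → Bool) × (Fin n → Fin (b + 1)), q ∈ S ↔
      sc (MvPolynomial.eval (pt q.1) p) (MvPolynomial.eval (pt (flb q.2 j q.1)) p) := by
    rintro ⟨w, β⟩
    rw [← psign_ne, hS, Set.mem_preimage, Set.mem_ofPred_eq]
    have : (fun i => sg (w i) * sj j (β i)) = pt (flb β j w) := by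
      funext i
      simp only [pt, flb, sj]
      split_ifs
      · rw [sg_not]; ring
      · ring
    rw [← this]
    rfl
  simp only [e2]
  have e4 : S.toFinset = Finset.univ.filter (fun q => q ∈ S) := by ext q; simp
  rw [e4, Finset.sum_filter, Fintype.sum_prod_type_right]
  refine Finset.sum_congr rfl fun β _ => ?_
  unfold Ex
  rw [mul_div_assoc', Finset.mul_sum, Finset.sum_div]
  refine Finset.sum_congr rfl fun w _ => ?_
  by_cases h : (w, β) ∈ S
  · rw [if_pos h, ind_true ((e3 _).1 h)]
    simp
    ring
  · rw [if_neg h, ind_false (fun h' => h ((e3 (w, β)).2 h'))]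
    simp

lemma ns_le {n b d : ℕ} {δ : ℝ} (h0 : 0 < δ) (h1 : b * δ ≤ 1)
    (p : MvPolynomial (Fin n) ℝ) (hp : p.totalDegree ≤ d) :
    b * noiseSensitivity n δ (fun x => psign (MvPolynomial.eval x p)) ≤ MM d b := by
  have e1 : (b:ℝ) * noiseSensitivity n δ (fun x => psign (MvPolynomial.eval x p)) =
      ∑ j : Fin b, ∑ β : Fin n → Fin (b + 1), (∏ i, bw b δ (β i)) *
        Ex (fun w : Fin n → Bool => ind (sc (MvPolynomial.eval (pt w) p)
          (MvPolynomial.eval (pt (flb β j w)) p))) := by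
    simp only [← ns_eq h0 h1]
    simp
  rw [e1, Finset.sum_comm]
  simp only [← Finset.mul_sum]
  have e2 : ∑ β : Fin n → Fin (b + 1), (∏ i, bw b δ (β i)) = 1 := by
    rw [← Fintype.prod_sum (fun (_ : Fin n) k => bw b δ k)]
    simp [bw_sum]
  calc _ ≤ ∑ β : Fin n → Fin (b + 1), (∏ i, bw b δ (β i)) * MM d b := by
        refine Finset.sum_le_sum fun β _ => ?_
        exact mul_le_mul_of_nonneg_left (bucket p hp β)
          (Finset.prod_nonneg fun i _ => bw_nonneg h0 h1 _)
    _ = MM d b := by rw [← Finset.sum_mul, e2, one_mul]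

lemma final (d : ℕ) (hd : 0 < d) : ∃ C : ℝ, 0 < C ∧
      ∀ (n : ℕ) (p : MvPolynomial (Fin n) ℝ), p.totalDegree ≤ d →
        ∀ (δ : ℝ), 0 < δ → δ < 1 →
          noiseSensitivity n δ (fun x => psign (MvPolynomial.eval x p)) ≤
            C * δ ^ ((1 : ℝ) / 6) := by
  obtain ⟨A, hA, hM⟩ := MM_bound hd
  refine ⟨2 * A, by positivity, ?_⟩
  intro n p hp δ h0 hδ
  set b := ⌊1 / δ⌋₊ with hb
  have hb1 : 1 ≤ b := by
    apply Nat.le_floor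
    rw [Nat.cast_one, le_div_iff₀ h0]; linarith
  have hb2 : (b:ℝ) ≤ 1 / δ := Nat.floor_le (by positivity)
  have hb3 : 1 / δ < b + 1 := Nat.lt_floor_add_one _
  have hbr : (1:ℝ) ≤ b := by exact_mod_cast hb1
  have hb0 : (0:ℝ) < b := by linarith
  have h1 : b * δ ≤ 1 := by rwa [le_div_iff₀ h0] at hb2
  have h2 := (ns_le h0 h1 p hp).trans (hM b)
  have h3 : (b:ℝ) ^ ((5:ℝ)/6) * (b:ℝ) ^ ((1:ℝ)/6) = b := by
    rw [← Real.rpow_add hb0]; norm_num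
  have h4 : (0:ℝ) < (b:ℝ) ^ ((1:ℝ)/6) := by positivity
  have h5 : (0:ℝ) < (b:ℝ) ^ ((5:ℝ)/6) := by positivity
  set N := noiseSensitivity n δ (fun x => psign (MvPolynomial.eval x p)) with hN
  have h6 : (b:ℝ) ^ ((1:ℝ)/6) * N ≤ A := by
    have : (b:ℝ) ^ ((5:ℝ)/6) * ((b:ℝ) ^ ((1:ℝ)/6) * N) ≤ (b:ℝ) ^ ((5:ℝ)/6) * A := by
      rw [← mul_assoc, h3]; linarith
    exact le_of_mul_le_mul_left this h5
  have hN0 : 0 ≤ N := ENNReal.toReal_nonneg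
  have h7 : 1 ≤ 2 * b * δ := by
    rw [div_lt_iff₀ h0] at hb3
    nlinarith
  have h8 : (1:ℝ) ≤ 2 * ((b:ℝ) ^ ((1:ℝ)/6) * δ ^ ((1:ℝ)/6)) := by
    calc (1:ℝ) = 1 ^ ((1:ℝ)/6) := by simp
      _ ≤ (2 * b * δ) ^ ((1:ℝ)/6) := Real.rpow_le_rpow (by norm_num) h7 (by norm_num)
      _ = 2 ^ ((1:ℝ)/6) * ((b:ℝ) ^ ((1:ℝ)/6) * δ ^ ((1:ℝ)/6)) := by
        rw [Real.mul_rpow (by positivity) h0.le, Real.mul_rpow (by positivity) hb0.le, mul_assoc]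
      _ ≤ 2 * ((b:ℝ) ^ ((1:ℝ)/6) * δ ^ ((1:ℝ)/6)) := by
        apply mul_le_mul_of_nonneg_right _ (by positivity)
        calc (2:ℝ) ^ ((1:ℝ)/6) ≤ 2 ^ (1:ℝ) :=
              Real.rpow_le_rpow_of_exponent_le (by norm_num) (by norm_num)
          _ = 2 := by simp
  have h9 : (0:ℝ) < δ ^ ((1:ℝ)/6) := by positivity
  calc N = 1 * N := by ring
    _ ≤ 2 * ((b:ℝ) ^ ((1:ℝ)/6) * δ ^ ((1:ℝ)/6)) * N := mul_le_mul_of_nonneg_right h8 hN0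
    _ = 2 * δ ^ ((1:ℝ)/6) * ((b:ℝ) ^ ((1:ℝ)/6) * N) := by ring
    _ ≤ 2 * δ ^ ((1:ℝ)/6) * A := mul_le_mul_of_nonneg_left h6 (by positivity)
    _ = _ := by ring

end J
end NS

/-- **Noise sensitivity bound.**  For every positive integer `d` and `c > 0` there is a
constant `C` depending only on `c` and `d` such that every degree-`d` polynomial threshold
function `f` satisfies `ns_δ(f) ≤ C δ^{1/6 - c}` for all `0 < δ < 1`. -/
theorem noise_sensitivity_bound (d : ℕ) (hd : 0 < d) (c : ℝ) (hc : 0 < c) :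
    ∃ C : ℝ, 0 < C ∧
      ∀ (n : ℕ) (p : MvPolynomial (Fin n) ℝ), p.totalDegree ≤ d →
        ∀ (δ : ℝ), 0 < δ → δ < 1 →
          noiseSensitivity n δ (fun x => psign (MvPolynomial.eval x p)) ≤
            C * δ ^ ((1 : ℝ) / 6 - c) := by
  obtain ⟨C, hC, h⟩ := NS.final d hd
  refine ⟨C, hC, fun n p hp δ h0 h1 => (h n p hp δ h0 h1).trans ?_⟩
  exact mul_le_mul_of_nonneg_left
    (Real.rpow_le_rpow_of_exponent_ge h0 h1.le (by linarith)) hC.le
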